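/- arXiv:2506.03625 — 2 statements merged into one kernel-verified Lean document; each statement's English description precedes it below -/
import Mathlib

section
/- Let m ≥ 1 and l be coprime integers. Then there exists a constant X(m) such that for all real x ≥ X(m), x/(φ(m) log x) < π(x; m, l) < (x/(φ(m) log x)) · (1 + 5/(2 log x)), where π(x; m, l) is the number of primes p ≤ x with p ≡ l (mod m) and φ is Euler's totient function. -/
/-- `piMod x m l` is the number of primes `p ≤ x` with `p ≡ l (mod m)`. -/
noncomputable def piMod (x : ℝ) (m : ℕ) (l : ℤ) : ℕ :=
  Set.ncard {p : ℕ | p.Prime ∧ (p : ℝ) ≤ x ∧ (p : ℤ) ≡ l [ZMOD (m : ℤ)]}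

section
open Complex Filter Topology MeasureTheory Set

lemma sw_char_sum_bdd {N : ℕ} [NeZero N] (χ : DirichletCharacter ℂ N) :
    ∃ (c : ℂ) (K : ℝ), 0 ≤ K ∧ ∀ M : ℕ, ‖∑ k ∈ Finset.Icc 1 M, χ k - c * M‖ ≤ K := by
  set S : ℂ := ∑ k ∈ Finset.range N, χ ((k + 1 : ℕ) : ZMod N) with hS
  have hN : (N : ℂ) ≠ 0 := NeZero.ne _
  have hicc : ∀ M : ℕ, ∑ k ∈ Finset.Icc 1 M, χ (k : ZMod N)
      = ∑ k ∈ Finset.range M, χ ((k + 1 : ℕ) : ZMod N) := by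
    intro M
    induction M with
    | zero => simp
    | succ n ih => rw [Finset.sum_range_succ, ← ih, Finset.sum_Icc_succ_top (by omega)]
  set P : ℕ → ℂ := fun M => ∑ k ∈ Finset.Icc 1 M, χ (k : ZMod N) - S / N * M with hP
  have hper : Function.Periodic P N := by
    intro M
    simp only [hP, hicc]
    rw [add_comm M N, Finset.sum_range_add]
    have : ∀ x, χ ((N + x + 1 : ℕ) : ZMod N) = χ ((x + 1 : ℕ) : ZMod N) := by
      intro x; congr 1; push_cast; simp
    simp only [this]
    rw [← hS]
    push_cast
    field_simp
    ring
  refine ⟨S / N, ∑ j ∈ Finset.range N, ‖P j‖, Finset.sum_nonneg fun _ _ => norm_nonneg _, ?_⟩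
  intro M
  change ‖P M‖ ≤ _
  rw [← hper.map_mod_nat M]
  exact Finset.single_le_sum (f := fun j => ‖P j‖) (fun _ _ => norm_nonneg _)
    (Finset.mem_range.2 (Nat.mod_lt _ (NeZero.pos N)))

noncomputable def swE {N : ℕ} (χ : DirichletCharacter ℂ N) (c : ℂ) (X : ℕ) : ℝ → ℂ :=
  (Ioi (X : ℝ)).indicator (fun t => ∑ k ∈ Finset.Ioc X ⌊t⌋₊, χ k - c * (t - X))

lemma swE_bdd {N : ℕ} [NeZero N] (χ : DirichletCharacter ℂ N) {c : ℂ} {K : ℝ}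
    (hK : ∀ M : ℕ, ‖∑ k ∈ Finset.Icc 1 M, χ k - c * M‖ ≤ K) (X : ℕ) (t : ℝ) :
    ‖swE χ c X t‖ ≤ 2 * K + ‖c‖ := by
  have hK0 : 0 ≤ K := (norm_nonneg _).trans (hK 0)
  unfold swE
  by_cases ht : t ∈ Ioi (X : ℝ)
  · rw [indicator_of_mem ht]
    simp only [mem_Ioi] at ht
    have hX : X ≤ ⌊t⌋₊ := Nat.le_floor ht.le
    have h1 : ∑ k ∈ Finset.Ioc X ⌊t⌋₊, χ (k : ZMod N) = ∑ k ∈ Finset.Icc 1 ⌊t⌋₊, χ (k : ZMod N)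
        - ∑ k ∈ Finset.Icc 1 X, χ (k : ZMod N) := by
      rw [eq_sub_iff_add_eq, add_comm]
      rw [← Finset.sum_union]
      · congr 1
        ext k; simp; omega
      · rw [Finset.disjoint_left]; intro k; simp; omega
    have h2 : ∑ k ∈ Finset.Ioc X ⌊t⌋₊, χ (k : ZMod N) - c * (t - X) =
       (∑ k ∈ Finset.Icc 1 ⌊t⌋₊, χ (k : ZMod N) - c * ⌊t⌋₊) - (∑ k ∈ Finset.Icc 1 X, χ (k : ZMod N) - c * X)
         - c * ((t - ⌊t⌋₊ : ℝ) : ℂ) := by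
      rw [h1]; push_cast; ring
    rw [h2]
    have h3 : ‖c * ((t - ⌊t⌋₊ : ℝ) : ℂ)‖ ≤ ‖c‖ := by
      rw [norm_mul, Complex.norm_real, Real.norm_eq_abs]
      have ht0 : 0 ≤ t := le_trans (Nat.cast_nonneg _) ht.le
      have := Nat.floor_le ht0
      have := Nat.lt_floor_add_one t
      have : |t - ⌊t⌋₊| ≤ 1 := abs_le.2 ⟨by linarith, by linarith⟩
      nlinarith [norm_nonneg c]
    have := norm_sub_le ((∑ k ∈ Finset.Icc 1 ⌊t⌋₊, χ (k : ZMod N) - c * ⌊t⌋₊) - (∑ k ∈ Finset.Icc 1 X, χ (k : ZMod N) - c * X)) (c * ((t - ⌊t⌋₊ : ℝ) : ℂ))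
    have := norm_sub_le (∑ k ∈ Finset.Icc 1 ⌊t⌋₊, χ (k : ZMod N) - c * ⌊t⌋₊) (∑ k ∈ Finset.Icc 1 X, χ (k : ZMod N) - c * X)
    linarith [hK ⌊t⌋₊, hK X]
  · rw [indicator_of_notMem ht, norm_zero]
    positivity

lemma swE_meas {N : ℕ} (χ : DirichletCharacter ℂ N) (c : ℂ) (X : ℕ) : Measurable (swE χ c X) := by
  unfold swE
  refine Measurable.indicator ?_ measurableSet_Ioi
  refine Measurable.sub ?_ (by fun_prop)
  exact (measurable_from_nat (f := fun n => ∑ k ∈ Finset.Ioc X n, χ (k : ZMod N))).comp Nat.measurable_floor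

lemma swE_locint {N : ℕ} [NeZero N] (χ : DirichletCharacter ℂ N) {c : ℂ} {K : ℝ}
    (hK : ∀ M : ℕ, ‖∑ k ∈ Finset.Icc 1 M, χ k - c * M‖ ≤ K) (X : ℕ) :
    LocallyIntegrableOn (swE χ c X) (Ioi 0) := by
  apply LocallyIntegrable.locallyIntegrableOn
  refine LocallyIntegrable.mono (f := fun _ : ℝ => (2 * K + ‖c‖ : ℝ)) (locallyIntegrable_const _) (swE_meas χ c X).aestronglyMeasurable ?_
  filter_upwards with t
  exact (swE_bdd χ hK X t).trans (Real.le_norm_self _)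

lemma swE_top {N : ℕ} [NeZero N] (χ : DirichletCharacter ℂ N) {c : ℂ} {K : ℝ}
    (hK : ∀ M : ℕ, ‖∑ k ∈ Finset.Icc 1 M, χ k - c * M‖ ≤ K) (X : ℕ) :
    swE χ c X =O[atTop] (fun t : ℝ => t ^ (-(0:ℝ))) := by
  refine Asymptotics.IsBigO.of_bound (2 * K + ‖c‖) ?_
  filter_upwards with t
  simpa using swE_bdd χ hK X t

lemma swE_bot {N : ℕ} (χ : DirichletCharacter ℂ N) (c : ℂ) (X : ℕ) (hX : 1 ≤ X) (b : ℝ) :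
    swE χ c X =O[𝓝[>] 0] (fun t : ℝ => t ^ (-b)) := by
  have : swE χ c X =ᶠ[𝓝[>] 0] (fun _ => (0:ℂ)) := by
    have : Iio (1:ℝ) ∈ 𝓝[>] (0:ℝ) := mem_nhdsWithin_of_mem_nhds (Iio_mem_nhds one_pos)
    filter_upwards [this] with t ht
    unfold swE
    rw [indicator_of_notMem]
    simp only [mem_Ioi, not_lt, mem_Iio] at *
    have : (1:ℝ) ≤ X := by exact_mod_cast hX
    linarith
  exact this.trans_isBigO (Asymptotics.isBigO_zero _ _)

lemma swE_diff {N : ℕ} [NeZero N] (χ : DirichletCharacter ℂ N) {c : ℂ} {K : ℝ}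
    (hK : ∀ M : ℕ, ‖∑ k ∈ Finset.Icc 1 M, χ k - c * M‖ ≤ K) (X : ℕ) (hX : 1 ≤ X) {s : ℂ} (hs : s.re < 0) :
    DifferentiableAt ℂ (mellin (swE χ c X)) s :=
  mellin_differentiableAt_of_isBigO_rpow (swE_locint χ hK X) (swE_top χ hK X) hs
    (swE_bot χ c X hX (s.re - 1)) (by linarith)

lemma swE_conv {N : ℕ} [NeZero N] (χ : DirichletCharacter ℂ N) {c : ℂ} {K : ℝ}
    (hK : ∀ M : ℕ, ‖∑ k ∈ Finset.Icc 1 M, χ k - c * M‖ ≤ K) (X : ℕ) (hX : 1 ≤ X) {s : ℂ} (hs : s.re < 0) :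
    MellinConvergent (swE χ c X) s :=
  mellinConvergent_of_isBigO_rpow (swE_locint χ hK X) (swE_top χ hK X) hs
    (swE_bot χ c X hX (s.re - 1)) (by linarith)

lemma swE_mellin_bound {N : ℕ} [NeZero N] (χ : DirichletCharacter ℂ N) {c : ℂ} {K : ℝ}
    (hK : ∀ M : ℕ, ‖∑ k ∈ Finset.Icc 1 M, χ k - c * M‖ ≤ K) (X : ℕ) (hX : 1 ≤ X) {s : ℂ} (hs : 0 < s.re) :
    ‖mellin (swE χ c X) (-s)‖ ≤ (2 * K + ‖c‖) * ((X : ℝ) ^ (-s.re) / s.re) := by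
  have hX0 : (0:ℝ) < X := by exact_mod_cast hX
  have h1 : mellin (swE χ c X) (-s) = ∫ t in Ioi (X:ℝ), (t : ℂ) ^ (-s - 1) • swE χ c X t := by
    unfold mellin
    apply setIntegral_eq_of_subset_of_forall_sdiff_eq_zero measurableSet_Ioi (Ioi_subset_Ioi hX0.le)
    intro t ht
    rw [swE, indicator_of_notMem ht.2, smul_zero]
  rw [h1]
  have h2 : ∫ t in Ioi (X:ℝ), (2 * K + ‖c‖) * t ^ (-s.re - 1) = (2 * K + ‖c‖) * ((X : ℝ) ^ (-s.re) / s.re) := by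
    rw [integral_const_mul, integral_Ioi_rpow_of_lt (by linarith) hX0]
    congr 1
    have : s.re ≠ 0 := hs.ne'
    rw [show -s.re - 1 + 1 = -s.re by ring, div_neg, neg_div, neg_neg]
  rw [← h2]
  apply norm_integral_le_of_norm_le
  · exact (integrableOn_Ioi_rpow_of_lt (by linarith) hX0).const_mul _
  · filter_upwards [ae_restrict_mem measurableSet_Ioi] with t ht
    have ht0 : 0 < t := hX0.trans ht
    rw [norm_smul, Complex.norm_cpow_eq_rpow_re_of_pos ht0, mul_comm]
    simp only [sub_re, neg_re, one_re]
    exact mul_le_mul_of_nonneg_right (swE_bdd χ hK X t) (by positivity)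

end

section
open Complex Filter Topology MeasureTheory Set

lemma sw_int_lin {s : ℂ} (hs : 1 < s.re) {X : ℝ} (hX : 0 < X) :
    IntegrableOn (fun t : ℝ => ((t : ℂ) - X) * (t : ℂ) ^ (-s - 1)) (Ioi X) ∧
    s * ∫ t in Ioi X, ((t : ℂ) - X) * (t : ℂ) ^ (-s - 1) = (X : ℂ) ^ (1 - s) / (s - 1) := by
  have hs0 : s ≠ 0 := by rintro rfl; simp at hs; linarith
  have hs1 : s - 1 ≠ 0 := by intro h; have := congrArg re h; simp at this; linarith
  have i1 := integrableOn_Ioi_cpow_of_lt (a := -s) (by simpa using hs) hX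
  have i2 := integrableOn_Ioi_cpow_of_lt (a := -s - 1) (by simp; linarith) hX
  have he : ∀ t ∈ Ioi X, (t : ℂ) ^ (-s) - X * (t : ℂ) ^ (-s - 1) = ((t : ℂ) - X) * (t : ℂ) ^ (-s - 1) := by
    intro t ht
    have ht0 : (t : ℂ) ≠ 0 := by exact_mod_cast (hX.trans ht).ne'
    have : (t : ℂ) ^ (-s) = t * (t : ℂ) ^ (-s - 1) := by
      rw [Complex.cpow_sub _ _ ht0, Complex.cpow_one]; field_simp
    rw [this]; ring
  have i3 : IntegrableOn (fun t : ℝ => (t : ℂ) ^ (-s) - X * (t : ℂ) ^ (-s - 1)) (Ioi X) := i1.sub (i2.const_mul (X : ℂ))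
  refine ⟨i3.congr_fun he measurableSet_Ioi, ?_⟩
  rw [← setIntegral_congr_fun measurableSet_Ioi he, integral_sub i1 (i2.const_mul _), integral_const_mul,
    integral_Ioi_cpow_of_lt (by simpa using hs) hX, integral_Ioi_cpow_of_lt (by simp; linarith) hX]
  have hX0 : (X : ℂ) ≠ 0 := by exact_mod_cast hX.ne'
  have h1 : (X : ℂ) ^ (-s + 1) = X * (X : ℂ) ^ (-s - 1 + 1) := by
    rw [sub_add_cancel, Complex.cpow_add _ _ hX0, Complex.cpow_one, mul_comm]
  have h2 : (X : ℂ) ^ (1 - s) = X * (X : ℂ) ^ (-s - 1 + 1) := by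
    rw [← h1]; congr 1; ring
  rw [h1, h2]
  have h3 : -s + 1 = -(s - 1) := by ring
  rw [h3, sub_add_cancel]
  field_simp
  ring

lemma sw_formula_gt {N : ℕ} [NeZero N] (χ : DirichletCharacter ℂ N) {c : ℂ} {K : ℝ}
    (hK : ∀ M : ℕ, ‖∑ k ∈ Finset.Icc 1 M, χ k - c * M‖ ≤ K) (X : ℕ) (hX : 1 ≤ X) {s : ℂ} (hs : 1 < s.re) :
    DirichletCharacter.LFunction χ s = ∑ n ∈ Finset.Icc 1 X, χ n * (n : ℂ) ^ (-s)
      + c * ((X : ℂ) ^ (1 - s) / (s - 1)) + s * mellin (swE χ c X) (-s) := by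
  have hX0 : (0:ℝ) < X := by exact_mod_cast hX
  rw [DirichletCharacter.LFunction_eq_LSeries χ hs]
  set f : ℕ → ℂ := fun k => if X < k then χ k else 0 with hf
  set g : ℕ → ℂ := fun k => if X < k then 0 else χ k with hg
  have hsum : LSeriesSummable (fun n => χ n) s := DirichletCharacter.LSeriesSummable_of_one_lt_re χ hs
  have hbf : ∀ n, ‖f n‖ ≤ 1 := by
    intro n; simp only [hf]; split_ifs
    · exact χ.norm_le_one _
    · simp
  have hfs : LSeriesSummable f s := LSeriesSummable_of_bounded_of_one_lt_re (m := 1) (fun n _ => hbf n) hs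
  have hbg : ∀ n, ‖g n‖ ≤ 1 := by
    intro n; simp only [hg]; split_ifs
    · simp
    · exact χ.norm_le_one _
  have hgs : LSeriesSummable g s := LSeriesSummable_of_bounded_of_one_lt_re (m := 1) (fun n _ => hbg n) hs
  have h1 : LSeries (fun n => χ n) s = LSeries g s + LSeries f s := by
    rw [← LSeries_add hgs hfs]
    congr 1; ext n; simp only [hf, hg, Pi.add_apply]; split_ifs <;> simp
  have h2 : LSeries g s = ∑ n ∈ Finset.Icc 1 X, χ n * (n : ℂ) ^ (-s) := by
    rw [LSeries, tsum_eq_sum (s := Finset.Icc 1 X)]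
    · refine Finset.sum_congr rfl fun n hn => ?_
      simp only [Finset.mem_Icc] at hn
      rw [LSeries.term_of_ne_zero (by omega)]
      simp only [hg]
      rw [if_neg (by omega), Complex.cpow_neg, div_eq_mul_inv]
    · intro n hn
      simp only [Finset.mem_Icc, not_and, not_le] at hn
      rcases Nat.eq_zero_or_pos n with rfl | h0
      · simp
      · rw [LSeries.term_of_ne_zero (by omega)]
        simp only [hg]
        rw [if_pos (hn h0), zero_div]
  have h3 : LSeries f s = s * ∫ t in Set.Ioi (1 : ℝ), (∑ k ∈ Finset.Icc 1 ⌊t⌋₊, f k) * t ^ (-(s + 1)) := by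
    apply LSeries_eq_mul_integral' f zero_le_one hs
    refine Asymptotics.IsBigO.of_bound 1 ?_
    filter_upwards with n
    rw [Real.rpow_one, one_mul, Real.norm_of_nonneg (Finset.sum_nonneg fun _ _ => norm_nonneg _)]
    calc _ ≤ ∑ k ∈ Finset.Icc 1 n, (1:ℝ) := Finset.sum_le_sum fun k _ => hbf k
      _ = n := by simp
      _ ≤ _ := Real.le_norm_self _
  have h4 : ∀ t : ℝ, X < t → ∑ k ∈ Finset.Icc 1 ⌊t⌋₊, f k = ∑ k ∈ Finset.Ioc X ⌊t⌋₊, χ k := by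
    intro t ht
    simp only [hf]
    rw [← Finset.sum_filter]
    congr 1; ext k; simp; omega
  have h5 : ∀ t : ℝ, t ≤ X → ∑ k ∈ Finset.Icc 1 ⌊t⌋₊, f k = 0 := by
    intro t ht
    apply Finset.sum_eq_zero
    intro k hk
    simp only [Finset.mem_Icc] at hk
    have := Nat.floor_le_floor (R := ℝ) ht
    simp only [Nat.floor_natCast] at this
    simp only [hf]; rw [if_neg (by omega)]
  have h6 : ∫ t in Set.Ioi (1 : ℝ), (∑ k ∈ Finset.Icc 1 ⌊t⌋₊, f k) * (t:ℂ) ^ (-(s + 1)) =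
     ∫ t in Set.Ioi (X : ℝ), (∑ k ∈ Finset.Icc 1 ⌊t⌋₊, f k) * (t:ℂ) ^ (-(s + 1)) := by
    apply setIntegral_eq_of_subset_of_forall_sdiff_eq_zero measurableSet_Ioi
      (Ioi_subset_Ioi (by exact_mod_cast hX))
    intro t ht
    rw [h5 t (by simpa using ht.2), zero_mul]
  have h7 : mellin (swE χ c X) (-s) = ∫ t in Ioi (X:ℝ), (t : ℂ) ^ (-s - 1) • swE χ c X t := by
    unfold mellin
    apply setIntegral_eq_of_subset_of_forall_sdiff_eq_zero measurableSet_Ioi (Ioi_subset_Ioi hX0.le)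
    intro t ht
    rw [swE, indicator_of_notMem ht.2, smul_zero]
  have hc : IntegrableOn (fun t : ℝ => (t : ℂ) ^ (-s - 1) • swE χ c X t) (Ioi (X:ℝ)) :=
    (swE_conv χ hK X hX (s := -s) (by simp; linarith)).mono_set (Ioi_subset_Ioi hX0.le)
  obtain ⟨hl1, hl2⟩ := sw_int_lin hs hX0
  have h8 : ∫ t in Set.Ioi (X : ℝ), (∑ k ∈ Finset.Icc 1 ⌊t⌋₊, f k) * (t:ℂ) ^ (-(s + 1)) =
     (∫ t in Ioi (X:ℝ), (t : ℂ) ^ (-s - 1) • swE χ c X t)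
      + ∫ t in Ioi (X:ℝ), c * (((t : ℂ) - (X:ℝ)) * (t : ℂ) ^ (-s - 1)) := by
    rw [← integral_add hc (hl1.const_mul c)]
    apply setIntegral_congr_fun measurableSet_Ioi
    intro t ht
    simp only
    rw [h4 t ht, swE, indicator_of_mem ht, smul_eq_mul, show -(s + 1) = -s - 1 by ring]
    push_cast
    ring
  rw [h1, h2, h3, h6, h8, ← h7, integral_const_mul, mul_add, add_assoc]
  congr 1
  rw [add_comm]
  congr 1
  rw [mul_left_comm, hl2]
  simp

lemma sw_formula {N : ℕ} [NeZero N] (χ : DirichletCharacter ℂ N) {c : ℂ} {K : ℝ}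
    (hK : ∀ M : ℕ, ‖∑ k ∈ Finset.Icc 1 M, χ k - c * M‖ ≤ K) (X : ℕ) (hX : 1 ≤ X) {s : ℂ} (hs : 0 < s.re)
    (hi : s.im ≠ 0) :
    DirichletCharacter.LFunction χ s = ∑ n ∈ Finset.Icc 1 X, χ n * (n : ℂ) ^ (-s)
      + c * ((X : ℂ) ^ (1 - s) / (s - 1)) + s * mellin (swE χ c X) (-s) := by
  have hX0 : (X : ℂ) ≠ 0 := by exact_mod_cast (show X ≠ 0 by omega)
  set U : Set ℂ := {z | 0 < z.re ∧ 0 < s.im * z.im} with hU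
  have hUo : IsOpen U := (isOpen_lt continuous_const continuous_re).inter
    (isOpen_lt continuous_const (continuous_const.mul continuous_im))
  have hUc : Convex ℝ U := by
    intro x hx y hy a b ha hb hab
    simp only [hU, mem_ofPred_eq] at *
    have key : ∀ p q : ℝ, 0 < p → 0 < q → 0 < a * p + b * q := by
      intro p q hp hq
      rcases ha.eq_or_lt with rfl | ha'
      · have : b = 1 := by linarith
        subst this; simpa using hq
      · have := mul_pos ha' hp; have := mul_nonneg hb hq.le; linarith
    constructor
    · simpa using key _ _ hx.1 hy.1
    · have := key _ _ hx.2 hy.2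
      simp; nlinarith
  have hne : ∀ z ∈ U, z ≠ 1 := by
    rintro z hz rfl; simp [hU] at hz
  have hL : AnalyticOnNhd ℂ (DirichletCharacter.LFunction χ) U := by
    refine DifferentiableOn.analyticOnNhd (fun z hz => ?_) hUo
    exact (DirichletCharacter.differentiableAt_LFunction χ z (.inl (hne z hz))).differentiableWithinAt
  have hR : AnalyticOnNhd ℂ (fun s => ∑ n ∈ Finset.Icc 1 X, χ n * (n : ℂ) ^ (-s)
      + c * ((X : ℂ) ^ (1 - s) / (s - 1)) + s * mellin (swE χ c X) (-s)) U := by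
    refine DifferentiableOn.analyticOnNhd (fun z hz => ?_) hUo
    apply DifferentiableAt.differentiableWithinAt
    have h1 : z - 1 ≠ 0 := sub_ne_zero.2 (hne z hz)
    have h2 : DifferentiableAt ℂ (fun s => mellin (swE χ c X) (-s)) z :=
      DifferentiableAt.comp (g := mellin (swE χ c X)) (f := fun s => -s) z (swE_diff χ hK X hX (s := -z) (by simpa using hz.1)) (differentiable_neg z)
    have h3 : DifferentiableAt ℂ (fun s => ∑ n ∈ Finset.Icc 1 X, χ n * (n : ℂ) ^ (-s)) z := by
      refine DifferentiableAt.fun_sum fun n hn => ?_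
      have : (n : ℂ) ≠ 0 := by
        simp only [Finset.mem_Icc] at hn
        exact_mod_cast (show n ≠ 0 by omega)
      exact (DifferentiableAt.const_cpow (by fun_prop) (.inl this)).const_mul _
    have h4 : DifferentiableAt ℂ (fun s : ℂ => (X : ℂ) ^ (1 - s)) z :=
      DifferentiableAt.const_cpow (by fun_prop) (.inl hX0)
    exact (h3.add ((h4.div (by fun_prop) h1).const_mul c)).add (differentiableAt_id.mul h2)
  have hsU : s ∈ U := ⟨hs, mul_self_pos.2 hi⟩
  have hz0 : (⟨2, s.im⟩ : ℂ) ∈ U := ⟨by norm_num, mul_self_pos.2 hi⟩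
  refine hL.eqOn_of_preconnected_of_eventuallyEq hR hUc.isPreconnected hz0 ?_ hsU
  have : {z : ℂ | 1 < z.re} ∈ 𝓝 (⟨2, s.im⟩ : ℂ) :=
    (isOpen_lt continuous_const continuous_re).mem_nhds (by simp)
  filter_upwards [this] with z hz
  exact sw_formula_gt χ hK X hX hz

end

section
open Complex Filter Topology MeasureTheory Set

lemma sw_L_bound {N : ℕ} [NeZero N] (χ : DirichletCharacter ℂ N) {ε : ℝ} (hε : 0 < ε) (hε1 : ε ≤ 1) :
    ∃ C : ℝ, 0 < C ∧ ∀ s : ℂ, 1 - ε / 2 ≤ s.re → s.re ≤ 3 → 1 ≤ |s.im| →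
      ‖DirichletCharacter.LFunction χ s‖ ≤ C * |s.im| ^ ε := by
  obtain ⟨c, K, hK0, hK⟩ := sw_char_sum_bdd χ
  set η := ε / 2 with hη
  have hη0 : 0 < η := by positivity
  set K' := 2 * K + ‖c‖ with hK'
  have hK'0 : 0 ≤ K' := by positivity
  refine ⟨2 * (1 + 1 / η + ‖c‖ + 8 * K'), by positivity, ?_⟩
  intro s hs1 hs3 ht
  set X : ℕ := ⌈|s.im|⌉₊ with hX
  have hXt : |s.im| ≤ X := Nat.le_ceil _
  have hX1R : (1:ℝ) ≤ X := ht.trans hXt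
  have hX1 : 1 ≤ X := by exact_mod_cast hX1R
  have hX0 : (0:ℝ) < X := by linarith
  have hX2 : (X:ℝ) ≤ 2 * |s.im| := by
    have := Nat.ceil_lt_add_one (abs_nonneg s.im)
    linarith
  have hσ : 1/2 ≤ s.re := by linarith
  have him : s.im ≠ 0 := by intro h; rw [h] at ht; norm_num at ht
  have hηε : (X:ℝ) ^ η ≤ (X:ℝ) ^ ε := Real.rpow_le_rpow_of_exponent_le hX1R (by linarith)
  have hη1 : 1 ≤ (X:ℝ) ^ η := Real.one_le_rpow hX1R hη0.le
  have hXε : (X:ℝ) ^ ε ≤ 2 * |s.im| ^ ε := by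
    calc (X:ℝ) ^ ε ≤ (2 * |s.im|) ^ ε := Real.rpow_le_rpow hX0.le hX2 hε.le
      _ = 2 ^ ε * |s.im| ^ ε := Real.mul_rpow (by norm_num) (abs_nonneg _)
      _ ≤ 2 * |s.im| ^ ε := by
        apply mul_le_mul_of_nonneg_right _ (by positivity)
        calc (2:ℝ) ^ ε ≤ 2 ^ (1:ℝ) := Real.rpow_le_rpow_of_exponent_le (by norm_num) hε1
          _ = 2 := Real.rpow_one _
  have T1 : ‖∑ n ∈ Finset.Icc 1 X, χ n * (n : ℂ) ^ (-s)‖ ≤ (1 + 1 / η) * (X:ℝ) ^ ε := by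
    calc _ ≤ ∑ n ∈ Finset.Icc 1 X, (X:ℝ) ^ η * ((n:ℝ)⁻¹) := by
          refine norm_sum_le_of_le _ fun n hn => ?_
          simp only [Finset.mem_Icc] at hn
          have hn1 : (1:ℝ) ≤ n := by exact_mod_cast hn.1
          have hnX : (n:ℝ) ≤ X := by exact_mod_cast hn.2
          have hn0 : (0:ℝ) < n := by linarith
          rw [norm_mul, Complex.norm_natCast_cpow_of_pos (by omega)]
          calc ‖χ n‖ * (n:ℝ) ^ (-s).re ≤ 1 * (n:ℝ) ^ (η - 1) := by
                apply mul_le_mul (χ.norm_le_one _) _ (by positivity) zero_le_one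
                exact Real.rpow_le_rpow_of_exponent_le hn1 (by simp; linarith)
            _ = (n:ℝ) ^ η * (n:ℝ)⁻¹ := by rw [one_mul, Real.rpow_sub hn0, Real.rpow_one, div_eq_mul_inv]
            _ ≤ _ := by gcongr
      _ = (X:ℝ) ^ η * ((harmonic X : ℚ) : ℝ) := by
          rw [← Finset.mul_sum, harmonic_eq_sum_Icc]; push_cast; rfl
      _ ≤ (X:ℝ) ^ η * (1 + Real.log X) := by gcongr; exact harmonic_le_one_add_log X
      _ ≤ (X:ℝ) ^ η * ((X:ℝ) ^ η + (X:ℝ) ^ η / η) := by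
          gcongr
          exact Real.log_le_rpow_div hX0.le hη0
      _ = (1 + 1 / η) * (X:ℝ) ^ ε := by
          have : (X:ℝ) ^ ε = (X:ℝ) ^ η * (X:ℝ) ^ η := by rw [← Real.rpow_add hX0]; congr 1; simp [hη]
          rw [this]; ring
  have T2 : ‖c * ((X : ℂ) ^ (1 - s) / (s - 1))‖ ≤ ‖c‖ * (X:ℝ) ^ ε := by
    rw [norm_mul, norm_div, Complex.norm_natCast_cpow_of_pos (by omega)]
    gcongr
    have : 1 ≤ ‖s - 1‖ := ht.trans (by simpa using Complex.abs_im_le_norm (s - 1))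
    calc _ ≤ (X:ℝ) ^ (1 - s).re := div_le_self (by positivity) this
      _ ≤ (X:ℝ) ^ η := Real.rpow_le_rpow_of_exponent_le hX1R (by simp; linarith)
      _ ≤ _ := hηε
  have T3 : ‖s * mellin (swE χ c X) (-s)‖ ≤ 8 * K' * (X:ℝ) ^ ε := by
    rw [norm_mul]
    have h1 := swE_mellin_bound χ hK X hX1 (s := s) (by linarith)
    have h2 : ‖s‖ ≤ 4 * X := by
      have := Complex.norm_le_abs_re_add_abs_im s
      rw [abs_of_pos (by linarith : 0 < s.re)] at this
      linarith
    have h3 : (X:ℝ) ^ (-s.re) / s.re ≤ 2 * ((X:ℝ) ^ η / X) := by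
      rw [div_le_iff₀ (by linarith)]
      have : (X:ℝ) ^ (-s.re) ≤ (X:ℝ) ^ η / X := by
        rw [← Real.rpow_sub_one hX0.ne']
        exact Real.rpow_le_rpow_of_exponent_le hX1R (by linarith)
      have : 0 ≤ (X:ℝ) ^ η / X := by positivity
      nlinarith
    calc _ ≤ (4 * X) * (K' * (2 * ((X:ℝ) ^ η / X))) := by
          apply mul_le_mul h2 (h1.trans (by gcongr)) (norm_nonneg _) (by positivity)
      _ = 8 * K' * (X:ℝ) ^ η := by field_simp; ring
      _ ≤ _ := by gcongr
  rw [sw_formula χ hK X hX1 (by linarith) him]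
  calc _ ≤ (1 + 1 / η) * (X:ℝ) ^ ε + ‖c‖ * (X:ℝ) ^ ε + 8 * K' * (X:ℝ) ^ ε :=
        (norm_add_le _ _).trans (add_le_add ((norm_add_le _ _).trans (add_le_add T1 T2)) T3)
    _ = (1 + 1 / η + ‖c‖ + 8 * K') * (X:ℝ) ^ ε := by ring
    _ ≤ (1 + 1 / η + ‖c‖ + 8 * K') * (2 * |s.im| ^ ε) := by gcongr
    _ = _ := by ring

end

section
open Complex Filter Topology MeasureTheory Set

lemma sw_two_mul_rpow {ε y z : ℝ} (hε : 0 < ε) (hε1 : ε ≤ 1) (hy : 0 ≤ y) (hz : 0 ≤ z) (h : z ≤ 2 * y) :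
    z ^ ε ≤ 2 * y ^ ε := by
  calc z ^ ε ≤ (2 * y) ^ ε := Real.rpow_le_rpow hz h hε.le
      _ = 2 ^ ε * y ^ ε := Real.mul_rpow (by norm_num) hy
      _ ≤ 2 * y ^ ε := by
        apply mul_le_mul_of_nonneg_right _ (by positivity)
        calc (2:ℝ) ^ ε ≤ 2 ^ (1:ℝ) := Real.rpow_le_rpow_of_exponent_le (by norm_num) hε1
          _ = 2 := Real.rpow_one _

lemma sw_im_ne {s : ℂ} {b : ℝ} (hb : 0 < b) (h : b ≤ |s.im|) : s ≠ 1 := by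
  rintro rfl; simp at h; linarith

lemma sw_L'_bound {N : ℕ} [NeZero N] (χ : DirichletCharacter ℂ N) {ε : ℝ} (hε : 0 < ε) (hε1 : ε ≤ 1) :
    ∃ C : ℝ, 1 ≤ C ∧ ∀ s : ℂ, 1 - ε / 4 ≤ s.re → s.re ≤ 2 → 2 ≤ |s.im| →
      ‖deriv (DirichletCharacter.LFunction χ) s‖ ≤ C * |s.im| ^ ε := by
  obtain ⟨C, hC, h⟩ := sw_L_bound χ hε hε1
  refine ⟨1 + C * 2 / (ε / 4), by linarith [show 0 ≤ C * 2 / (ε / 4) by positivity], ?_⟩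
  intro s hs1 hs2 ht
  have key : ∀ z ∈ Metric.closedBall s (ε / 4), 1 - ε / 2 ≤ z.re ∧ z.re ≤ 3 ∧ 1 ≤ |z.im| ∧ |z.im| ≤ 2 * |s.im| := by
    intro z hz
    rw [Metric.mem_closedBall, dist_eq_norm] at hz
    have h1 := (Complex.abs_re_le_norm (z - s)).trans hz
    have h2 := (Complex.abs_im_le_norm (z - s)).trans hz
    rw [sub_re, abs_le] at h1
    rw [sub_im] at h2
    have h3 := abs_sub_abs_le_abs_sub z.im s.im
    have h4 := abs_sub_abs_le_abs_sub s.im z.im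
    rw [abs_sub_comm] at h4
    refine ⟨?_, ?_, ?_, ?_⟩ <;> linarith
  have := Complex.norm_deriv_le_of_forall_mem_sphere_norm_le (c := s) (R := ε / 4)
    (C := C * (2 * |s.im| ^ ε)) (f := DirichletCharacter.LFunction χ) (by positivity) ?_ ?_
  · refine this.trans ?_
    have : 0 ≤ |s.im| ^ ε := by positivity
    calc _ = C * 2 / (ε / 4) * |s.im| ^ ε := by ring
      _ ≤ _ := by nlinarith
  · apply DifferentiableOn.diffContOnCl_ball (U := Metric.closedBall s (ε/4)) _ subset_rfl
    intro z hz
    exact (DirichletCharacter.differentiableAt_LFunction χ z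
      (.inl (sw_im_ne one_pos (key z hz).2.2.1))).differentiableWithinAt
  · intro z hz
    obtain ⟨a1, a2, a3, a4⟩ := key z (Metric.sphere_subset_closedBall hz)
    refine (h z a1 a2 a3).trans ?_
    gcongr
    exact sw_two_mul_rpow hε hε1 (abs_nonneg _) (abs_nonneg _) a4

lemma sw_L_mvt {N : ℕ} [NeZero N] (χ : DirichletCharacter ℂ N) {ε C : ℝ}
    (h : ∀ s : ℂ, 1 - ε / 4 ≤ s.re → s.re ≤ 2 → 2 ≤ |s.im| →
      ‖deriv (DirichletCharacter.LFunction χ) s‖ ≤ C * |s.im| ^ ε) {a b t : ℝ}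
    (ha : 1 - ε / 4 ≤ a) (ha2 : a ≤ 2) (hb : 1 - ε / 4 ≤ b) (hb2 : b ≤ 2) (ht : 2 ≤ |t|) :
    ‖DirichletCharacter.LFunction χ ⟨a, t⟩‖ - C * |t| ^ ε * |a - b| ≤
      ‖DirichletCharacter.LFunction χ ⟨b, t⟩‖ := by
  set S : Set ℂ := {z | (1 - ε / 4 ≤ z.re ∧ z.re ≤ 2) ∧ z.im = t} with hS
  have hc : Convex ℝ S := by
    rintro x ⟨⟨hx1, hx2⟩, hx3⟩ y ⟨⟨hy1, hy2⟩, hy3⟩ p q hp hq hpq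
    have e1 : (p • x + q • y).re = p * x.re + q * y.re := by simp
    have e2 : (p • x + q • y).im = p * x.im + q * y.im := by simp
    refine ⟨⟨?_, ?_⟩, ?_⟩
    · rw [e1]
      have : q = 1 - p := by linarith
      subst this
      nlinarith
    · rw [e1]
      have : q = 1 - p := by linarith
      subst this
      nlinarith
    · rw [e2, hx3, hy3, ← add_mul, hpq, one_mul]
  have := hc.norm_image_sub_le_of_norm_deriv_le (f := DirichletCharacter.LFunction χ) (C := C * |t| ^ ε)
    (x := ⟨b, t⟩) (y := ⟨a, t⟩) ?_ ?_ ⟨⟨hb, hb2⟩, rfl⟩ ⟨⟨ha, ha2⟩, rfl⟩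
  · have h3 : ‖(⟨a, t⟩ : ℂ) - ⟨b, t⟩‖ = |a - b| := by
      have : (⟨a, t⟩ : ℂ) - ⟨b, t⟩ = ((a - b : ℝ) : ℂ) := by apply Complex.ext <;> simp
      rw [this, Complex.norm_real, Real.norm_eq_abs]
    rw [h3] at this
    have h4 := norm_sub_norm_le (DirichletCharacter.LFunction χ ⟨a, t⟩) (DirichletCharacter.LFunction χ ⟨b, t⟩)
    linarith
  · rintro z ⟨_, hz⟩
    exact DirichletCharacter.differentiableAt_LFunction χ z (.inl (sw_im_ne two_pos (by rw [hz]; exact ht)))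
  · rintro z ⟨hz1, hz⟩
    rw [← hz]
    exact h z hz1.1 hz1.2 (by rw [hz]; exact ht)

lemma sw_triv_bound (N : ℕ) [NeZero N] : ∃ C : ℝ, 1 ≤ C ∧ ∀ x : ℝ, 0 < x → x ≤ 1 →
    ‖DirichletCharacter.LFunctionTrivChar N (1 + x)‖ ≤ C / x := by
  have hd := DirichletCharacter.differentiable_LFunctionTrivChar₁ N
  obtain ⟨C, hC⟩ := (isCompact_Icc (a := (0:ℝ)) (b := 1)).exists_bound_of_continuousOn
    (f := fun x : ℝ => DirichletCharacter.LFunctionTrivChar₁ N (1 + x))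
    (hd.continuous.comp (by fun_prop)).continuousOn
  refine ⟨max C 1, le_max_right _ _, fun x hx hx1 => ?_⟩
  have h1 := hC x ⟨hx.le, hx1⟩
  have hne : (1 : ℂ) + x ≠ 1 := by simpa using hx.ne'
  rw [DirichletCharacter.LFunctionTrivChar₁, Function.update_of_ne hne] at h1
  rw [add_sub_cancel_left, norm_mul, Complex.norm_real, Real.norm_of_nonneg hx.le] at h1
  rw [le_div_iff₀ hx, mul_comm]
  exact h1.trans (le_max_left _ _)

lemma sw_logderiv {N : ℕ} [NeZero N] (χ : DirichletCharacter ℂ N) {ε : ℝ} (hε : 0 < ε) (hε1 : ε ≤ 1) :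
    ∃ δ C : ℝ, 0 < δ ∧ 0 < C ∧ ∀ s : ℂ, 1 - δ * |s.im| ^ (-(5 * ε)) ≤ s.re → s.re ≤ 2 → 2 ≤ |s.im| →
      DirichletCharacter.LFunction χ s ≠ 0 ∧
      ‖deriv (DirichletCharacter.LFunction χ) s / DirichletCharacter.LFunction χ s‖ ≤ C * |s.im| ^ (5 * ε) := by
  obtain ⟨C1, hC1, h1⟩ := sw_L'_bound χ hε hε1
  obtain ⟨C2, hC2, h2⟩ := sw_L_bound (χ ^ 2) hε hε1
  obtain ⟨C0, hC0, h0⟩ := sw_triv_bound N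
  set C2' := 2 * C2 + 1 with hC2'
  have hC2'1 : 1 ≤ C2' := by linarith
  have hC2'0 : 0 < C2' := by linarith
  have hC00 : 0 < C0 := by linarith
  have hC10 : 0 < C1 := by linarith
  set m : ℝ := (C0 ^ 3 * C2')⁻¹ with hm
  have hm0 : 0 < m := by positivity
  have hm1 : m ≤ 1 := inv_le_one_of_one_le₀ (one_le_mul_of_one_le_of_one_le (one_le_pow₀ hC0) hC2'1)
  set δ := m / (16 * C1 ^ 4) with hδ
  have hδ0 : 0 < δ := by positivity
  have hδ1 : δ ≤ 1 := by
    rw [hδ, div_le_one (by positivity)]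
    have : 1 ≤ C1 ^ 4 := one_le_pow₀ hC1
    linarith
  -- product bound
  have A : ∀ x t : ℝ, 0 < x → x ≤ 1 → 2 ≤ |t| →
      m * x ^ 3 * |t| ^ (-ε) ≤ ‖DirichletCharacter.LFunction χ ⟨1 + x, t⟩‖ ^ 4 := by
    intro x t hx hx1 ht
    have hp := DirichletCharacter.norm_LFunction_product_ge_one χ hx t
    rw [norm_mul, norm_mul, norm_pow, norm_pow] at hp
    have e1 : (1 : ℂ) + x + I * t = ⟨1 + x, t⟩ := by apply Complex.ext <;> simp
    have e2 : (1 : ℂ) + x + 2 * I * t = ⟨1 + x, 2 * t⟩ := by apply Complex.ext <;> simp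
    rw [e1, e2] at hp
    have b0 := h0 x hx hx1
    have b2 := h2 ⟨1 + x, 2 * t⟩ (by simp; linarith) (by simp; linarith) (by simp [abs_mul]; linarith)
    simp only at b2
    have b3 : |2 * t| ^ ε ≤ 2 * |t| ^ ε := sw_two_mul_rpow hε hε1 (abs_nonneg _) (abs_nonneg _) (by simp [abs_mul])
    have ht0 : 0 < |t| := by linarith
    have hy : 0 < |t| ^ ε := by positivity
    have b4 : ‖DirichletCharacter.LFunction (χ ^ 2) ⟨1 + x, 2 * t⟩‖ ≤ C2' * |t| ^ ε := by
      calc _ ≤ C2 * |2 * t| ^ ε := b2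
        _ ≤ C2 * (2 * |t| ^ ε) := by gcongr
        _ ≤ _ := by rw [hC2']; nlinarith
    set Y := ‖DirichletCharacter.LFunction χ ⟨1 + x, t⟩‖ ^ 4 with hY
    have hY0 : 0 ≤ Y := by positivity
    have b5 : 1 ≤ (C0 / x) ^ 3 * Y * (C2' * |t| ^ ε) := by
      refine le_trans hp ?_
      gcongr
    rw [Real.rpow_neg ht0.le, hm]
    calc (C0 ^ 3 * C2')⁻¹ * x ^ 3 * (|t| ^ ε)⁻¹ ≤ (C0 ^ 3 * C2')⁻¹ * x ^ 3 * (|t| ^ ε)⁻¹ * ((C0 / x) ^ 3 * Y * (C2' * |t| ^ ε)) :=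
          le_mul_of_one_le_right (by positivity) b5
      _ = Y := by field_simp
  -- lower bound at x ≥ x*
  have B : ∀ x t : ℝ, 2 ≤ |t| → δ * |t| ^ (-(5 * ε)) ≤ x → x ≤ 1 →
      2 * C1 * δ * |t| ^ (-(4 * ε)) ≤ ‖DirichletCharacter.LFunction χ ⟨1 + x, t⟩‖ := by
    intro x t ht hx hx1
    have ht0 : 0 < |t| := by linarith
    have hx0 : 0 < x := lt_of_lt_of_le (by positivity) hx
    apply le_of_pow_le_pow_left₀ (n := 4) (by norm_num) (norm_nonneg _)
    refine le_trans ?_ (A x t hx0 hx1 ht)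
    have e1 : (|t| ^ (-(4 * ε))) ^ 4 = |t| ^ (-(16 * ε)) := by
      rw [← Real.rpow_natCast, ← Real.rpow_mul ht0.le]; congr 1; push_cast; ring
    have e2 : (|t| ^ (-(5 * ε))) ^ 3 * |t| ^ (-ε) = |t| ^ (-(16 * ε)) := by
      rw [← Real.rpow_natCast, ← Real.rpow_mul ht0.le, ← Real.rpow_add ht0]; congr 1; push_cast; ring
    calc (2 * C1 * δ * |t| ^ (-(4 * ε))) ^ 4 = (16 * C1 ^ 4 * δ) * δ ^ 3 * |t| ^ (-(16 * ε)) := by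
          rw [mul_pow, e1]; ring
      _ = m * δ ^ 3 * |t| ^ (-(16 * ε)) := by
          rw [hδ]; field_simp
      _ = m * (δ * |t| ^ (-(5 * ε))) ^ 3 * |t| ^ (-ε) := by rw [← e2]; ring
      _ ≤ _ := by gcongr
  have rr : ∀ t : ℝ, 2 ≤ |t| → |t| ^ ε * |t| ^ (-(5 * ε)) = |t| ^ (-(4 * ε)) := by
    intro t ht
    rw [← Real.rpow_add (by linarith)]; congr 1; ring
  have rl : ∀ t : ℝ, 2 ≤ |t| → |t| ^ (-(5 * ε)) ≤ 1 := by
    intro t ht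
    exact Real.rpow_le_one_of_one_le_of_nonpos (by linarith) (by linarith)
  set δ' := min (δ / 2) (ε / 4) with hδ'
  have hδ'0 : 0 < δ' := by positivity
  refine ⟨δ', 2 / δ, hδ'0, by positivity, ?_⟩
  intro s hs hs2 ht
  have ht0 : 0 < |s.im| := by linarith
  have hlow : C1 * δ / 2 * |s.im| ^ (-(4 * ε)) ≤ ‖DirichletCharacter.LFunction χ s‖ := by
    have hq : 0 < |s.im| ^ (-(4 * ε)) := by positivity
    by_cases hc : 1 + δ * |s.im| ^ (-(5 * ε)) ≤ s.re
    · have := B (s.re - 1) s.im ht (by linarith) (by linarith)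
      rw [add_sub_cancel] at this
      refine le_trans ?_ this
      have : 0 < C1 * δ := by positivity
      nlinarith
    · push Not at hc
      have hr1 := rl s.im ht
      have hr0 : 0 < |s.im| ^ (-(5 * ε)) := by positivity
      have hx1 : δ * |s.im| ^ (-(5 * ε)) ≤ 1 := mul_le_one₀ hδ1 hr0.le hr1
      have b1 := B (δ * |s.im| ^ (-(5 * ε))) s.im ht le_rfl hx1
      have d1 : δ' ≤ δ / 2 := min_le_left _ _
      have d2 : δ' ≤ ε / 4 := min_le_right _ _
      have g1 : 1 - ε / 4 ≤ s.re := by nlinarith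
      have g2 : δ' * |s.im| ^ (-(5 * ε)) ≤ δ / 2 * |s.im| ^ (-(5 * ε)) := by gcongr
      have b2 := sw_L_mvt χ h1 (a := 1 + δ * |s.im| ^ (-(5 * ε))) (b := s.re) (t := s.im)
        (by nlinarith) (by linarith) g1 hs2 ht
      have b3 : |1 + δ * |s.im| ^ (-(5 * ε)) - s.re| ≤ 3 / 2 * δ * |s.im| ^ (-(5 * ε)) := by
        rw [abs_of_pos (by linarith)]
        linarith
      have b4 : C1 * |s.im| ^ ε * |1 + δ * |s.im| ^ (-(5 * ε)) - s.re| ≤ 3 / 2 * C1 * δ * |s.im| ^ (-(4 * ε)) := by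
        calc _ ≤ C1 * |s.im| ^ ε * (3 / 2 * δ * |s.im| ^ (-(5 * ε))) := by gcongr
          _ = 3 / 2 * C1 * δ * (|s.im| ^ ε * |s.im| ^ (-(5 * ε))) := by ring
          _ = _ := by rw [rr _ ht]
      have b5 : ‖DirichletCharacter.LFunction χ s‖ = ‖DirichletCharacter.LFunction χ ⟨s.re, s.im⟩‖ := rfl
      rw [b5]
      linarith
  have hpos : 0 < ‖DirichletCharacter.LFunction χ s‖ := lt_of_lt_of_le (by positivity) hlow
  refine ⟨norm_pos_iff.1 hpos, ?_⟩
  have g1 : 1 - ε / 4 ≤ s.re := by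
    have hr1 := rl s.im ht
    have d2 : δ' ≤ ε / 4 := min_le_right _ _
    nlinarith
  have hd := h1 s g1 hs2 ht
  rw [norm_div, div_le_iff₀ hpos]
  calc _ ≤ C1 * |s.im| ^ ε := hd
    _ = 2 / δ * |s.im| ^ (5 * ε) * (C1 * δ / 2 * |s.im| ^ (-(4 * ε))) := by
      have : |s.im| ^ ε = |s.im| ^ (5 * ε) * |s.im| ^ (-(4 * ε)) := by
        rw [← Real.rpow_add ht0]; congr 1; ring
      rw [this]; field_simp
    _ ≤ _ := by gcongr

end

section
open Complex Filter Topology MeasureTheory Set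

open ArithmeticFunction.vonMangoldt in
lemma sw_F_analytic {q : ℕ} [NeZero q] (a : ZMod q) {s : ℂ}
    (hs : s = 1 ∨ ∀ χ : DirichletCharacter ℂ q, DirichletCharacter.LFunction χ s ≠ 0) :
    AnalyticAt ℂ (LFunctionResidueClassAux a) s := by
  classical
  have h1 : AnalyticAt ℂ (DirichletCharacter.LFunctionTrivChar₁ q) s :=
    (DirichletCharacter.differentiable_LFunctionTrivChar₁ q).analyticAt s
  have h1' : DirichletCharacter.LFunctionTrivChar₁ q s ≠ 0 := by
    rcases eq_or_ne s 1 with rfl | h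
    · exact DirichletCharacter.LFunctionTrivChar₁_apply_one_ne_zero _
    · rw [DirichletCharacter.LFunctionTrivChar₁, Function.update_of_ne h]
      exact mul_ne_zero (sub_ne_zero.2 h) ((hs.resolve_left h) _)
  refine analyticAt_const.mul ((h1.deriv.neg.div h1 h1').sub ?_)
  apply Finset.analyticAt_fun_sum
  intro χ hχ
  replace hχ : χ ≠ 1 := by simpa only [ne_eq, Finset.mem_compl, Finset.mem_singleton] using hχ
  have h2 : AnalyticAt ℂ (DirichletCharacter.LFunction χ) s :=
    (DirichletCharacter.differentiable_LFunction hχ).analyticAt s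
  refine (analyticAt_const.mul h2.deriv).div h2 ?_
  rcases hs with rfl | hs
  · exact DirichletCharacter.LFunction_ne_zero_of_one_le_re χ (.inl hχ) (by simp)
  · exact hs χ

open ArithmeticFunction.vonMangoldt in
lemma sw_F_formula {q : ℕ} [NeZero q] {a : ZMod q} (ha : IsUnit a) {s : ℂ} (hs₁ : s ≠ 1)
    (hs : ∀ χ : DirichletCharacter ℂ q, DirichletCharacter.LFunction χ s ≠ 0) :
    LFunctionResidueClassAux a s = -((q.totient : ℂ)⁻¹ * (1 / (s - 1) + ∑ χ : DirichletCharacter ℂ q, χ a⁻¹ *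
        (deriv (DirichletCharacter.LFunction χ) s / DirichletCharacter.LFunction χ s))) := by
  have ha' : IsUnit a⁻¹ := isUnit_of_dvd_one ⟨a, (ZMod.inv_mul_of_unit a ha).symm⟩
  simp only [LFunctionResidueClassAux]
  classical
  rw [Fintype.sum_eq_add_sum_compl 1, MulChar.one_apply ha', one_mul]
  rw [DirichletCharacter.deriv_LFunctionTrivChar₁_apply_of_ne_one _ hs₁, DirichletCharacter.LFunctionTrivChar₁,
    Function.update_of_ne hs₁]
  simp only [DirichletCharacter.LFunctionTrivChar, mul_div_assoc]
  have h1 := hs 1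
  have h2 := sub_ne_zero.2 hs₁
  rw [← mul_neg]
  congr 1
  refine Eq.trans (congrArg₂ (· - ·) ?_ ?_) (neg_add' (1 / (s - 1) +
    deriv (DirichletCharacter.LFunction (1 : DirichletCharacter ℂ q)) s / DirichletCharacter.LFunction (1 : DirichletCharacter ℂ q) s) _).symm |>.trans (congrArg Neg.neg (add_assoc _ _ _))
  · field_simp
    ring
  · congr!

open ArithmeticFunction.vonMangoldt in
lemma sw_F_bound {q : ℕ} [NeZero q] {a : ZMod q} (ha : IsUnit a) {η : ℝ} (hη : 0 < η) (hη1 : η ≤ 1) :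
    ∃ δ C : ℝ, 0 < δ ∧ 0 < C ∧ ∀ s : ℂ, 1 - δ * |s.im| ^ (-η) ≤ s.re → s.re ≤ 2 → 2 ≤ |s.im| →
      AnalyticAt ℂ (LFunctionResidueClassAux a) s ∧
      ‖LFunctionResidueClassAux a s‖ ≤ C * |s.im| ^ η := by
  have hall := fun χ : DirichletCharacter ℂ q => sw_logderiv χ (ε := η / 5) (by positivity) (by linarith)
  choose δ C hδ hC h using hall
  obtain ⟨δ₀, hδ₀, hδ₀'⟩ : ∃ d : ℝ, 0 < d ∧ ∀ χ, d ≤ δ χ := by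
    refine ⟨Finset.univ.inf' Finset.univ_nonempty δ, ?_, fun χ => Finset.inf'_le _ (Finset.mem_univ _)⟩
    exact (Finset.lt_inf'_iff _).2 fun χ _ => hδ χ
  have hφ : 0 < (q.totient : ℝ) := by exact_mod_cast Nat.totient_pos.mpr q.pos_of_neZero
  refine ⟨δ₀, (q.totient : ℝ)⁻¹ * (1 + ∑ χ, C χ), hδ₀, ?_, ?_⟩
  · have : 0 ≤ ∑ χ, C χ := Finset.sum_nonneg fun χ _ => (hC χ).le
    positivity
  intro s hs hs2 ht
  have ht0 : 0 < |s.im| := by linarith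
  have e5 : 5 * (η / 5) = η := by ring
  have hs' : ∀ χ : DirichletCharacter ℂ q, DirichletCharacter.LFunction χ s ≠ 0 ∧
      ‖deriv (DirichletCharacter.LFunction χ) s / DirichletCharacter.LFunction χ s‖ ≤ C χ * |s.im| ^ η := by
    intro χ
    have := h χ s
    rw [e5] at this
    refine this ?_ hs2 ht
    have : δ₀ * |s.im| ^ (-η) ≤ δ χ * |s.im| ^ (-η) := by gcongr; exact hδ₀' χ
    linarith
  refine ⟨sw_F_analytic a (.inr fun χ => (hs' χ).1), ?_⟩
  rw [sw_F_formula ha (sw_im_ne two_pos ht) (fun χ => (hs' χ).1), norm_neg, norm_mul, norm_inv, Complex.norm_natCast, mul_assoc]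
  have h1 : ‖1 / (s - 1)‖ ≤ |s.im| ^ η := by
    have h2 : 1 ≤ ‖s - 1‖ := by
      have := Complex.abs_im_le_norm (s - 1)
      simp at this
      linarith
    rw [norm_div, norm_one]
    calc 1 / ‖s - 1‖ ≤ 1 := by rw [div_le_one (by linarith)]; exact h2
      _ ≤ _ := Real.one_le_rpow (by linarith) hη.le
  gcongr
  calc _ ≤ ‖1 / (s - 1)‖ + ‖∑ χ : DirichletCharacter ℂ q, χ a⁻¹ *
        (deriv (DirichletCharacter.LFunction χ) s / DirichletCharacter.LFunction χ s)‖ := norm_add_le _ _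
    _ ≤ |s.im| ^ η + ∑ χ, C χ * |s.im| ^ η := by
      gcongr
      refine norm_sum_le_of_le _ fun χ _ => ?_
      rw [norm_mul]
      calc _ ≤ 1 * (C χ * |s.im| ^ η) := by
            gcongr
            · exact DirichletCharacter.norm_le_one χ _
            · exact (hs' χ).2
        _ = _ := one_mul _
    _ = _ := by rw [← Finset.sum_mul]; ring

lemma sw_strip {f : ℂ → ℂ} {b C : ℝ} (hC : 0 < C) (hf : ∀ s : ℂ, 1 ≤ s.re → ContinuousAt f s)
    (h : ∀ s : ℂ, 1 ≤ s.re → s.re ≤ b → 3 ≤ |s.im| → ‖f s‖ ≤ C * |s.im| ^ (-(3 / 2) : ℝ)) :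
    ∃ C' : ℝ, 0 < C' ∧ ∀ s : ℂ, 1 ≤ s.re → s.re ≤ b → ‖f s‖ ≤ C' * (1 + |s.im|) ^ (-(3 / 2) : ℝ) := by
  obtain ⟨M, hM⟩ := ((isCompact_Icc (a := (1:ℝ)) (b := b)).reProdIm
    (isCompact_Icc (a := (-3:ℝ)) (b := 3))).exists_bound_of_continuousOn (f := f)
    (fun s hs => (hf s hs.1.1).continuousWithinAt)
  refine ⟨4 ^ (3 / 2 : ℝ) * (C + |M|), by positivity, fun s h1 h2 => ?_⟩
  have hpos : 0 < 1 + |s.im| := by positivity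
  have e : 4 ^ (3 / 2 : ℝ) * (C + |M|) * (1 + |s.im|) ^ (-(3 / 2) : ℝ)
      = (C + |M|) * ((1 + |s.im|) / 4) ^ (-(3 / 2) : ℝ) := by
    rw [Real.div_rpow hpos.le (by norm_num), Real.rpow_neg (by norm_num : (0:ℝ) ≤ 4)]
    field_simp
  rw [e]
  by_cases hc : 3 ≤ |s.im|
  · refine (h s h1 h2 hc).trans ?_
    have : |s.im| ^ (-(3 / 2) : ℝ) ≤ ((1 + |s.im|) / 4) ^ (-(3 / 2) : ℝ) :=
      Real.rpow_le_rpow_of_nonpos (by positivity) (by linarith) (by norm_num)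
    calc _ ≤ C * ((1 + |s.im|) / 4) ^ (-(3 / 2) : ℝ) := by gcongr
      _ ≤ _ := by gcongr; linarith [abs_nonneg M]
  · push Not at hc
    have h3 := hM s ⟨⟨h1, h2⟩, abs_le.1 hc.le⟩
    have : 1 ≤ ((1 + |s.im|) / 4) ^ (-(3 / 2) : ℝ) :=
      Real.one_le_rpow_of_pos_of_le_one_of_nonpos (by positivity) (by linarith) (by norm_num)
    calc _ ≤ |M| := h3.trans (le_abs_self _)
      _ ≤ (C + |M|) * 1 := by linarith
      _ ≤ _ := by gcongr

open ArithmeticFunction.vonMangoldt in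
noncomputable def swG {q : ℕ} [NeZero q] (a : ZMod q) (s : ℂ) : ℂ := LFunctionResidueClassAux a s / s ^ 2

lemma swG_analytic {q : ℕ} [NeZero q] (a : ZMod q) {s : ℂ} (hs : 1 ≤ s.re) : AnalyticAt ℂ (swG a) s := by
  refine (sw_F_analytic a ?_).div (analyticAt_id.pow 2) ?_
  · rcases eq_or_ne s 1 with h | h
    · exact .inl h
    · exact .inr fun χ => DirichletCharacter.LFunction_ne_zero_of_one_le_re χ (.inr h) hs
  · have : s ≠ 0 := by rintro rfl; simp at hs; linarith
    simpa using this

lemma swG_bounds {q : ℕ} [NeZero q] {a : ZMod q} (ha : IsUnit a) : ∃ C : ℝ, 0 < C ∧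
    (∀ s : ℂ, 1 ≤ s.re → s.re ≤ 2 → ‖swG a s‖ ≤ C * (1 + |s.im|) ^ (-(3 / 2) : ℝ)) ∧
    (∀ t : ℝ, ‖deriv (swG a) ⟨1, t⟩‖ ≤ C * (1 + |t|) ^ (-(3 / 2) : ℝ)) ∧
    (∀ t : ℝ, ‖deriv (deriv (swG a)) ⟨1, t⟩‖ ≤ C * (1 + |t|) ^ (-(3 / 2) : ℝ)) := by
  obtain ⟨δ, C, hδ, hC, h⟩ := sw_F_bound ha (η := 1 / 6) (by norm_num) (by norm_num)
  -- bound for swG in the region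
  have hG : ∀ s : ℂ, 1 - δ * |s.im| ^ (-(1/6 : ℝ)) ≤ s.re → s.re ≤ 2 → 2 ≤ |s.im| →
      AnalyticAt ℂ (swG a) s ∧ ‖swG a s‖ ≤ C * |s.im| ^ (1 / 6 : ℝ) / |s.im| ^ 2 := by
    intro s h1 h2 h3
    obtain ⟨g1, g2⟩ := h s h1 h2 h3
    have hs0 : s ≠ 0 := by rintro rfl; simp at h3; linarith
    refine ⟨g1.div (analyticAt_id.pow 2) (by simpa using hs0), ?_⟩
    rw [swG, norm_div, norm_pow]
    have := Complex.abs_im_le_norm s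
    gcongr
  have b0 : ∀ s : ℂ, 1 ≤ s.re → s.re ≤ 2 → 3 ≤ |s.im| → ‖swG a s‖ ≤ C * |s.im| ^ (-(3 / 2) : ℝ) := by
    intro s h1 h2 h3
    have hp : 0 < |s.im| := by linarith
    have := (hG s (by have : 0 < δ * |s.im| ^ (-(1/6 : ℝ)) := by positivity
                      linarith) h2 (by linarith)).2
    refine this.trans ?_
    rw [mul_div_assoc, ← Real.rpow_natCast, ← Real.rpow_sub hp]
    gcongr
    · linarith
    · norm_num
  set ρ := min δ 1 / 2 with hρ
  have hρ0 : 0 < ρ := by positivity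
  have hρ1 : ρ ≤ 1 / 2 := by rw [hρ]; gcongr; exact min_le_right _ _
  have hρδ : ρ ≤ δ / 2 := by rw [hρ]; gcongr; exact min_le_left _ _
  have disc : ∀ t : ℝ, 3 ≤ |t| → ∀ z ∈ Metric.closedBall (⟨1, t⟩ : ℂ) (ρ * |t| ^ (-(1/6 : ℝ))),
      AnalyticAt ℂ (swG a) z ∧ ‖swG a z‖ ≤ 8 * C * |t| ^ (1 / 6 : ℝ) / |t| ^ 2 := by
    intro t ht z hz
    have ht0 : 0 < |t| := by linarith
    have hr1 : |t| ^ (-(1/6 : ℝ)) ≤ 1 := Real.rpow_le_one_of_one_le_of_nonpos (by linarith) (by norm_num)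
    have hr0 : 0 < |t| ^ (-(1/6 : ℝ)) := by positivity
    rw [Metric.mem_closedBall, dist_eq_norm] at hz
    have h1 := (Complex.abs_re_le_norm _).trans hz
    have h2 := (Complex.abs_im_le_norm _).trans hz
    rw [sub_re, abs_le] at h1
    rw [sub_im] at h2
    simp only at h1 h2
    have hrr : ρ * |t| ^ (-(1/6 : ℝ)) ≤ 1 / 2 := by nlinarith
    have h3 := abs_sub_abs_le_abs_sub z.im t
    have h4 := abs_sub_abs_le_abs_sub t z.im
    rw [abs_sub_comm] at h4
    have z2 : |z.im| ≤ 2 * |t| := by linarith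
    have z1 : |t| / 2 ≤ |z.im| := by linarith
    have z0 : 2 ≤ |z.im| := by linarith
    have hz0 : 0 < |z.im| := by linarith
    have key := sw_two_mul_rpow (ε := 1 / 6) (by norm_num) (by norm_num) ht0.le hz0.le z2
    have key2 : |t| ^ (-(1/6 : ℝ)) / 2 ≤ |z.im| ^ (-(1/6 : ℝ)) := by
      rw [Real.rpow_neg ht0.le, Real.rpow_neg hz0.le]
      have : 0 < |z.im| ^ (1/6 : ℝ) := by positivity
      have : 0 < |t| ^ (1/6 : ℝ) := by positivity
      rw [div_eq_mul_inv, ← mul_inv, mul_comm]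
      gcongr
    obtain ⟨g1, g2⟩ := hG z (by nlinarith) (by linarith) z0
    refine ⟨g1, g2.trans ?_⟩
    calc C * |z.im| ^ (1 / 6 : ℝ) / |z.im| ^ 2 ≤ C * (2 * |t| ^ (1 / 6 : ℝ)) / (|t| / 2) ^ 2 := by gcongr
      _ = _ := by field_simp; ring
  have b1 : ∀ t : ℝ, 3 ≤ |t| → ∀ n : ℕ, n = 1 ∨ n = 2 →
      ‖iteratedDeriv n (swG a) ⟨1, t⟩‖ ≤ (16 * C / ρ ^ 2) * |t| ^ (-(3 / 2) : ℝ) := by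
    intro t ht n hn
    have ht0 : 0 < |t| := by linarith
    have := Complex.norm_iteratedDeriv_le_of_forall_mem_sphere_norm_le n (c := (⟨1, t⟩ : ℂ))
      (R := ρ * |t| ^ (-(1/6 : ℝ))) (C := 8 * C * |t| ^ (1 / 6 : ℝ) / |t| ^ 2) (f := swG a) (by positivity) ?_ ?_
    · refine this.trans ?_
      have hr1 : |t| ^ (-(1/6 : ℝ)) ≤ 1 := Real.rpow_le_one_of_one_le_of_nonpos (by linarith) (by norm_num)
      have hr0 : 0 < |t| ^ (-(1/6 : ℝ)) := by positivity
      have hrr : ρ * |t| ^ (-(1/6 : ℝ)) ≤ 1 := by nlinarith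
      have f1 : (n.factorial : ℝ) ≤ 2 := by rcases hn with rfl | rfl <;> norm_num [Nat.factorial]
      have f2 : (ρ * |t| ^ (-(1/6 : ℝ))) ^ 2 ≤ (ρ * |t| ^ (-(1/6 : ℝ))) ^ n :=
        pow_le_pow_of_le_one (by positivity) hrr (by omega)
      calc _ ≤ 2 * (8 * C * |t| ^ (1 / 6 : ℝ) / |t| ^ 2) / (ρ * |t| ^ (-(1/6 : ℝ))) ^ 2 := by gcongr
        _ = (16 * C / ρ ^ 2) * (|t| ^ (1 / 6 : ℝ) / |t| ^ 2 / (|t| ^ (-(1/6 : ℝ))) ^ 2) := by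
          field_simp; ring
        _ = _ := by
          congr 1
          rw [← Real.rpow_natCast (|t| ^ (-(1/6 : ℝ))), ← Real.rpow_mul ht0.le, ← Real.rpow_natCast, ← Real.rpow_sub ht0, ← Real.rpow_sub ht0]
          norm_num
    · apply DifferentiableOn.diffContOnCl_ball (U := Metric.closedBall (⟨1, t⟩ : ℂ) (ρ * |t| ^ (-(1/6 : ℝ)))) _ subset_rfl
      intro z hz
      exact (disc t ht z hz).1.differentiableAt.differentiableWithinAt
    · intro z hz
      exact (disc t ht z (Metric.sphere_subset_closedBall hz)).2
  obtain ⟨C0, hC0, c0⟩ := sw_strip hC (f := swG a) (fun s hs => (swG_analytic a hs).continuousAt) b0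
  obtain ⟨C1, hC1, c1⟩ := sw_strip (C := 16 * C / ρ ^ 2) (b := 1) (by positivity) (f := deriv (swG a))
    (fun s hs => (swG_analytic a hs).deriv.continuousAt) (by
      intro s h1 h2 h3
      have := b1 s.im h3 1 (.inl rfl)
      rw [iteratedDeriv_one] at this
      rwa [show s = ⟨1, s.im⟩ from Complex.ext (le_antisymm h2 h1) rfl])
  obtain ⟨C2, hC2, c2⟩ := sw_strip (C := 16 * C / ρ ^ 2) (b := 1) (by positivity) (f := deriv (deriv (swG a)))
    (fun s hs => (swG_analytic a hs).deriv.deriv.continuousAt) (by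
      intro s h1 h2 h3
      have := b1 s.im h3 2 (.inr rfl)
      rw [iteratedDeriv_succ, iteratedDeriv_one] at this
      rwa [show s = ⟨1, s.im⟩ from Complex.ext (le_antisymm h2 h1) rfl])
  refine ⟨C0 + C1 + C2, by positivity, fun s h1 h2 => (c0 s h1 h2).trans ?_,
    fun t => (c1 ⟨1, t⟩ le_rfl le_rfl).trans ?_, fun t => (c2 ⟨1, t⟩ le_rfl le_rfl).trans ?_⟩ <;>
  · gcongr
    linarith

end

section
open Complex Filter Topology MeasureTheory Set

lemma sw_integrable_tsum {F : ℕ → ℝ → ℂ} (hF : ∀ i, Integrable (F i)) (hs : Summable fun i => ∫ u, ‖F i u‖)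
    (hm : AEStronglyMeasurable (fun u => ∑' i, F i u)) : Integrable (fun u => ∑' i, F i u) := by
  refine ⟨hm, ?_⟩
  rw [hasFiniteIntegral_iff_enorm]
  calc ∫⁻ u, ‖∑' i, F i u‖ₑ ≤ ∫⁻ u, ∑' i, ‖F i u‖ₑ := lintegral_mono fun u => enorm_tsum_le_tsum_enorm
    _ = ∑' i, ∫⁻ u, ‖F i u‖ₑ := lintegral_tsum fun i => (hF i).1.enorm
    _ = ∑' i, ENNReal.ofReal (∫ u, ‖F i u‖) := by
      congr 1; ext i; exact (ofReal_integral_norm_eq_lintegral_enorm (hF i)).symm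
    _ < ⊤ := lt_top_iff_ne_top.2 hs.tsum_ofReal_ne_top

lemma sw_norm_exp (s : ℂ) (u : ℝ) : ‖cexp (-(s * u))‖ = Real.exp (-(s.re * u)) := by
  rw [Complex.norm_exp]; simp

lemma sw_I0 {s : ℂ} (hs : 0 < s.re) : IntegrableOn (fun v : ℝ => cexp (-(s * v))) (Ioi 0) ∧
    ∫ v in Ioi (0:ℝ), cexp (-(s * v)) = 1 / s := by
  have h1 : (-s).re < 0 := by simpa using hs
  have := integrableOn_exp_mul_complex_Ioi h1 0
  have h2 := integral_exp_mul_complex_Ioi h1 0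
  simp only [neg_mul] at this h2
  refine ⟨this, ?_⟩
  rw [h2]; simp [neg_div]

lemma sw_I1 {s : ℂ} (hs : 0 < s.re) : IntegrableOn (fun v : ℝ => (v : ℂ) * cexp (-(s * v))) (Ioi 0) ∧
    ∫ v in Ioi (0:ℝ), (v : ℂ) * cexp (-(s * v)) = 1 / s ^ 2 := by
  have hs0 : s ≠ 0 := by rintro rfl; simp at hs
  have hi : IntegrableOn (fun v : ℝ => (v : ℂ) * cexp (-(s * v))) (Ioi 0) := by
    have := integrableOn_rpow_mul_exp_neg_mul_rpow (p := 1) (s := 1) (b := s.re) (by norm_num) (by norm_num) hs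
    refine Integrable.mono' this ?_ ?_
    · exact Continuous.aestronglyMeasurable (by fun_prop)
    · rw [ae_restrict_iff' measurableSet_Ioi]
      refine ae_of_all _ fun v hv => ?_
      rw [norm_mul, sw_norm_exp, Complex.norm_real, Real.norm_of_nonneg (le_of_lt hv)]
      simp
  refine ⟨hi, ?_⟩
  have hd : ∀ x : ℝ, HasDerivAt (fun v : ℝ => -(((v:ℂ) / s + 1 / s ^ 2) * cexp (-(s * v)))) ((x : ℂ) * cexp (-(s * x))) x := by
    intro x
    have h1 : HasDerivAt (fun v : ℝ => (v : ℂ)) 1 x := Complex.ofRealCLM.hasDerivAt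
    have h2 := ((h1.div_const s).add_const (1 / s ^ 2)).mul ((h1.const_mul s).neg.cexp)
    refine (show HasDerivAt (fun v : ℝ => -(((v:ℂ) / s + 1 / s ^ 2) * cexp (-(s * v)))) _ x from h2.neg).congr_deriv ?_
    simp only [Pi.neg_apply]
    field_simp
    ring
  have ht : Tendsto (fun v : ℝ => -(((v:ℂ) / s + 1 / s ^ 2) * cexp (-(s * v)))) atTop (𝓝 0) := by
    rw [tendsto_zero_iff_norm_tendsto_zero]
    have a1 := tendsto_rpow_mul_exp_neg_mul_atTop_nhds_zero 1 s.re hs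
    have a0 := tendsto_rpow_mul_exp_neg_mul_atTop_nhds_zero 0 s.re hs
    have a2 := (a1.mul_const (1 / ‖s‖)).add (a0.mul_const (1 / ‖s‖ ^ 2))
    simp only [zero_mul, add_zero] at a2
    refine squeeze_zero' (Eventually.of_forall fun _ => norm_nonneg _) ?_ a2
    filter_upwards [eventually_ge_atTop 0] with v hv
    rw [norm_neg, norm_mul, sw_norm_exp]
    calc _ ≤ (v / ‖s‖ + 1 / ‖s‖ ^ 2) * Real.exp (-(s.re * v)) := by
          gcongr
          refine (norm_add_le _ _).trans ?_
          simp [abs_of_nonneg hv]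
      _ = _ := by simp; ring
  rw [integral_Ioi_of_hasDerivAt_of_tendsto (hd 0).continuousAt.continuousWithinAt (fun x _ => hd x) hi ht]
  simp

lemma sw_indic {f g : ℝ → ℂ} {c : ℂ} (h : IntegrableOn f (Ioi 0) ∧ ∫ v in Ioi (0:ℝ), f v = c)
    (h1 : ∀ v, 0 < v → g v = f v) (h2 : ∀ v, v ≤ 0 → g v = 0) : Integrable g ∧ ∫ v, g v = c := by
  have e : g = (Ioi (0:ℝ)).indicator f := by
    ext v
    by_cases hv : 0 < v
    · rw [indicator_of_mem (by exact hv), h1 v hv]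
    · rw [indicator_of_notMem (by exact hv), h2 v (not_lt.1 hv)]
  rw [e, integral_indicator measurableSet_Ioi, integrable_indicator_iff measurableSet_Ioi]
  exact h

lemma sw_K1 {s : ℂ} (hs : 0 < s.re) (c : ℝ) : Integrable (fun u : ℝ => ((max 0 (u - c) : ℝ) : ℂ) * cexp (-(s * u))) ∧
    ∫ u : ℝ, ((max 0 (u - c) : ℝ) : ℂ) * cexp (-(s * u)) = cexp (-(s * c)) / s ^ 2 := by
  obtain ⟨h1, h2⟩ := sw_indic (sw_I1 hs) (g := fun v : ℝ => ((max 0 v : ℝ) : ℂ) * cexp (-(s * v)))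
    (fun v hv => by simp [max_eq_right hv.le]) (fun v hv => by simp [max_eq_left hv])
  have e : (fun u : ℝ => ((max 0 (u - c) : ℝ) : ℂ) * cexp (-(s * u))) =
      fun u => cexp (-(s * c)) * ((fun v : ℝ => ((max 0 v : ℝ) : ℂ) * cexp (-(s * v))) (u - c)) := by
    ext u
    simp only
    rw [mul_left_comm, ← Complex.exp_add]
    congr 2
    push_cast; ring
  rw [e]
  refine ⟨(h1.comp_sub_right c).const_mul _, ?_⟩
  rw [integral_const_mul, integral_sub_right_eq_self (fun v : ℝ => ((max 0 v : ℝ) : ℂ) * cexp (-(s * v))), h2]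
  ring

noncomputable def swP (u : ℝ) : ℝ := Real.exp (max 0 u) - 1 - max 0 u

lemma sw_P_int {s : ℂ} (hs : 1 < s.re) : Integrable (fun u : ℝ => (swP u : ℂ) * cexp (-(s * u))) ∧
    ∫ u : ℝ, (swP u : ℂ) * cexp (-(s * u)) = 1 / (s ^ 2 * (s - 1)) := by
  have hs0 : s ≠ 0 := by rintro rfl; simp at hs; linarith
  have hs1 : s - 1 ≠ 0 := by
    intro h
    have : s = 1 := by linear_combination h
    rw [this] at hs; simp at hs
  obtain ⟨a1, a2⟩ := sw_I0 (s := s - 1) (by simpa using hs)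
  obtain ⟨b1, b2⟩ := sw_I0 (s := s) (by linarith)
  obtain ⟨c1, c2⟩ := sw_I1 (s := s) (by linarith)
  refine sw_indic (f := fun v : ℝ => cexp (-((s - 1) * v)) - cexp (-(s * v)) - (v : ℂ) * cexp (-(s * v)))
    ⟨(a1.sub b1).sub c1, ?_⟩ ?_ ?_
  · have ab : IntegrableOn (fun v : ℝ => cexp (-((s - 1) * v)) - cexp (-(s * v))) (Ioi 0) := a1.sub b1
    rw [integral_sub ab c1, integral_sub a1 b1, a2, b2, c2]
    field_simp
    ring
  · intro v hv
    simp only [swP, max_eq_right hv.le]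
    push_cast
    have : cexp (-((s - 1) * v)) = cexp v * cexp (-(s * v)) := by
      rw [← Complex.exp_add]; congr 1; ring
    rw [this]; ring
  · intro v hv
    simp [swP, max_eq_left hv]

open ArithmeticFunction.vonMangoldt

noncomputable def swR0 {q : ℕ} (a : ZMod q) (u : ℝ) : ℝ := ∑' n : ℕ, residueClass a n * max 0 (u - Real.log n)

lemma swR0_eq {q : ℕ} (a : ZMod q) {u : ℝ} {N : ℕ} (h : Real.exp u ≤ N) :
    swR0 a u = ∑ n ∈ Finset.range N, residueClass a n * max 0 (u - Real.log n) := by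
  refine tsum_eq_sum fun n hn => ?_
  rw [Finset.mem_range, not_lt] at hn
  have h1 : Real.exp u ≤ n := h.trans (by exact_mod_cast hn)
  have : u ≤ Real.log n := by rwa [Real.le_log_iff_exp_le ((Real.exp_pos u).trans_le h1)]
  rw [max_eq_left (by linarith), mul_zero]

lemma swR0_cont {q : ℕ} (a : ZMod q) : Continuous (swR0 a) := by
  rw [continuous_iff_continuousAt]
  intro u
  obtain ⟨N, hN⟩ := exists_nat_ge (Real.exp (u + 1))
  have : swR0 a =ᶠ[𝓝 u] fun v => ∑ n ∈ Finset.range N, residueClass a n * max 0 (v - Real.log n) := by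
    filter_upwards [Iio_mem_nhds (show u < u + 1 by linarith)] with v hv
    exact swR0_eq a ((Real.exp_le_exp.2 (le_of_lt hv)).trans hN)
  refine ContinuousAt.congr ?_ this.symm
  fun_prop

lemma swP_cont : Continuous swP := by unfold swP; fun_prop

lemma sw_R0_int {q : ℕ} [NeZero q] (a : ZMod q) {s : ℂ} (hs : 1 < s.re) :
    Integrable (fun u : ℝ => (swR0 a u : ℂ) * cexp (-(s * u))) ∧
    ∫ u : ℝ, (swR0 a u : ℂ) * cexp (-(s * u)) = LSeries (fun n => (residueClass a n : ℂ)) s / s ^ 2 := by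
  have hs0 : 0 < s.re := by linarith
  set F : ℕ → ℝ → ℂ := fun n u => (residueClass a n : ℂ) * (((max 0 (u - Real.log n) : ℝ) : ℂ) * cexp (-(s * u))) with hF
  have e : (fun u : ℝ => (swR0 a u : ℂ) * cexp (-(s * u))) = fun u => ∑' n, F n u := by
    ext u
    rw [swR0, Complex.ofReal_tsum, ← tsum_mul_right]
    congr 1; ext n
    simp only [hF]; push_cast; ring
  have term : ∀ (s : ℂ) (n : ℕ), (residueClass a n : ℂ) * cexp (-(s * Real.log n)) = LSeries.term (fun n => (residueClass a n : ℂ)) s n := by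
    intro s n
    rcases eq_or_ne n 0 with rfl | hn
    · simp
    · rw [LSeries.term_of_ne_zero hn, Complex.cpow_def_of_ne_zero (by exact_mod_cast hn), div_eq_mul_inv, ← Complex.exp_neg,
        ← Complex.natCast_log, mul_comm s]
  have hFi : ∀ n, Integrable (F n) := fun n => (sw_K1 hs0 _).1.const_mul _
  have hsum : ∀ s : ℂ, 1 < s.re → Summable (LSeries.term (fun n => (residueClass a n : ℂ)) s) := by
    intro s hs
    apply LSeriesSummable_of_abscissaOfAbsConv_lt_re
    exact (abscissaOfAbsConv_residueClass_le_one a).trans_lt (by exact_mod_cast hs)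
  have hN : ∀ n, ((∫ u, ‖F n u‖ : ℝ) : ℂ) = LSeries.term (fun n => (residueClass a n : ℂ)) (s.re : ℂ) n / (s.re : ℂ) ^ 2 := by
    intro n
    rw [← term, mul_div_assoc, ← (sw_K1 (s := (s.re : ℂ)) (by simpa using hs0) _).2, ← integral_const_mul,
      ← integral_complex_ofReal]
    congr 1; ext u
    simp only [hF]
    rw [norm_mul, norm_mul, sw_norm_exp, Complex.norm_real, Complex.norm_real, Real.norm_of_nonneg (residueClass_nonneg a n),
      Real.norm_of_nonneg (le_max_left _ _)]
    push_cast; ring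
  have hFs : Summable fun n => ∫ u, ‖F n u‖ := by
    rw [← Complex.summable_ofReal]
    simp_rw [hN]
    exact (hsum _ (by simpa using hs)).div_const _
  constructor
  · rw [e]
    refine sw_integrable_tsum hFi hFs ?_
    rw [← e]
    have := swR0_cont a
    exact Continuous.aestronglyMeasurable (by fun_prop)
  · have := (hasSum_integral_of_summable_integral_norm hFi hFs).tsum_eq
    rw [e, ← this, LSeries, ← tsum_div_const]
    congr 1; ext n
    rw [← term, mul_div_assoc, ← (sw_K1 hs0 _).2, integral_const_mul]

noncomputable def swR {q : ℕ} (a : ZMod q) (u : ℝ) : ℝ := swR0 a u - (q.totient : ℝ)⁻¹ * swP u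

lemma swR_cont {q : ℕ} (a : ZMod q) : Continuous (swR a) := by
  have := swR0_cont a
  have := swP_cont
  unfold swR
  fun_prop

lemma swR_int {q : ℕ} [NeZero q] {a : ZMod q} (ha : IsUnit a) {s : ℂ} (hs : 1 < s.re) :
    Integrable (fun u : ℝ => (swR a u : ℂ) * cexp (-(s * u))) ∧
    ∫ u : ℝ, (swR a u : ℂ) * cexp (-(s * u)) = swG a s := by
  obtain ⟨a1, a2⟩ := sw_R0_int a hs
  obtain ⟨b1, b2⟩ := sw_P_int hs
  have e : (fun u : ℝ => (swR a u : ℂ) * cexp (-(s * u))) = fun u : ℝ => (swR0 a u : ℂ) * cexp (-(s * u)) -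
      (q.totient : ℂ)⁻¹ * ((swP u : ℂ) * cexp (-(s * u))) := by
    ext u; rw [swR]; push_cast; ring
  rw [e]
  refine ⟨a1.sub (b1.const_mul _), ?_⟩
  rw [integral_sub a1 (b1.const_mul _), integral_const_mul, a2, b2, swG, eqOn_LFunctionResidueClassAux ha hs]
  have hs0 : s ≠ 0 := by rintro rfl; simp at hs; linarith
  have hs1 : s - 1 ≠ 0 := by
    intro h
    have : s = 1 := by linear_combination h
    rw [this] at hs; simp at hs
  rw [sub_div]
  congr 1
  field_simp

end

section
open Complex Filter Topology MeasureTheory Set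

lemma sw_bound_int (C : ℝ) : Integrable (fun ξ : ℝ => C * (1 + |2 * Real.pi * ξ|) ^ (-(3 / 2) : ℝ)) := by
  have h := integrable_one_add_norm (E := ℝ) (μ := volume) (r := 3 / 2) (by norm_num)
  have := (h.comp_mul_left' (R := 2 * Real.pi) (by positivity)).const_mul C
  simpa only [Real.norm_eq_abs] using this

lemma sw_line_cont {f : ℂ → ℂ} (hf : ∀ s : ℂ, 1 ≤ s.re → ContinuousAt f s) {σ : ℝ} (hσ : 1 ≤ σ) :
    Continuous fun ξ : ℝ => f ⟨σ, 2 * Real.pi * ξ⟩ := by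
  rw [continuous_iff_continuousAt]
  intro ξ
  have h : Continuous fun ξ : ℝ => (⟨σ, 2 * Real.pi * ξ⟩ : ℂ) := by
    have : (fun ξ : ℝ => (⟨σ, 2 * Real.pi * ξ⟩ : ℂ)) = fun ξ : ℝ => (σ : ℂ) + ((2 * Real.pi * ξ : ℝ) : ℂ) * I := by
      ext ξ; apply Complex.ext <;> simp
    rw [this]; fun_prop
  exact ContinuousAt.comp (g := f) (hf _ hσ) h.continuousAt

lemma sw_line_int {f : ℂ → ℂ} (hf : ∀ s : ℂ, 1 ≤ s.re → ContinuousAt f s) {σ C : ℝ} (hσ : 1 ≤ σ)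
    (hb : ∀ t : ℝ, ‖f ⟨σ, t⟩‖ ≤ C * (1 + |t|) ^ (-(3 / 2) : ℝ)) :
    Integrable fun ξ : ℝ => f ⟨σ, 2 * Real.pi * ξ⟩ :=
  (sw_bound_int C).mono' (sw_line_cont hf hσ).aestronglyMeasurable (ae_of_all _ fun ξ => hb _)

lemma sw_inv_gt {q : ℕ} [NeZero q] {a : ZMod q} (ha : IsUnit a) {σ : ℝ} (h1 : 1 < σ) (h2 : σ ≤ 2) (u : ℝ) :
    ∫ ξ : ℝ, cexp ((2 * Real.pi * ξ * u : ℝ) * I) * swG a ⟨σ, 2 * Real.pi * ξ⟩ = (swR a u : ℂ) * cexp (-(σ * u)) := by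
  set f : ℝ → ℂ := fun u => (swR a u : ℂ) * cexp (-((σ : ℂ) * u)) with hf
  have hc : Continuous f := by
    have := swR_cont a
    fun_prop
  have hi : Integrable f := (swR_int ha (s := (σ : ℂ)) (by simpa using h1)).1
  have hF : FourierTransform.fourier f = fun ξ : ℝ => swG a ⟨σ, 2 * Real.pi * ξ⟩ := by
    ext ξ
    rw [Real.fourier_real_eq_integral_exp_smul, ← (swR_int ha (s := ⟨σ, 2 * Real.pi * ξ⟩) h1).2]
    congr 1; ext v
    simp only [hf, smul_eq_mul]
    rw [mul_left_comm, ← Complex.exp_add]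
    congr 2
    have : (⟨σ, 2 * Real.pi * ξ⟩ : ℂ) = (σ : ℂ) + ((2 * Real.pi * ξ : ℝ) : ℂ) * I := by apply Complex.ext <;> simp
    rw [this]; push_cast; ring
  obtain ⟨C, _, hC, _⟩ := swG_bounds ha
  have hFi : Integrable (FourierTransform.fourier f) := by
    rw [hF]
    exact sw_line_int (C := C) (fun s hs => (swG_analytic a hs).continuousAt) h1.le (fun t => hC ⟨σ, t⟩ h1.le h2)
  have := congrFun (hc.fourierInv_fourier_eq hi hFi) u
  rw [Real.fourierInv_eq', hF] at this
  refine Eq.trans ?_ this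
  congr 1; ext ξ
  simp only [smul_eq_mul]
  congr 4
  simp [mul_assoc, mul_comm]

lemma sw_inv_one {q : ℕ} [NeZero q] {a : ZMod q} (ha : IsUnit a) (u : ℝ) :
    ∫ ξ : ℝ, cexp ((2 * Real.pi * ξ * u : ℝ) * I) * swG a ⟨1, 2 * Real.pi * ξ⟩ = (swR a u : ℂ) * cexp (-u) := by
  obtain ⟨C, _, hC, _⟩ := swG_bounds ha
  have t1 : Tendsto (fun σ : ℝ => ∫ ξ : ℝ, cexp ((2 * Real.pi * ξ * u : ℝ) * I) * swG a ⟨σ, 2 * Real.pi * ξ⟩) (𝓝[>] 1)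
      (𝓝 (∫ ξ : ℝ, cexp ((2 * Real.pi * ξ * u : ℝ) * I) * swG a ⟨1, 2 * Real.pi * ξ⟩)) := by
    have ev : ∀ᶠ σ : ℝ in 𝓝[>] 1, 1 < σ ∧ σ ≤ 2 :=
      (eventually_mem_nhdsWithin).and (mem_nhdsWithin_of_mem_nhds (Iic_mem_nhds (by norm_num)))
    refine tendsto_integral_filter_of_dominated_convergence _ ?_ ?_ (sw_bound_int C) ?_
    · filter_upwards [ev] with σ hσ
      have := sw_line_cont (fun s hs => (swG_analytic a hs).continuousAt) hσ.1.le
      exact Continuous.aestronglyMeasurable (by fun_prop)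
    · filter_upwards [ev] with σ hσ
      refine ae_of_all _ fun ξ => ?_
      rw [norm_mul, Complex.norm_exp_ofReal_mul_I, one_mul]
      exact hC ⟨σ, 2 * Real.pi * ξ⟩ hσ.1.le hσ.2
    · refine ae_of_all _ fun ξ => Tendsto.const_mul _ ?_
      have hcont : Continuous fun σ : ℝ => (⟨σ, 2 * Real.pi * ξ⟩ : ℂ) := by
        have : (fun σ : ℝ => (⟨σ, 2 * Real.pi * ξ⟩ : ℂ)) = fun σ : ℝ => (σ : ℂ) + ((2 * Real.pi * ξ : ℝ) : ℂ) * I := by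
          ext ξ; apply Complex.ext <;> simp
        rw [this]; fun_prop
      have : ContinuousAt (fun σ : ℝ => swG a ⟨σ, 2 * Real.pi * ξ⟩) 1 :=
        ContinuousAt.comp (g := swG a) (swG_analytic a (s := ⟨1, _⟩) le_rfl).continuousAt hcont.continuousAt
      exact this.tendsto.mono_left nhdsWithin_le_nhds
  have t2 : Tendsto (fun σ : ℝ => (swR a u : ℂ) * cexp (-(σ * u))) (𝓝[>] 1) (𝓝 ((swR a u : ℂ) * cexp (-u))) := by
    have : Continuous fun σ : ℝ => (swR a u : ℂ) * cexp (-(σ * u)) := by fun_prop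
    have := this.tendsto 1
    simp only [ofReal_one, one_mul] at this
    exact this.mono_left nhdsWithin_le_nhds
  refine tendsto_nhds_unique t1 (t2.congr' ?_)
  have ev : ∀ᶠ σ : ℝ in 𝓝[>] 1, 1 < σ ∧ σ ≤ 2 :=
    (eventually_mem_nhdsWithin).and (mem_nhdsWithin_of_mem_nhds (Iic_mem_nhds (by norm_num)))
  filter_upwards [ev] with σ hσ
  exact (sw_inv_gt ha hσ.1 hσ.2 u).symm

lemma sw_line_deriv {f : ℂ → ℂ} {ξ : ℝ} (hf : DifferentiableAt ℂ f ⟨1, 2 * Real.pi * ξ⟩) :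
    HasDerivAt (fun ξ : ℝ => f ⟨1, 2 * Real.pi * ξ⟩) ((2 * Real.pi * I) * deriv f ⟨1, 2 * Real.pi * ξ⟩) ξ := by
  have e : (fun ξ : ℝ => (⟨1, 2 * Real.pi * ξ⟩ : ℂ)) = fun ξ : ℝ => (1 : ℂ) + (2 * Real.pi * I) * (ξ : ℂ) := by
    ext ξ; apply Complex.ext <;> simp
  have h1 : HasDerivAt (fun ξ : ℝ => (ξ : ℂ)) 1 ξ := Complex.ofRealCLM.hasDerivAt
  have h2 := (h1.const_mul (2 * Real.pi * I : ℂ)).const_add 1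
  rw [← e, mul_one] at h2
  have := HasDerivAt.scomp (𝕜 := ℝ) (𝕜' := ℂ) (x := ξ) (h := fun ξ : ℝ => (⟨1, 2 * Real.pi * ξ⟩ : ℂ)) (g₁ := f) hf.hasDerivAt h2
  simp only [smul_eq_mul] at this
  exact this

lemma sw_R_small {q : ℕ} [NeZero q] {a : ZMod q} (ha : IsUnit a) :
    Tendsto (fun u : ℝ => u ^ 2 * (swR a u * Real.exp (-u))) atTop (𝓝 0) := by
  obtain ⟨C, _, hC0, hC1, hC2⟩ := swG_bounds ha
  set g : ℝ → ℂ := fun ξ => swG a ⟨1, 2 * Real.pi * ξ⟩ with hg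
  have an : ∀ s : ℂ, 1 ≤ s.re → AnalyticAt ℂ (swG a) s := fun s hs => swG_analytic a hs
  have d1 : ∀ ξ, HasDerivAt g ((2 * Real.pi * I) * deriv (swG a) ⟨1, 2 * Real.pi * ξ⟩) ξ := fun ξ =>
    sw_line_deriv (an ⟨1, _⟩ le_rfl).differentiableAt
  have e1 : deriv g = fun ξ => (2 * Real.pi * I) * deriv (swG a) ⟨1, 2 * Real.pi * ξ⟩ := by
    ext ξ; exact (d1 ξ).deriv
  have d2 : ∀ ξ, HasDerivAt (deriv g) ((2 * Real.pi * I) * ((2 * Real.pi * I) * deriv (deriv (swG a)) ⟨1, 2 * Real.pi * ξ⟩)) ξ := by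
    intro ξ
    rw [e1]
    exact (sw_line_deriv (an ⟨1, _⟩ le_rfl).deriv.differentiableAt).const_mul _
  have e2 : deriv (deriv g) = fun ξ => (2 * Real.pi * I) * ((2 * Real.pi * I) * deriv (deriv (swG a)) ⟨1, 2 * Real.pi * ξ⟩) := by
    ext ξ; exact (d2 ξ).deriv
  have i0 : Integrable g := sw_line_int (C := C) (fun s hs => (an s hs).continuousAt) le_rfl
    (fun t => hC0 ⟨1, t⟩ le_rfl (by norm_num))
  have i1 : Integrable (deriv g) := by
    rw [e1]
    exact (sw_line_int (C := C) (fun s hs => (an s hs).deriv.continuousAt) le_rfl hC1).const_mul _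
  have i2 : Integrable (deriv (deriv g)) := by
    rw [e2]
    exact ((sw_line_int (C := C) (fun s hs => (an s hs).deriv.deriv.continuousAt) le_rfl hC2).const_mul _).const_mul _
  have f1 := Real.fourier_deriv i0 (fun ξ => (d1 ξ).differentiableAt) i1
  have f2 := Real.fourier_deriv i1 (fun ξ => (d2 ξ).differentiableAt) i2
  have fin : ∀ u : ℝ, FourierTransform.fourier g (-u) = (swR a u : ℂ) * cexp (-u) := by
    intro u
    rw [← sw_inv_one ha u, Real.fourier_real_eq_integral_exp_smul]
    congr 1; ext ξ
    simp only [smul_eq_mul, hg]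
    congr 4
    ring
  have z := Real.zero_at_infty_fourier (deriv (deriv g))
  rw [f2, f1] at z
  have hneg : Tendsto (fun u : ℝ => -u) atTop (cocompact ℝ) :=
    tendsto_neg_atTop_atBot.mono_right atBot_le_cocompact
  have z2 := (z.comp hneg).norm
  rw [tendsto_zero_iff_norm_tendsto_zero]
  have z3 := z2.const_mul ((2 * Real.pi) ^ 2)⁻¹
  rw [norm_zero, mul_zero] at z3
  refine z3.congr fun u => ?_
  simp only [Function.comp, fin, smul_eq_mul, norm_mul, Complex.norm_real, Complex.norm_I, Complex.norm_exp, Real.norm_eq_abs]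
  simp [abs_of_pos Real.pi_pos]
  field_simp
  rw [sq_abs]; ring

end

section
open Complex Filter Topology MeasureTheory Set
open ArithmeticFunction.vonMangoldt

noncomputable def swA {q : ℕ} (a : ZMod q) (x : ℝ) : ℝ := ∑ n ∈ Finset.range (⌊x⌋₊ + 1), residueClass a n

lemma sw_R0_diff {q : ℕ} (a : ZMod q) {u h : ℝ} (hh : 0 ≤ h) :
    h * swA a (Real.exp u) ≤ swR0 a (u + h) - swR0 a u ∧
    swR0 a (u + h) - swR0 a u ≤ h * swA a (Real.exp (u + h)) := by
  set N := ⌊Real.exp (u + h)⌋₊ + 1 with hN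
  have h1 : Real.exp (u + h) ≤ N := by rw [hN]; push_cast; exact (Nat.lt_floor_add_one _).le
  have h0 : Real.exp u ≤ N := le_trans (Real.exp_le_exp.2 (by linarith)) h1
  rw [swR0_eq a h1, swR0_eq a h0, ← Finset.sum_sub_distrib]
  constructor
  · rw [swA, Finset.mul_sum]
    have hsub : Finset.range (⌊Real.exp u⌋₊ + 1) ⊆ Finset.range N := by
      apply Finset.range_mono
      rw [hN]
      have := Nat.floor_le_floor (Real.exp_le_exp.2 (show u ≤ u + h by linarith))
      omega
    refine (Finset.sum_le_sum fun n hn => ?_).trans (Finset.sum_le_sum_of_subset_of_nonneg hsub fun n _ _ => ?_)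
    · rcases eq_or_ne n 0 with rfl | hn0
      · simp
      · rw [← mul_sub, mul_comm]
        have h2 : n ≤ ⌊Real.exp u⌋₊ := by rw [Finset.mem_range] at hn; omega
        have h3 : (n : ℝ) ≤ Real.exp u := (Nat.le_floor_iff (Real.exp_pos u).le).1 h2
        have h4 : Real.log n ≤ u := by
          rw [Real.log_le_iff_le_exp (by positivity)]; exact h3
        rw [max_eq_right (by linarith), max_eq_right (by linarith)]
        ring_nf
        exact le_rfl
    · rw [← mul_sub]
      refine mul_nonneg (residueClass_nonneg a n) (sub_nonneg.2 (max_le_max le_rfl (by linarith)))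
  · rw [swA, Finset.mul_sum]
    refine Finset.sum_le_sum fun n hn => ?_
    rw [← mul_sub, mul_comm]
    refine mul_le_mul_of_nonneg_right ?_ (residueClass_nonneg a n)
    have : max 0 (u + h - Real.log n) ≤ max 0 (u - Real.log n) + h := by
      apply max_le
      · linarith [le_max_left 0 (u - Real.log n)]
      · linarith [le_max_right 0 (u - Real.log n)]
    linarith

lemma swR0_split {q : ℕ} (a : ZMod q) {u : ℝ} (hu : 0 ≤ u) :
    swR0 a u = swR a u + (q.totient : ℝ)⁻¹ * (Real.exp u - 1 - u) := by
  rw [swR, swP, max_eq_right hu]; ring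

lemma sw_A_asymp_exp {q : ℕ} [NeZero q] {a : ZMod q} (ha : IsUnit a) {δ : ℝ} (hδ : 0 < δ) :
    ∀ᶠ u : ℝ in atTop, |swA a (Real.exp u) - (q.totient : ℝ)⁻¹ * Real.exp u| ≤ δ * (Real.exp u / u) := by
  set κ : ℝ := (q.totient : ℝ)⁻¹ with hκ
  have hφ : 1 ≤ (q.totient : ℝ) := by exact_mod_cast Nat.totient_pos.mpr q.pos_of_neZero
  have hκ0 : 0 < κ := by positivity
  have hκ1 : κ ≤ 1 := inv_le_one_of_one_le₀ hφ
  set τ : ℝ := min (δ / 7) 1 with hτ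
  have hτ0 : 0 < τ := by positivity
  have hτ1 : τ ≤ 1 := min_le_right _ _
  have hτδ : 7 * τ ≤ δ := by have := min_le_left (δ / 7) 1; linarith
  have hR : ∀ᶠ u : ℝ in atTop, |swR a u| ≤ τ ^ 2 * (Real.exp u / u ^ 2) := by
    have := (sw_R_small ha).eventually (Metric.ball_mem_nhds 0 (show 0 < τ ^ 2 by positivity))
    filter_upwards [this, eventually_gt_atTop 0] with u h1 h2
    rw [dist_zero_right, Real.norm_eq_abs, abs_mul, abs_mul, abs_of_nonneg (sq_nonneg u),
      abs_of_pos (Real.exp_pos _), Real.exp_neg] at h1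
    have he := Real.exp_pos u
    calc |swR a u| = u ^ 2 * (|swR a u| * (Real.exp u)⁻¹) * (Real.exp u / u ^ 2) := by field_simp
      _ ≤ τ ^ 2 * (Real.exp u / u ^ 2) := by gcongr
  obtain ⟨U, hU⟩ := eventually_atTop.1 hR
  have hexp : ∀ᶠ u : ℝ in atTop, u / τ ≤ Real.exp u := by
    have := (Real.tendsto_exp_div_pow_atTop 1).eventually_ge_atTop (1 / τ)
    filter_upwards [this, eventually_gt_atTop 0] with u h1 h2
    rw [pow_one, div_le_div_iff₀ hτ0 h2, one_mul] at h1
    rwa [div_le_iff₀ hτ0]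
  filter_upwards [eventually_ge_atTop 2, eventually_ge_atTop (U + 1), hexp] with u hu2 huU hue
  have hu0 : 0 < u := by linarith
  set h := τ / u with hh
  have hh0 : 0 < h := by positivity
  have hh1 : h ≤ 1 := by rw [hh, div_le_one hu0]; linarith
  set E := Real.exp u with hE
  have hE0 : 0 < E := Real.exp_pos u
  -- three R bounds
  have r0 := hU u (by linarith)
  have r1 := hU (u + h) (by linarith)
  have r2 := hU (u - h) (by linarith)
  have c1 : |swR a (u + h)| ≤ τ ^ 2 * (3 * E / u ^ 2) := by
    refine r1.trans ?_
    have : Real.exp (u + h) ≤ 3 * E := by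
      rw [Real.exp_add, mul_comm]
      have : Real.exp h ≤ Real.exp 1 := Real.exp_le_exp.2 hh1
      have := Real.exp_one_lt_d9
      gcongr
      linarith
    gcongr
    linarith
  have c2 : |swR a (u - h)| ≤ τ ^ 2 * (4 * E / u ^ 2) := by
    refine r2.trans ?_
    have e1 : Real.exp (u - h) ≤ E := Real.exp_le_exp.2 (by linarith)
    have e2 : u / 2 ≤ u - h := by linarith
    calc _ ≤ τ ^ 2 * (E / (u / 2) ^ 2) := by gcongr
      _ = _ := by field_simp; ring
  have b0 : Real.exp h - 1 ≤ h + h ^ 2 := by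
    have := Real.abs_exp_sub_one_sub_id_le (x := h) (by rw [abs_of_pos hh0]; exact hh1)
    have := (abs_le.1 this).2
    linarith
  have b1 : Real.exp (-h) - 1 ≤ -h + h ^ 2 := by
    have := Real.abs_exp_sub_one_sub_id_le (x := -h) (by rw [abs_neg, abs_of_pos hh0]; exact hh1)
    have := (abs_le.1 this).2
    linarith
  have d0 := (sw_R0_diff a (u := u) hh0.le).1
  have d1 := (sw_R0_diff a (u := u - h) hh0.le).2
  rw [sub_add_cancel] at d1
  rw [swR0_split a (by linarith), swR0_split a (by linarith), ← hκ] at d0 d1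
  have ep : Real.exp (u + h) = E * Real.exp h := Real.exp_add _ _
  have em : Real.exp (u - h) = E * Real.exp (-h) := by rw [sub_eq_add_neg]; exact Real.exp_add _ _
  rw [ep, ← hE] at d0
  rw [em, ← hE] at d1
  set S := τ ^ 2 * (E / u ^ 2) with hS
  have hS0 : 0 < S := by positivity
  have hSh : S = h * (τ * (E / u)) := by rw [hS, hh]; field_simp
  have hhE : h * E = τ * (E / u) := by rw [hh]; field_simp
  have c1' : |swR a (u + h)| ≤ 3 * S := c1.trans_eq (by rw [hS]; ring)
  have c2' : |swR a (u - h)| ≤ 4 * S := c2.trans_eq (by rw [hS]; ring)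
  have hT1 : 1 ≤ τ * (E / u) := by
    rw [← mul_div_assoc, le_div_iff₀ hu0, one_mul]
    rwa [div_le_iff₀ hτ0, mul_comm] at hue
  set T := τ * (E / u) with hT
  have hgoal : 7 * T ≤ δ * (E / u) := by
    rw [hT, ← mul_assoc]; gcongr
  rw [abs_le] at r0 c1' c2'
  have up : h * swA a E ≤ h * (κ * E + κ * T + 4 * T) := by
    have : E * (Real.exp h - 1) ≤ E * (h + h ^ 2) := by gcongr
    have k1 : κ * (E * (Real.exp h - 1)) ≤ κ * (E * (h + h ^ 2)) := by gcongr
    have : κ * (E * (h + h ^ 2)) = h * (κ * E + κ * T) := by rw [← hhE]; ring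
    have : 0 < κ * h := by positivity
    linarith only [d0, k1, this, c1'.2, r0.1, hSh, (by assumption : κ * (E * (h + h ^ 2)) = h * (κ * E + κ * T))]
  have lo : h * (κ * E - κ * T - 5 * T - κ) ≤ h * swA a E := by
    have : E * (Real.exp (-h) - 1) ≤ E * (-h + h ^ 2) := by gcongr
    have k1 : κ * (E * (Real.exp (-h) - 1)) ≤ κ * (E * (-h + h ^ 2)) := by gcongr
    have : κ * (E * (-h + h ^ 2)) = -(h * (κ * E - κ * T)) := by rw [← hhE]; ring
    linarith only [d1, k1, this, c2'.2, r0.1, hSh]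
  have up' := le_of_mul_le_mul_left up hh0
  have lo' := le_of_mul_le_mul_left lo hh0
  have : κ * T ≤ T := mul_le_of_le_one_left (by linarith) hκ1
  rw [abs_le]
  constructor <;> linarith

lemma sw_A_asymp {q : ℕ} [NeZero q] {a : ZMod q} (ha : IsUnit a) {δ : ℝ} (hδ : 0 < δ) :
    ∀ᶠ x : ℝ in atTop, |swA a x - (q.totient : ℝ)⁻¹ * x| ≤ δ * (x / Real.log x) := by
  have := Real.tendsto_log_atTop.eventually (sw_A_asymp_exp ha hδ)
  filter_upwards [this, eventually_gt_atTop 0] with x hx hx0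
  rwa [Real.exp_log hx0] at hx

end

section
open Complex Filter Topology MeasureTheory Set
open ArithmeticFunction.vonMangoldt

lemma sw_abel_integrable (b : ℕ → ℝ) {y x : ℝ} (hy : 2 ≤ y) (hyx : y ≤ x) :
    IntervalIntegrable (fun t : ℝ => (∑ n ∈ Finset.Icc 0 ⌊t⌋₊, b n) / (t * Real.log t ^ 2)) volume y x := by
  rw [intervalIntegrable_iff_integrableOn_Icc_of_le hyx]
  have h : IntegrableOn (fun t : ℝ => (t * Real.log t ^ 2)⁻¹ * ∑ n ∈ Finset.Icc 0 ⌊t⌋₊, b n) (Icc y x) := by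
    refine integrableOn_mul_sum_Icc _ (by linarith) <| ContinuousOn.integrableOn_Icc fun x hx ↦
      ContinuousAt.continuousWithinAt ?_
    have h1 : x ≠ 0 := by linarith [hx.1]
    have h2 : x * Real.log x ^ 2 ≠ 0 :=
      mul_ne_zero h1 <| pow_ne_zero _ (Real.log_pos (by linarith [hx.1])).ne'
    fun_prop (disch := assumption)
  refine h.congr_fun (fun t _ => ?_) measurableSet_Icc
  simp only [div_eq_mul_inv, mul_comm]

lemma sw_abel (b : ℕ → ℝ) (h0 : b 0 = 0) (h1 : b 1 = 0) {x : ℝ} (hx : 2 ≤ x) :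
    ∑ n ∈ Finset.Icc 0 ⌊x⌋₊, (Real.log n)⁻¹ * b n =
      (∑ n ∈ Finset.Icc 0 ⌊x⌋₊, b n) / Real.log x +
      ∫ t in (2:ℝ)..x, (∑ n ∈ Finset.Icc 0 ⌊t⌋₊, b n) / (t * Real.log t ^ 2) := by
  rw [sum_mul_eq_sub_integral_mul₁ b (f := fun n ↦ (Real.log n)⁻¹) h0 h1 x,
    ← intervalIntegral.integral_of_le hx]
  · have : ∫ u in (2:ℝ)..x, deriv (fun x ↦ (Real.log x)⁻¹) u * (∑ n ∈ Finset.Icc 0 ⌊u⌋₊, b n) =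
        ∫ u in (2:ℝ)..x, -((∑ n ∈ Finset.Icc 0 ⌊u⌋₊, b n) / (u * Real.log u ^ 2)) := by
      refine intervalIntegral.integral_congr fun u _ ↦ ?_
      simp only [Real.deriv_inv_log_apply]
      rw [div_eq_mul_inv, div_eq_mul_inv, mul_inv]; ring
    rw [this, intervalIntegral.integral_neg, div_eq_mul_inv]
    ring
  · intro z hz
    have : z ≠ 0 := by linarith [hz.1]
    have : Real.log z ≠ 0 := (Real.log_pos (by linarith [hz.1])).ne'
    fun_prop (disch := assumption)
  · refine ContinuousOn.integrableOn_Icc fun z hz ↦ ContinuousWithinAt.congr ?_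
      (fun _ _ ↦ Real.deriv_inv_log_apply) Real.deriv_inv_log_apply
    have h1 : z ≠ 0 := by linarith [hz.1]
    have h2 : Real.log z ^ 2 ≠ 0 := pow_ne_zero _ (Real.log_pos (by linarith [hz.1])).ne'
    exact ContinuousAt.continuousWithinAt <| by fun_prop (disch := assumption)

lemma sw_int_log_sq_le {y x : ℝ} (hy : Real.exp 4 ≤ y) (hyx : y ≤ x) :
    ∫ t in y..x, 1 / Real.log t ^ 2 ≤ 2 * (x / Real.log x ^ 2) := by
  have e1 : (1:ℝ) < Real.exp 4 := Real.one_lt_exp_iff.2 (by norm_num)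
  have key : ∫ t in y..x, (2 / Real.log t ^ 2 - 4 / Real.log t ^ 3) =
      2 * (x / Real.log x ^ 2) - 2 * (y / Real.log y ^ 2) := by
    rw [intervalIntegral.integral_eq_sub_of_hasDerivAt (f := fun t => 2 * (t / Real.log t ^ 2))]
    · intro t ht
      rw [uIcc_of_le hyx] at ht
      have t0 : t ≠ 0 := by linarith [ht.1]
      have tl : Real.log t ≠ 0 := (Real.log_pos (by linarith [ht.1])).ne'
      have := (((hasDerivAt_id t).div ((Real.hasDerivAt_log t0).pow 2) (pow_ne_zero 2 tl))).const_mul 2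
      convert! this using 1
      simp
      field_simp
      ring
    · refine ContinuousOn.intervalIntegrable fun t ht ↦ ContinuousAt.continuousWithinAt ?_
      rw [uIcc_of_le hyx] at ht
      have t0 : t ≠ 0 := by linarith [ht.1]
      have tl : Real.log t ≠ 0 := (Real.log_pos (by linarith [ht.1])).ne'
      have tl2 := pow_ne_zero 2 tl
      have tl3 := pow_ne_zero 3 tl
      fun_prop (disch := assumption)
  have mono : ∫ t in y..x, 1 / Real.log t ^ 2 ≤ ∫ t in y..x, (2 / Real.log t ^ 2 - 4 / Real.log t ^ 3) := by
    refine intervalIntegral.integral_mono_on hyx ?_ ?_ ?_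
    · exact Chebyshev.intervalIntegrable_one_div_log_sq (by linarith) (by linarith)
    · refine ContinuousOn.intervalIntegrable fun t ht ↦ ContinuousAt.continuousWithinAt ?_
      rw [uIcc_of_le hyx] at ht
      have t0 : t ≠ 0 := by linarith [ht.1]
      have tl : Real.log t ≠ 0 := (Real.log_pos (by linarith [ht.1])).ne'
      have tl2 := pow_ne_zero 2 tl
      have tl3 := pow_ne_zero 3 tl
      fun_prop (disch := assumption)
    · intro t ht
      have l4 : 4 ≤ Real.log t := by
        rw [Real.le_log_iff_exp_le (by linarith [ht.1])]; linarith [ht.1]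
      have tl : Real.log t ≠ 0 := by linarith
      have e : (2 / Real.log t ^ 2 - 4 / Real.log t ^ 3) - 1 / Real.log t ^ 2 = (Real.log t - 4) / Real.log t ^ 3 := by
        field_simp; ring
      have : 0 ≤ (Real.log t - 4) / Real.log t ^ 3 := div_nonneg (by linarith) (by positivity)
      linarith
  have : 0 ≤ y / Real.log y ^ 2 := div_nonneg (by linarith) (by positivity)
  linarith

lemma sw_pi_of_theta (b : ℕ → ℝ) (h0 : b 0 = 0) (h1 : b 1 = 0) (hb : ∀ n, 0 ≤ b n) {κ : ℝ} (hκ : 0 < κ)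
    (h : ∀ᶠ x : ℝ in atTop, |∑ n ∈ Finset.Icc 0 ⌊x⌋₊, b n - κ * x| ≤ κ / 10 * (x / Real.log x)) :
    ∀ᶠ x : ℝ in atTop, κ * (x / Real.log x) < ∑ n ∈ Finset.Icc 0 ⌊x⌋₊, (Real.log n)⁻¹ * b n ∧
      ∑ n ∈ Finset.Icc 0 ⌊x⌋₊, (Real.log n)⁻¹ * b n < κ * (x / Real.log x) * (1 + 5 / (2 * Real.log x)) := by
  obtain ⟨T0, hT0⟩ := eventually_atTop.1 h
  set T := max T0 (Real.exp 4) with hT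
  have e1 : (2:ℝ) < Real.exp 4 := by
    have := Real.add_one_le_exp (4:ℝ); linarith
  have hTe : Real.exp 4 ≤ T := le_max_right _ _
  have hTT : T0 ≤ T := le_max_left _ _
  set S : ℝ → ℝ := fun x => ∑ n ∈ Finset.Icc 0 ⌊x⌋₊, b n with hS
  set C := ∫ t in (2:ℝ)..T, S t / (t * Real.log t ^ 2) with hC
  have C0 : 0 ≤ C := by
    refine intervalIntegral.integral_nonneg (by linarith) fun t ht => ?_
    refine div_nonneg (Finset.sum_nonneg fun n _ => hb n) ?_
    have : 0 ≤ t := by linarith [ht.1]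
    positivity
  have ev : ∀ᶠ x : ℝ in atTop, C ≤ κ / 10 * (x / Real.log x ^ 2) := by
    have := (Real.isLittleO_pow_log_id_atTop (n := 2)).bound (c := κ / 10 / (C + 1)) (by positivity)
    filter_upwards [this, eventually_gt_atTop 2] with x hx hx2
    have lp : 0 < Real.log x := Real.log_pos (by linarith)
    simp only [id, Real.norm_eq_abs] at hx
    rw [abs_of_nonneg (by positivity), abs_of_nonneg (by linarith)] at hx
    rw [← mul_div_assoc, le_div_iff₀ (by positivity)]
    have : (C + 1) * Real.log x ^ 2 ≤ κ / 10 * x := by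
      calc _ ≤ (C + 1) * (κ / 10 / (C + 1) * x) := by gcongr
        _ = _ := by field_simp
    nlinarith [sq_nonneg (Real.log x)]
  filter_upwards [ev, eventually_ge_atTop (2 * T)] with x hxC hxT
  have hTx : T ≤ x := by linarith
  have lx4 : 4 ≤ Real.log x := by
    rw [Real.le_log_iff_exp_le (by linarith)]; linarith
  have bd : ∀ t, T ≤ t → |S t - κ * t| ≤ κ / 10 * (t / Real.log t) := fun t ht => hT0 t (by linarith)
  have bd2 : ∀ t, T ≤ t → |S t - κ * t| ≤ κ / 10 * t := by
    intro t ht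
    refine (bd t ht).trans ?_
    have l4 : 4 ≤ Real.log t := by
      rw [Real.le_log_iff_exp_le (by linarith)]; linarith
    gcongr
    exact div_le_self (by linarith) (by linarith)
  rw [sw_abel b h0 h1 (by linarith), ← intervalIntegral.integral_add_adjacent_intervals
    (sw_abel_integrable b le_rfl (by linarith : 2 ≤ T)) (sw_abel_integrable b (by linarith) hTx)]
  change _ < S x / Real.log x + (C + ∫ t in T..x, S t / (t * Real.log t ^ 2)) ∧ 
    S x / Real.log x + (C + ∫ t in T..x, S t / (t * Real.log t ^ 2)) < _
  have ig := Chebyshev.intervalIntegrable_one_div_log_sq (a := T) (b := x) (by linarith) (by linarith)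
  have up : ∫ t in T..x, S t / (t * Real.log t ^ 2) ≤ 2.2 * κ * (x / Real.log x ^ 2) := by
    calc ∫ t in T..x, S t / (t * Real.log t ^ 2) ≤ ∫ t in T..x, (1.1 * κ) * (1 / Real.log t ^ 2) := by
          refine intervalIntegral.integral_mono_on hTx (sw_abel_integrable b (by linarith) hTx) (ig.const_mul _) ?_
          intro t ht
          have := (abs_le.1 (bd2 t ht.1)).2
          have t0 : 0 < t := by linarith [ht.1]
          have tl : 0 < Real.log t := Real.log_pos (by linarith [ht.1])
          rw [div_le_iff₀ (by positivity)]
          have : 1.1 * κ * (1 / Real.log t ^ 2) * (t * Real.log t ^ 2) = 1.1 * κ * t := by field_simp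
          rw [this]; linarith
      _ = 1.1 * κ * ∫ t in T..x, (1 / Real.log t ^ 2) := by rw [intervalIntegral.integral_const_mul]
      _ ≤ 1.1 * κ * (2 * (x / Real.log x ^ 2)) := by
          gcongr
          exact sw_int_log_sq_le hTe hTx
      _ = _ := by ring
  have low : 0.45 * κ * (x / Real.log x ^ 2) ≤ ∫ t in T..x, S t / (t * Real.log t ^ 2) := by
    calc ∫ t in T..x, S t / (t * Real.log t ^ 2) ≥ ∫ t in T..x, (0.9 * κ) * (1 / Real.log x ^ 2) := by
          refine intervalIntegral.integral_mono_on hTx (by simp) (sw_abel_integrable b (by linarith) hTx) ?_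
          intro t ht
          have := (abs_le.1 (bd2 t ht.1)).1
          have t0 : 0 < t := by linarith [ht.1]
          have tl : 0 < Real.log t := Real.log_pos (by linarith [ht.1])
          have : 0.9 * κ * (1 / Real.log t ^ 2) ≤ S t / (t * Real.log t ^ 2) := by
            rw [le_div_iff₀ (by positivity)]
            have : 0.9 * κ * (1 / Real.log t ^ 2) * (t * Real.log t ^ 2) = 0.9 * κ * t := by field_simp
            rw [this]; linarith
          refine le_trans ?_ this
          gcongr
          exact ht.2
      _ = (x - T) * (0.9 * κ * (1 / Real.log x ^ 2)) := by simp; ring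
      _ ≥ (x / 2) * (0.9 * κ * (1 / Real.log x ^ 2)) := by
          gcongr; linarith
      _ = _ := by ring
  have hx := abs_le.1 (bd x hTx)
  have lp : 0 < Real.log x := by linarith
  have q : 0 < κ * (x / Real.log x ^ 2) := mul_pos hκ (div_pos (by linarith) (by positivity))
  have r1 : κ * (x / Real.log x) - κ / 10 * (x / Real.log x ^ 2) ≤ S x / Real.log x := by
    rw [le_div_iff₀ lp]
    have : (κ * (x / Real.log x) - κ / 10 * (x / Real.log x ^ 2)) * Real.log x = κ * x - κ / 10 * (x / Real.log x) := by
      field_simp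
    linarith [hx.1]
  have r2 : S x / Real.log x ≤ κ * (x / Real.log x) + κ / 10 * (x / Real.log x ^ 2) := by
    rw [div_le_iff₀ lp]
    have : (κ * (x / Real.log x) + κ / 10 * (x / Real.log x ^ 2)) * Real.log x = κ * x + κ / 10 * (x / Real.log x) := by
      field_simp
    linarith [hx.2]
  have r3 : κ * (x / Real.log x) * (1 + 5 / (2 * Real.log x)) = κ * (x / Real.log x) + 2.5 * (κ * (x / Real.log x ^ 2)) := by
    field_simp; ring
  rw [r3]
  constructor <;> nlinarith

noncomputable def swB {q : ℕ} (a : ZMod q) (n : ℕ) : ℝ := if n.Prime then residueClass a n else 0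

lemma sw_theta {q : ℕ} [NeZero q] {a : ZMod q} (ha : IsUnit a) {δ : ℝ} (hδ : 0 < δ) :
    ∀ᶠ x : ℝ in atTop, |∑ n ∈ Finset.Icc 0 ⌊x⌋₊, swB a n - (q.totient : ℝ)⁻¹ * x| ≤ δ * (x / Real.log x) := by
  obtain ⟨C, hC⟩ := Chebyshev.psi_sub_theta_le_mul_sqrt
  have ev : ∀ᶠ x : ℝ in atTop, C * x.sqrt ≤ δ / 2 * (x / Real.log x) := by
    have := (isLittleO_log_rpow_atTop (r := 1/2) (by norm_num)).bound (c := δ / 2 / (|C| + 1)) (by positivity)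
    filter_upwards [this, eventually_gt_atTop 2] with x hx hx2
    have lp : 0 < Real.log x := Real.log_pos (by linarith)
    rw [← Real.sqrt_eq_rpow, Real.norm_eq_abs, Real.norm_eq_abs, abs_of_pos lp, abs_of_nonneg (Real.sqrt_nonneg _)] at hx
    rw [← mul_div_assoc, le_div_iff₀ lp]
    have h2 : (|C| + 1) * Real.log x ≤ δ / 2 * √x := by
      calc _ ≤ (|C| + 1) * (δ / 2 / (|C| + 1) * √x) := by gcongr
        _ = _ := by field_simp
    calc C * √x * Real.log x ≤ (|C| + 1) * √x * Real.log x := by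
          gcongr; linarith [le_abs_self C]
      _ = √x * ((|C| + 1) * Real.log x) := by ring
      _ ≤ √x * (δ / 2 * √x) := by gcongr
      _ = δ / 2 * (√x * √x) := by ring
      _ = _ := by rw [Real.mul_self_sqrt (by linarith)]
  filter_upwards [ev, sw_A_asymp ha (half_pos hδ)] with x h1 h2
  have e : swA a x - ∑ n ∈ Finset.Icc 0 ⌊x⌋₊, swB a n = ∑ n ∈ Finset.Icc 0 ⌊x⌋₊, if n.Prime then 0 else residueClass a n := by
    rw [swA, Nat.range_succ_eq_Icc_zero, ← Finset.sum_sub_distrib]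
    refine Finset.sum_congr rfl fun n _ => ?_
    simp only [swB]; split_ifs <;> simp
  have p0 : 0 ≤ swA a x - ∑ n ∈ Finset.Icc 0 ⌊x⌋₊, swB a n := by
    rw [e]; refine Finset.sum_nonneg fun n _ => ?_
    split_ifs
    exacts [le_rfl, residueClass_nonneg a n]
  have p1 : swA a x - ∑ n ∈ Finset.Icc 0 ⌊x⌋₊, swB a n ≤ C * √x := by
    refine le_trans ?_ (hC x)
    rw [e, Chebyshev.psi_sub_theta_eq_sum_not_prime, Finset.sum_filter, ← Finset.add_sum_Ioc_eq_sum_Icc (Nat.zero_le _)]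
    simp only [residueClass_apply_zero, ite_self, zero_add]
    refine Finset.sum_le_sum fun n _ => ?_
    by_cases hn : n.Prime
    · simp [hn]
    · simp [hn, residueClass_le]
  have := abs_le.1 h2
  rw [abs_le]; constructor <;> linarith [this.1, this.2]

lemma sw_piMod_eq (m : ℕ) (l : ℤ) {x : ℝ} (hx : 2 ≤ x) :
    ((Set.ncard {p : ℕ | p.Prime ∧ (p : ℝ) ≤ x ∧ (p : ℤ) ≡ l [ZMOD (m : ℤ)]} : ℕ) : ℝ) =
      ∑ n ∈ Finset.Icc 0 ⌊x⌋₊, (Real.log n)⁻¹ * swB (l : ZMod m) n := by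
  have hs : {p : ℕ | p.Prime ∧ (p : ℝ) ≤ x ∧ (p : ℤ) ≡ l [ZMOD (m : ℤ)]} =
      ((Finset.Icc 0 ⌊x⌋₊).filter fun p : ℕ => p.Prime ∧ ((p : ℕ) : ZMod m) = (l : ZMod m) : Finset ℕ) := by
    ext p
    have := ZMod.intCast_eq_intCast_iff (p : ℤ) l m
    rw [Int.cast_natCast] at this
    simp only [Finset.coe_filter, Finset.mem_Icc, Nat.zero_le, true_and, mem_ofPred_eq,
      Nat.le_floor_iff (show 0 ≤ x by linarith), this]
    tauto
  rw [hs, Set.ncard_coe_finset, Finset.card_eq_sum_ones, Finset.sum_filter]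
  push_cast
  refine Finset.sum_congr rfl fun n _ => ?_
  by_cases hp : n.Prime
  · have : Real.log n ≠ 0 := (Real.log_pos (by exact_mod_cast hp.one_lt)).ne'
    by_cases hl : (n : ZMod m) = l
    · simp [hp, hl, swB, residueClass, Set.indicator_apply, ArithmeticFunction.vonMangoldt_apply_prime hp, this]
    · simp [hp, hl, swB, residueClass, Set.indicator_apply]
  · simp [hp, swB]

lemma sw_final (m : ℕ) (l : ℤ) (hm : 1 ≤ m) (hml : IsCoprime (m : ℤ) l) :
    ∃ X : ℝ, ∀ x : ℝ, X ≤ x →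
      x / ((Nat.totient m : ℝ) * Real.log x) < (Set.ncard {p : ℕ | p.Prime ∧ (p : ℝ) ≤ x ∧ (p : ℤ) ≡ l [ZMOD (m : ℤ)]} : ℝ) ∧
      (Set.ncard {p : ℕ | p.Prime ∧ (p : ℝ) ≤ x ∧ (p : ℤ) ≡ l [ZMOD (m : ℤ)]} : ℝ) <
        x / ((Nat.totient m : ℝ) * Real.log x) * (1 + 5 / (2 * Real.log x)) := by
  have : NeZero m := ⟨by omega⟩
  have ha : IsUnit (l : ZMod m) := by
    obtain ⟨u, v, huv⟩ := hml
    have := congrArg (Int.cast : ℤ → ZMod m) huv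
    push_cast at this
    rw [ZMod.natCast_self, mul_zero, zero_add] at this
    exact IsUnit.of_mul_eq_one_right _ this
  have hk : 0 < (m.totient : ℝ)⁻¹ := inv_pos.2 (by exact_mod_cast Nat.totient_pos.2 (by omega))
  have h := sw_pi_of_theta (swB (l : ZMod m)) (by simp [swB, Nat.not_prime_zero]) (by simp [swB, Nat.not_prime_one])
    (fun n => by
      unfold swB
      split_ifs
      exacts [residueClass_nonneg _ n, le_rfl]) hk (sw_theta ha (by positivity))
  obtain ⟨X, hX⟩ := eventually_atTop.1 (h.and (eventually_ge_atTop (2:ℝ)))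
  refine ⟨X, fun x hx => ?_⟩
  obtain ⟨h1, h2⟩ := hX x hx
  rw [sw_piMod_eq m l h2]
  have e : x / ((m.totient : ℝ) * Real.log x) = (m.totient : ℝ)⁻¹ * (x / Real.log x) := by
    rw [div_eq_mul_inv, div_eq_mul_inv, mul_inv]; ring
  rw [e]
  exact h1

end

/-- Corollary of the Siegel–Walfisz theorem: for coprime `m ≥ 1` and `l`,
there is `X(m)` such that for all `x ≥ X(m)`,
`x/(φ(m) log x) < π(x; m, l) < (x/(φ(m) log x))(1 + 5/(2 log x))`. -/
theorem siegel_walfisz_corollary (m : ℕ) (l : ℤ) (hm : 1 ≤ m)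
    (hml : IsCoprime (m : ℤ) l) :
    ∃ X : ℝ, ∀ x : ℝ, X ≤ x →
      x / ((Nat.totient m : ℝ) * Real.log x) < (piMod x m l : ℝ) ∧
      (piMod x m l : ℝ) <
        x / ((Nat.totient m : ℝ) * Real.log x) * (1 + 5 / (2 * Real.log x)) := by
  exact sw_final m l hm hml
end

section
/- For all coprime integers a, b with a > 60000 and b > a, the number π*(a,b) of primes not representable as au + bv with u, v nonnegative integers satisfies π*(a,b) > 0.0445 · π(S(a,b)), where S(a,b) = ab − a − b and π(x) is the number of primes not exceeding x. -/
/-- `piStar a b` is the number of primes not representable as `a*u + b*v`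
with `u, v` nonnegative integers, i.e. the number of primes not in the
numerical semigroup `⟨a, b⟩`. -/
noncomputable def piStar (a b : ℕ) : ℕ :=
  Set.ncard {p : ℕ | p.Prime ∧ ¬ ∃ u v : ℕ, p = a * u + b * v}

/-- `S a b = a*b - a - b` (the Frobenius-type quantity). -/
def S (a b : ℕ) : ℕ := a * b - a - b


namespace PS
open Real

lemma log_fact_lower (n : ℕ) : (n:ℝ) * log n - n ≤ log (n.factorial : ℝ) := by
  rcases Nat.eq_zero_or_pos n with h | h
  · subst h; simp
  have := Stirling.le_log_factorial_stirling (n := n) (by omega)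
  have h1 : 0 ≤ log (n:ℝ) := log_nonneg (by exact_mod_cast h)
  have h2 : 0 ≤ log (2 * π) := log_nonneg (by nlinarith [Real.pi_gt_three])
  linarith

lemma log_fact_upper (n : ℕ) (hn : 1 ≤ n) :
    log (n.factorial : ℝ) ≤ (n:ℝ) * log n - n + log n + 1 := by
  induction n, hn using Nat.le_induction with
  | base => simp
  | succ n hn ih =>
    have hn0 : (0:ℝ) < n := by exact_mod_cast hn
    rw [Nat.factorial_succ]
    push_cast
    rw [log_mul (by positivity) (by positivity)]
    have h1 : log ((n:ℝ)/(n+1)) ≤ (n:ℝ)/(n+1) - 1 := log_le_sub_one_of_pos (by positivity)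
    rw [log_div (by positivity) (by positivity)] at h1
    have h2 : ((n:ℝ)+1) * (log n - log (n+1)) ≤ ((n:ℝ)+1) * ((n:ℝ)/(n+1) - 1) :=
      mul_le_mul_of_nonneg_left h1 (by positivity)
    have h3 : ((n:ℝ)+1) * ((n:ℝ)/(n+1) - 1) = -1 := by field_simp; ring
    nlinarith

lemma log_fact_eq (n N : ℕ) (h : n ≤ N) :
    log (n.factorial : ℝ) = ∑ k ∈ Finset.Ioc 0 N, ArithmeticFunction.vonMangoldt k * ((n / k : ℕ) : ℝ) := by
  have h0 : log (n.factorial : ℝ) = ∑ m ∈ Finset.Ioc 0 n, log (m:ℝ) := by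
    clear h
    induction n with
    | zero => simp
    | succ n ih =>
      rw [Finset.sum_Ioc_succ_top (by omega), ← ih, Nat.factorial_succ]
      push_cast
      rw [log_mul (by positivity) (by positivity)]; ring
  rw [h0]
  have h1 : ∀ m ∈ Finset.Ioc 0 n, log (m:ℝ) =
      ∑ k ∈ Finset.Ioc 0 N, if k ∣ m then ArithmeticFunction.vonMangoldt k else 0 := by
    intro m hm
    rw [Finset.mem_Ioc] at hm
    rw [← ArithmeticFunction.vonMangoldt_sum, ← Finset.sum_filter]
    apply Finset.sum_congr _ (fun _ _ => rfl)
    ext k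
    simp only [Nat.mem_divisors, Finset.mem_filter, Finset.mem_Ioc]
    constructor
    · rintro ⟨a, b⟩
      exact ⟨⟨Nat.pos_of_dvd_of_pos a hm.1, (Nat.le_of_dvd hm.1 a).trans (hm.2.trans h)⟩, a⟩
    · rintro ⟨a, b⟩
      exact ⟨b, by omega⟩
  rw [Finset.sum_congr rfl h1, Finset.sum_comm]
  apply Finset.sum_congr rfl
  intro k hk
  rw [← Finset.sum_filter, Finset.sum_const, Nat.Ioc_filter_dvd_card_eq_div]
  simp [mul_comm]

lemma psi_lower_nat (n : ℕ) :
    log (n.factorial : ℝ) - log ((n/2).factorial : ℝ) - log ((n/3).factorial : ℝ)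
      - log ((n/5).factorial : ℝ) + log ((n/30).factorial : ℝ) ≤ Chebyshev.psi n := by
  rw [log_fact_eq n n le_rfl, log_fact_eq (n/2) n (Nat.div_le_self _ _),
    log_fact_eq (n/3) n (Nat.div_le_self _ _), log_fact_eq (n/5) n (Nat.div_le_self _ _),
    log_fact_eq (n/30) n (Nat.div_le_self _ _), ← Finset.sum_sub_distrib,
    ← Finset.sum_sub_distrib, ← Finset.sum_sub_distrib, ← Finset.sum_add_distrib]
  unfold Chebyshev.psi
  rw [Nat.floor_natCast]
  apply Finset.sum_le_sum
  intro k hk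
  have hc : ∀ j : ℕ, n / j / k = (n / k) / j := fun j => by
    rw [Nat.div_div_eq_div_mul, Nat.div_div_eq_div_mul, mul_comm]
  rw [hc, hc, hc, hc]
  set m := n / k
  have h : m + m / 30 ≤ 1 + m / 2 + m / 3 + m / 5 := by omega
  have h' : (m:ℝ) + ((m / 30 : ℕ):ℝ) ≤ 1 + ((m / 2 : ℕ):ℝ) + ((m / 3:ℕ):ℝ) + ((m / 5:ℕ):ℝ) := by
    exact_mod_cast h
  have hL : 0 ≤ ArithmeticFunction.vonMangoldt k := ArithmeticFunction.vonMangoldt_nonneg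
  nlinarith

lemma psi_lower_30 (m : ℕ) (hm : 1 ≤ m) :
    0.92129 * (30 * m : ℝ) - 3 * log (30 * m) - 3 ≤ Chebyshev.psi ((30 * m : ℕ) : ℝ) := by
  have h := psi_lower_nat (30 * m)
  have e2 : 30 * m / 2 = 15 * m := by omega
  have e3 : 30 * m / 3 = 10 * m := by omega
  have e5 : 30 * m / 5 = 6 * m := by omega
  have e30 : 30 * m / 30 = m := by omega
  rw [e2, e3, e5, e30] at h
  have a1 := log_fact_lower (30 * m)
  have a2 := log_fact_lower m
  have b1 := log_fact_upper (15 * m) (by omega)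
  have b2 := log_fact_upper (10 * m) (by omega)
  have b3 := log_fact_upper (6 * m) (by omega)
  have hm0 : (1:ℝ) ≤ m := by exact_mod_cast hm
  push_cast at *
  have l2 := log_two_gt_d9
  have l3 := log_three_gt_d9
  have l5 := log_five_gt_d9
  have c30 : log (30 * (m:ℝ)) = log 2 + log 3 + log 5 + log m := by
    rw [← log_mul (by norm_num) (by norm_num), ← log_mul (by norm_num) (by norm_num),
      ← log_mul (by norm_num) (by positivity)]; norm_num
  have c15 : log (15 * (m:ℝ)) = log 3 + log 5 + log m := by
    rw [← log_mul (by norm_num) (by norm_num), ← log_mul (by norm_num) (by positivity)]; norm_num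
  have c10 : log (10 * (m:ℝ)) = log 2 + log 5 + log m := by
    rw [← log_mul (by norm_num) (by norm_num), ← log_mul (by norm_num) (by positivity)]; norm_num
  have c6 : log (6 * (m:ℝ)) = log 2 + log 3 + log m := by
    rw [← log_mul (by norm_num) (by norm_num), ← log_mul (by norm_num) (by positivity)]; norm_num
  rw [c30] at a1 ⊢
  rw [c15] at b1
  rw [c10] at b2
  rw [c6] at b3
  have k : 0.92129 * 30 * (m:ℝ) ≤ (14 * log 2 + 9 * log 3 + 5 * log 5) * m := by
    apply mul_le_mul_of_nonneg_right _ (by positivity)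
    norm_num at *
    linarith
  nlinarith

lemma pi_lower (x : ℝ) (hx : 500000000 ≤ x) :
    0.921 * x / log x ≤ (Nat.primeCounting ⌊x⌋₊ : ℝ) := by
  have hl : 0 < log x := log_pos (by linarith)
  rw [div_le_iff₀ hl]
  refine le_trans ?_ (Chebyshev.psi_le_primeCounting_mul_log' x)
  set m := ⌊x / 30⌋₊ with hmdef
  have hm1 : (m:ℝ) ≤ x / 30 := Nat.floor_le (by linarith)
  have hm2 : x / 30 < m + 1 := Nat.lt_floor_add_one _
  have hm : 1 ≤ m := by
    rw [hmdef, Nat.one_le_floor_iff]; linarith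
  have hm0 : (1:ℝ) ≤ m := by exact_mod_cast hm
  have h1 := psi_lower_30 m hm
  have h2 : Chebyshev.psi ((30 * m : ℕ) : ℝ) ≤ Chebyshev.psi x := by
    apply Chebyshev.psi_mono; push_cast; linarith
  have h3 : log (30 * (m:ℝ)) ≤ log x := log_le_log (by positivity) (by linarith)
  have h4 : log x ≤ 2 * √x := by
    have := log_le_sub_one_of_pos (x := √x) (by positivity)
    rw [log_sqrt (by linarith)] at this
    linarith
  have h5 : (20000:ℝ) ≤ √x := le_sqrt_of_sq_le (by linarith)
  have h6 : √x * √x = x := mul_self_sqrt (by linarith)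
  nlinarith

end PS


namespace PS
open Real

lemma int_one (x : ℝ) (hx : 32768 ≤ x) :
    ∫ t in (2:ℝ)..x, 1 / log t ^ 2 ≤ 69000 + 1.25 * (x / log x ^ 2) := by
  have l2 := log_two_gt_d9
  have hK : log (32768:ℝ) = 15 * log 2 := by
    rw [show (32768:ℝ) = 2 ^ 15 by norm_num, log_pow]; norm_num
  rw [← intervalIntegral.integral_add_adjacent_intervals (b := 32768)
    (Chebyshev.intervalIntegrable_one_div_log_sq (by norm_num) (by norm_num))
    (Chebyshev.intervalIntegrable_one_div_log_sq (by norm_num) (by linarith))]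
  have h1 : ∫ t in (2:ℝ)..32768, 1 / log t ^ 2 ≤ ∫ t in (2:ℝ)..32768, 1 / log 2 ^ 2 := by
    refine intervalIntegral.integral_mono_on (by norm_num)
      (Chebyshev.intervalIntegrable_one_div_log_sq (by norm_num) (by norm_num)) (by simp) ?_
    intro t ht
    have : log 2 ≤ log t := log_le_log (by norm_num) ht.1
    gcongr
  have h1' : ∫ t in (2:ℝ)..32768, 1 / log 2 ^ 2 ≤ 69000 := by
    rw [intervalIntegral.integral_const, smul_eq_mul, mul_one_div, div_le_iff₀ (by positivity)]
    norm_num at *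
    nlinarith
  have h2 : ∫ t in (32768:ℝ)..x, 1 / log t ^ 2 ≤
      (fun t => 1.25 * (t / log t ^ 2)) x - (fun t => 1.25 * (t / log t ^ 2)) 32768 := by
    have hpos : ∀ t : ℝ, 32768 ≤ t → 10 ≤ log t := by
      intro t ht
      have := log_le_log (by norm_num) ht
      norm_num at *
      linarith
    have hd : ∀ t : ℝ, 32768 ≤ t → HasDerivAt (fun t => 1.25 * (t / log t ^ 2))
        (1.25 * ((1 * log t ^ 2 - t * (2 * log t ^ (2-1) * t⁻¹)) / (log t ^ 2) ^ 2)) t := by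
      intro t ht
      have h10 := hpos t ht
      have ht0 : t ≠ 0 := by linarith
      exact ((hasDerivAt_id' t).fun_div ((hasDerivAt_log ht0).fun_pow 2)
        (by positivity)).const_mul _
    refine intervalIntegral.integral_le_sub_of_hasDeriv_right_of_le hx
      (g := fun t => 1.25 * (t / log t ^ 2))
      (g' := fun t => (1.25 * ((1 * log t ^ 2 - t * (2 * log t ^ (2-1) * t⁻¹)) / (log t ^ 2) ^ 2)))
      ?_ ?_ ?_ ?_
    · intro t ht
      exact (hd t ht.1).continuousAt.continuousWithinAt
    · intro t ht
      exact (hd t ht.1.le).hasDerivWithinAt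
    · refine ContinuousOn.integrableOn_Icc fun t ht ↦ ContinuousAt.continuousWithinAt ?_
      have h10 := hpos t ht.1
      have ht0 : t ≠ 0 := by linarith [ht.1]
      have : log t ^ 2 ≠ 0 := by positivity
      fun_prop
    · intro t ht
      have h10 := hpos t ht.1.le
      have ht0 : 0 < t := by linarith [ht.1]
      have e : (1 * log t ^ 2 - t * (2 * log t ^ (2-1) * t⁻¹)) = log t ^ 2 - 2 * log t := by
        field_simp
        simp
        ring
      simp only [e]
      rw [← mul_div_assoc, div_le_div_iff₀ (by positivity) (by positivity)]
      have : 0 ≤ log t ^ 3 * (log t - 10) := by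
        apply mul_nonneg (by positivity); linarith
      norm_num
      nlinarith
  have h3 : 0 ≤ (32768:ℝ) / log 32768 ^ 2 := by positivity
  simp only at h2
  linarith

lemma pi_upper (x : ℝ) (hx : 3600000000 ≤ x) :
    (Nat.primeCounting ⌊x⌋₊ : ℝ) ≤ log 4 * (x / log x + 1.3 * (x / log x ^ 2)) := by
  rw [Chebyshev.primeCounting_eq_theta_div_log_add_integral (by linarith)]
  have hl : 0 < log x := log_pos (by linarith)
  have h1 : Chebyshev.theta x / log x ≤ log 4 * (x / log x) := by
    rw [← mul_div_assoc]
    gcongr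
    exact Chebyshev.theta_le_log4_mul_x (by linarith)
  have h2 : ∫ t in (2:ℝ)..x, Chebyshev.theta t / (t * log t ^ 2) ≤
      ∫ t in (2:ℝ)..x, log 4 * (1 / log t ^ 2) := by
    refine intervalIntegral.integral_mono_on (by linarith) ?_ ?_ ?_
    · refine (intervalIntegrable_iff.mpr ?_)
      rw [Set.uIoc_of_le (by linarith), ← integrableOn_Icc_iff_integrableOn_Ioc]
      exact Chebyshev.integrableOn_theta_div_id_mul_log_sq x
    · exact (Chebyshev.intervalIntegrable_one_div_log_sq (by norm_num) (by linarith)).const_mul _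
    · intro t ht
      have ht0 : 0 < t := by linarith [ht.1]
      have hlt : 0 < log t := log_pos (by linarith [ht.1])
      have := Chebyshev.theta_le_log4_mul_x ht0.le
      calc _ ≤ log 4 * t / (t * log t ^ 2) := by gcongr
        _ = _ := by field_simp
  rw [intervalIntegral.integral_const_mul] at h2
  have h3 := int_one x (by linarith)
  have h4 : 69000 ≤ 0.05 * (x / log x ^ 2) := by
    have hx0 : 0 < x / 3600000000 := by positivity
    have e2 : log (√(√(x / 3600000000))) ≤ √(√(x / 3600000000)) - 1 := log_le_sub_one_of_pos (by positivity)
    rw [log_sqrt (by positivity), log_sqrt (by positivity), log_div (by positivity) (by norm_num)] at e2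
    have e3 : log (3600000000:ℝ) ≤ 23 := by
      rw [log_le_iff_le_exp (by norm_num)]
      have := exp_one_gt_d9
      calc (3600000000:ℝ) ≤ 2.7182818283 ^ 23 := by norm_num
        _ ≤ (exp 1) ^ 23 := by gcongr
        _ = exp 23 := by rw [← exp_nat_mul]; norm_num
    set r := √(√(x / 3600000000)) with hr
    have hr1 : 1 ≤ r := by
      rw [hr]; rw [one_le_sqrt, one_le_sqrt, le_div_iff₀ (by norm_num)]; linarith
    have hr4 : x = 3600000000 * r ^ 4 := by
      have a1 : r ^ 2 = √(x / 3600000000) := sq_sqrt (by positivity)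
      have a2 : (r ^ 2) ^ 2 = x / 3600000000 := by rw [a1]; exact sq_sqrt (by positivity)
      have : r ^ 4 = x / 3600000000 := by rw [← a2]; ring
      rw [this]; field_simp
    have e4 : log x ≤ 23 * r := by linarith
    have e5 : log x ^ 2 ≤ 529 * r ^ 2 := by nlinarith
    rw [← mul_div_assoc, le_div_iff₀ (by positivity)]
    have : r ^ 2 ≤ r ^ 4 := by gcongr; norm_num
    rw [hr4] at e5 ⊢
    norm_num at *
    linarith
  have h5 : 0 < log 4 := log_pos (by norm_num)
  have h6 : log 4 * ∫ t in (2:ℝ)..x, 1 / log t ^ 2 ≤ log 4 * (1.3 * (x / log x ^ 2)) := by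
    apply mul_le_mul_of_nonneg_left _ h5.le
    norm_num at *
    linarith
  rw [mul_add]
  linarith

end PS


namespace PS
open Real

/-- squarefree integers up to `Q` free of primes in `s` -/
def sq (s : Finset ℕ) (Q : ℕ) : Finset ℕ :=
  (Finset.Icc 1 Q).filter (fun q => Squarefree q ∧ ∀ p ∈ s, ¬ p ∣ q)

noncomputable def G (s : Finset ℕ) (Q : ℕ) : ℝ := ∑ q ∈ sq s Q, 1 / (Nat.totient q : ℝ)

/-- integers up to `Q` free of primes in `s` -/
def fr (s : Finset ℕ) (Q : ℕ) : Finset ℕ :=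
  (Finset.Icc 1 Q).filter (fun q => ∀ p ∈ s, ¬ p ∣ q)

noncomputable def Hs (s : Finset ℕ) (Q : ℕ) : ℝ := ∑ q ∈ fr s Q, 1 / (q : ℝ)

lemma mem_sq {s : Finset ℕ} {Q q : ℕ} :
    q ∈ sq s Q ↔ (1 ≤ q ∧ q ≤ Q) ∧ Squarefree q ∧ ∀ p ∈ s, ¬ p ∣ q := by
  simp [sq]

lemma mem_fr {s : Finset ℕ} {Q q : ℕ} :
    q ∈ fr s Q ↔ (1 ≤ q ∧ q ≤ Q) ∧ ∀ p ∈ s, ¬ p ∣ q := by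
  simp [fr]

lemma sq_dvd {s : Finset ℕ} {Q k d : ℕ} (hk : k ∈ sq s Q) (hd : d ∣ k) : d ∈ sq s Q := by
  rw [mem_sq] at *
  obtain ⟨⟨h1, h2⟩, h3, h4⟩ := hk
  exact ⟨⟨Nat.pos_of_dvd_of_pos hd h1, (Nat.le_of_dvd h1 hd).trans h2⟩, h3.squarefree_of_dvd hd,
    fun p hp h => h4 p hp (h.trans hd)⟩

lemma G_mono {s : Finset ℕ} {Q R : ℕ} (h : Q ≤ R) : G s Q ≤ G s R := by
  apply Finset.sum_le_sum_of_subset_of_nonneg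
  · intro q hq
    rw [mem_sq] at *
    exact ⟨⟨hq.1.1, hq.1.2.trans h⟩, hq.2⟩
  · intros; positivity

lemma Hs_mono {s : Finset ℕ} {Q R : ℕ} (h : Q ≤ R) : Hs s Q ≤ Hs s R := by
  apply Finset.sum_le_sum_of_subset_of_nonneg
  · intro q hq
    rw [mem_fr] at *
    exact ⟨⟨hq.1.1, hq.1.2.trans h⟩, hq.2⟩
  · intros; positivity

lemma G_step {s : Finset ℕ} {p : ℕ} (hp : p.Prime) (hps : p ∉ s) (hs : ∀ q ∈ s, q.Prime) (Q : ℕ) :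
    G s Q = G (insert p s) Q + G (insert p s) (Q / p) / ((p:ℝ) - 1) := by
  unfold G
  rw [← Finset.sum_filter_not_add_sum_filter (sq s Q) (fun q => p ∣ q)]
  congr 1
  · apply Finset.sum_congr _ (fun _ _ => rfl)
    ext q
    simp only [Finset.mem_filter, mem_sq, Finset.forall_mem_insert]
    tauto
  · rw [Finset.sum_div]
    symm
    apply Finset.sum_bij (fun q _ => p * q)
    · intro q hq
      rw [mem_sq] at hq
      obtain ⟨⟨h1, h2⟩, h3, h4⟩ := hq
      rw [Finset.forall_mem_insert] at h4
      rw [Finset.mem_filter, mem_sq]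
      refine ⟨⟨⟨Nat.mul_pos hp.pos h1, ?_⟩, ?_, ?_⟩, dvd_mul_right _ _⟩
      · calc p * q ≤ p * (Q / p) := Nat.mul_le_mul_left _ h2
          _ ≤ Q := Nat.mul_div_le _ _
      · rw [Nat.squarefree_mul ((Nat.Prime.coprime_iff_not_dvd hp).2 h4.1)]
        exact ⟨hp.prime.squarefree, h3⟩
      · intro r hr hd
        rcases (hs r hr).dvd_mul.1 hd with h | h
        · rw [Nat.prime_dvd_prime_iff_eq (hs r hr) hp] at h
          exact hps (h ▸ hr)
        · exact h4.2 r hr h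
    · intro q _ r _ h
      exact Nat.eq_of_mul_eq_mul_left hp.pos h
    · intro k hk
      rw [Finset.mem_filter, mem_sq] at hk
      obtain ⟨⟨⟨h1, h2⟩, h3, h4⟩, q, rfl⟩ := hk
      refine ⟨q, ?_, rfl⟩
      rw [mem_sq, Finset.forall_mem_insert]
      refine ⟨⟨Nat.pos_of_mul_pos_left h1, ?_⟩, h3.squarefree_of_dvd (dvd_mul_left _ _), ?_, ?_⟩
      · rw [Nat.le_div_iff_mul_le hp.pos, mul_comm]; exact h2
      · rw [← Nat.Prime.coprime_iff_not_dvd hp]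
        exact Nat.coprime_of_squarefree_mul h3
      · intro r hr h; exact h4 r hr (h.trans (dvd_mul_left _ _))
    · intro q hq
      rw [mem_sq, Finset.forall_mem_insert] at hq
      rw [Nat.totient_mul ((Nat.Prime.coprime_iff_not_dvd hp).2 hq.2.2.1), Nat.totient_prime hp]
      push_cast [hp.one_le]
      rw [div_div, mul_comm]

lemma Hs_step {s : Finset ℕ} {p : ℕ} (hp : p.Prime) (hps : p ∉ s) (hs : ∀ q ∈ s, q.Prime) (Q : ℕ) :
    Hs s Q = Hs (insert p s) Q + Hs s (Q / p) / (p:ℝ) := by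
  unfold Hs
  rw [← Finset.sum_filter_not_add_sum_filter (fr s Q) (fun q => p ∣ q)]
  congr 1
  · apply Finset.sum_congr _ (fun _ _ => rfl)
    ext q
    simp only [Finset.mem_filter, mem_fr, Finset.forall_mem_insert]
    tauto
  · rw [Finset.sum_div]
    symm
    apply Finset.sum_bij (fun q _ => p * q)
    · intro q hq
      rw [mem_fr] at hq
      obtain ⟨⟨h1, h2⟩, h4⟩ := hq
      rw [Finset.mem_filter, mem_fr]
      refine ⟨⟨⟨Nat.mul_pos hp.pos h1, ?_⟩, ?_⟩, dvd_mul_right _ _⟩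
      · calc p * q ≤ p * (Q / p) := Nat.mul_le_mul_left _ h2
          _ ≤ Q := Nat.mul_div_le _ _
      · intro r hr hd
        rcases (hs r hr).dvd_mul.1 hd with h | h
        · rw [Nat.prime_dvd_prime_iff_eq (hs r hr) hp] at h
          exact hps (h ▸ hr)
        · exact h4 r hr h
    · intro q _ r _ h
      exact Nat.eq_of_mul_eq_mul_left hp.pos h
    · intro k hk
      rw [Finset.mem_filter, mem_fr] at hk
      obtain ⟨⟨⟨h1, h2⟩, h4⟩, q, rfl⟩ := hk
      refine ⟨q, ?_, rfl⟩
      rw [mem_fr]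
      refine ⟨⟨Nat.pos_of_mul_pos_left h1, ?_⟩, ?_⟩
      · rw [Nat.le_div_iff_mul_le hp.pos, mul_comm]; exact h2
      · intro r hr h; exact h4 r hr (h.trans (dvd_mul_left _ _))
    · intro q hq
      push_cast
      rw [div_div, mul_comm]

lemma Hs_le {s : Finset ℕ} {p : ℕ} (hp : p.Prime) (hps : p ∉ s) (hs : ∀ q ∈ s, q.Prime) (Q : ℕ) :
    Hs s Q ≤ Hs (insert p s) Q + Hs (insert p s) (Q / p) / ((p:ℝ) - 1) := by
  induction Q using Nat.strong_induction_on with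
  | _ Q ih =>
    have hp2 : (2:ℝ) ≤ p := by exact_mod_cast hp.two_le
    have hnn : ∀ t R, 0 ≤ Hs t R := fun t R => Finset.sum_nonneg (by intros; positivity)
    rcases Nat.eq_zero_or_pos Q with h | h
    · subst h
      have : Hs s 0 = 0 := by simp [Hs, fr]
      rw [this]
      have := hnn (insert p s) 0
      have := hnn (insert p s) (0 / p)
      have : 0 < (p:ℝ) - 1 := by linarith
      positivity
    · rw [Hs_step hp hps hs]
      have h1 := ih (Q / p) (Nat.div_lt_self h hp.one_lt)
      have h2 : Hs (insert p s) (Q / p / p) ≤ Hs (insert p s) (Q / p) := Hs_mono (Nat.div_le_self _ _)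
      have hp1 : 0 < (p:ℝ) - 1 := by linarith
      have hp0 : 0 < (p:ℝ) := by linarith
      have : Hs s (Q / p) / (p:ℝ) ≤ Hs (insert p s) (Q / p) / ((p:ℝ) - 1) := by
        calc Hs s (Q / p) / (p:ℝ)
            ≤ (Hs (insert p s) (Q / p) + Hs (insert p s) (Q / p) / ((p:ℝ) - 1)) / p := by
              gcongr
              exact h1.trans (by gcongr)
          _ = _ := by field_simp; ring
      linarith

lemma Hs_le_G (N : ℕ) : ∀ (m : ℕ) (s : Finset ℕ), (∀ q ∈ s, q.Prime) →
    ((Finset.Icc 1 N).filter (fun p => p.Prime ∧ p ∉ s)).card = m →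
    ∀ Q ≤ N, Hs s Q ≤ G s Q := by
  intro m
  induction m with
  | zero =>
    intro s hs hc Q hQ
    rw [Finset.card_eq_zero] at hc
    have key : ∀ n ∈ fr s Q, n = 1 := by
      intro n hn
      rw [mem_fr] at hn
      by_contra h1
      have hp := Nat.minFac_prime h1
      have hmem : n.minFac ∈ (Finset.Icc 1 N).filter (fun p => p.Prime ∧ p ∉ s) := by
        rw [Finset.mem_filter, Finset.mem_Icc]
        refine ⟨⟨hp.one_le, (Nat.minFac_le hn.1.1).trans (hn.1.2.trans hQ)⟩, hp, ?_⟩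
        intro h
        exact hn.2 _ h (Nat.minFac_dvd n)
      rw [hc] at hmem
      simp at hmem
    have hsub : fr s Q ⊆ sq s Q := by
      intro n hn
      have h1 := key n hn
      rw [mem_fr] at hn
      rw [mem_sq]
      exact ⟨hn.1, by rw [h1]; exact squarefree_one, hn.2⟩
    unfold Hs G
    calc _ = ∑ q ∈ fr s Q, 1 / (Nat.totient q : ℝ) := by
          apply Finset.sum_congr rfl
          intro n hn
          rw [key n hn]; simp
      _ ≤ _ := Finset.sum_le_sum_of_subset_of_nonneg hsub (by intros; positivity)
  | succ m ih =>
    intro s hs hc Q hQ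
    have hne : ((Finset.Icc 1 N).filter (fun p => p.Prime ∧ p ∉ s)).Nonempty := by
      rw [← Finset.card_pos]; omega
    obtain ⟨p, hpm⟩ := hne
    have hpm' := hpm
    rw [Finset.mem_filter] at hpm
    obtain ⟨_, hp, hps⟩ := hpm
    have hc' : ((Finset.Icc 1 N).filter (fun q => q.Prime ∧ q ∉ insert p s)).card = m := by
      have : (Finset.Icc 1 N).filter (fun q => q.Prime ∧ q ∉ insert p s) =
          ((Finset.Icc 1 N).filter (fun q => q.Prime ∧ q ∉ s)).erase p := by
        ext q
        simp only [Finset.mem_filter, Finset.mem_erase, Finset.mem_insert]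
        tauto
      rw [this, Finset.card_erase_of_mem hpm', hc]; rfl
    have hs' : ∀ q ∈ insert p s, q.Prime := by
      intro q hq
      rcases Finset.mem_insert.1 hq with h | h
      · exact h ▸ hp
      · exact hs q h
    have hp2 : (2:ℝ) ≤ p := by exact_mod_cast hp.two_le
    have hp1 : 0 < (p:ℝ) - 1 := by linarith
    have i1 := ih _ hs' hc' Q hQ
    have i2 := ih _ hs' hc' (Q / p) ((Nat.div_le_self _ _).trans hQ)
    rw [G_step hp hps hs]
    refine (Hs_le hp hps hs Q).trans ?_
    gcongr

lemma G_le_prod (Q : ℕ) (s : Finset ℕ) (hs : ∀ q ∈ s, q.Prime) :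
    G ∅ Q ≤ (∏ p ∈ s, ((p:ℝ) / (p - 1))) * G s Q := by
  induction s using Finset.induction_on with
  | empty => simp
  | insert p s hps ih =>
    rw [Finset.forall_mem_insert] at hs
    obtain ⟨hp, hs⟩ := hs
    have hp2 : (2:ℝ) ≤ p := by exact_mod_cast hp.two_le
    have hp1 : 0 < (p:ℝ) - 1 := by linarith
    refine (ih hs).trans ?_
    rw [Finset.prod_insert hps, mul_comm ((p:ℝ) / (p - 1)), mul_assoc]
    apply mul_le_mul_of_nonneg_left
    · rw [G_step hp hps hs]
      have := G_mono (s := insert p s) (Nat.div_le_self Q p)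
      calc _ ≤ G (insert p s) Q + G (insert p s) Q / ((p:ℝ) - 1) := by gcongr
        _ = _ := by field_simp; ring
    · apply Finset.prod_nonneg
      intro q hq
      have : (2:ℝ) ≤ q := by exact_mod_cast (hs q hq).two_le
      have : 0 < (q:ℝ) - 1 := by linarith
      positivity

lemma Hs_two (n : ℕ) : Hs {2} n = ∑ m ∈ Finset.Icc 1 n, if m % 2 = 1 then 1 / (m:ℝ) else 0 := by
  unfold Hs fr
  rw [Finset.sum_filter]
  apply Finset.sum_congr rfl
  intro m _
  simp [Nat.two_dvd_ne_zero]

lemma Hs_two_lower_aux (c : ℝ) (m0 : ℕ) (hb : 1 / 2 * log (2 * m0 + 1) + c ≤ Hs {2} (2 * m0)) (m : ℕ)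
    (hm : m0 ≤ m) : 1 / 2 * log (2 * m + 1) + c ≤ Hs {2} (2 * m) := by
  induction m, hm using Nat.le_induction with
  | base => exact hb
  | succ m hm ih =>
    rw [Hs_two] at *
    rw [show 2 * (m + 1) = 2 * m + 1 + 1 by ring, Finset.sum_Icc_succ_top (by omega),
      Finset.sum_Icc_succ_top (by omega)]
    rw [if_pos (by omega), if_neg (by omega)]
    push_cast
    have h1 : log ((2 * (m:ℝ) + 1 + 1 + 1) / (2 * m + 1)) ≤ (2 * (m:ℝ) + 1 + 1 + 1) / (2 * m + 1) - 1 :=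
      log_le_sub_one_of_pos (by positivity)
    rw [log_div (by positivity) (by positivity)] at h1
    have h2 : (2 * (m:ℝ) + 1 + 1 + 1) / (2 * m + 1) - 1 = 2 * (1 / (2 * m + 1)) := by
      field_simp; ring
    have h3 : (2 * ((m:ℝ) + 1) + 1) = (2 * (m:ℝ) + 1 + 1 + 1) := by ring
    rw [h3]
    linarith

lemma Hs_two_lower (c : ℝ) (m0 : ℕ) (hb : 1 / 2 * log (2 * m0 + 1) + c ≤ Hs {2} (2 * m0)) (n : ℕ)
    (hn : 2 * m0 ≤ n + 1) : 1 / 2 * log (n + 1) + c ≤ Hs {2} n := by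
  rcases Nat.even_or_odd' n with ⟨m, rfl | rfl⟩
  · have := Hs_two_lower_aux c m0 hb m (by omega)
    push_cast; exact this
  · have h := Hs_two_lower_aux c m0 hb (m+1) (by omega)
    have e : Hs {2} (2 * (m + 1)) = Hs {2} (2 * m + 1) := by
      rw [Hs_two, Hs_two, show 2 * (m + 1) = 2 * m + 1 + 1 by ring,
        Finset.sum_Icc_succ_top (by omega), if_neg (by omega), add_zero]
    rw [← e]
    refine le_trans ?_ h
    have : log (((2 * m + 1 : ℕ) : ℝ) + 1) ≤ log (2 * ((m + 1 : ℕ) : ℝ) + 1) := by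
      apply log_le_log (by positivity)
      push_cast; linarith
    linarith

lemma G_lower (Q : ℕ) (hQ : 15 ≤ Q) : log (Q + 1) + 0.83 ≤ G ∅ Q := by
  have hstep := G_step (s := ∅) Nat.prime_two (by simp) (by simp) Q
  have hp : ∀ q ∈ insert 2 (∅ : Finset ℕ), q.Prime := by
    intro q hq
    simp at hq
    rw [hq]; exact Nat.prime_two
  have g1 := Hs_le_G Q _ _ hp rfl Q le_rfl
  have g2 := Hs_le_G Q _ _ hp rfl (Q / 2) (Nat.div_le_self _ _)
  simp only [insert_empty_eq] at *
  have l2 := log_two_lt_d9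
  have l2' := log_two_gt_d9
  have b8 : 1 / 2 * log (2 * (8:ℕ) + 1) + 0.604 ≤ Hs {2} (2 * 8) := by
    have : log (17:ℝ) ≤ 4 * log 2 + 1/16 := by
      have h : log (17 / 16 : ℝ) ≤ 17 / 16 - 1 := log_le_sub_one_of_pos (by norm_num)
      rw [log_div (by norm_num) (by norm_num), show (16:ℝ) = 2 ^ 4 by norm_num, log_pow] at h
      norm_num at h ⊢
      linarith
    rw [Hs_two]
    norm_num [Finset.sum_Icc_succ_top] at *
    linarith
  have b4 : 1 / 2 * log (2 * (4:ℕ) + 1) + 0.577 ≤ Hs {2} (2 * 4) := by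
    have l3 := log_three_lt_d9
    have : log (9:ℝ) = 2 * log 3 := by
      rw [show (9:ℝ) = 3 ^ 2 by norm_num, log_pow]; norm_num
    rw [Hs_two, show (2 * ((4:ℕ):ℝ) + 1) = 9 by norm_num, this]
    norm_num [Finset.sum_Icc_succ_top] at l3 ⊢
    linarith
  have c1 := Hs_two_lower _ 8 b8 Q (by omega)
  have c2 := Hs_two_lower _ 4 b4 (Q / 2) (by omega)
  have c3 : log ((Q:ℝ) + 1) - log 2 ≤ log (((Q / 2 : ℕ):ℝ) + 1) := by
    rw [← log_div (by positivity) (by norm_num)]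
    apply log_le_log (by positivity)
    have : Q + 1 ≤ 2 * (Q / 2 + 1) := by omega
    have : (Q:ℝ) + 1 ≤ 2 * (((Q / 2 : ℕ):ℝ) + 1) := by exact_mod_cast this
    linarith
  have e : (G {2} (Q / 2)) / (((2:ℕ):ℝ) - 1) = G {2} (Q / 2) := by norm_num
  rw [e] at hstep
  norm_num at *
  linarith

end PS


namespace PS
open Real

noncomputable def F (s : Finset ℕ) (Q d : ℕ) : ℝ :=
  ∑ k ∈ sq s Q, if d ∣ k then 1 / (Nat.totient k : ℝ) else 0

lemma F_one (s : Finset ℕ) (Q : ℕ) : F s Q 1 = G s Q := by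
  simp [F, G]

lemma F_nonneg (s : Finset ℕ) (Q d : ℕ) : 0 ≤ F s Q d := by
  apply Finset.sum_nonneg
  intros; positivity

lemma F_step (s : Finset ℕ) (Q d p : ℕ) (hp : p.Prime) : p * F s Q (p * d) ≤ F s Q d := by
  have h1 : F s Q (p * d) = ∑ k ∈ (sq s Q).filter (fun k => p * d ∣ k), 1 / (Nat.totient k : ℝ) := by
    rw [Finset.sum_filter]; rfl
  have h2 : F s Q d = ∑ k ∈ (sq s Q).filter (fun k => d ∣ k), 1 / (Nat.totient k : ℝ) := by
    rw [Finset.sum_filter]; rfl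
  rw [← Finset.sum_filter_not_add_sum_filter _ (fun q => p ∣ q)] at h2
  have h3 : F s Q (p * d) ≤ ∑ k ∈ ((sq s Q).filter (fun k => d ∣ k)).filter (fun k => p ∣ k),
      1 / (Nat.totient k : ℝ) := by
    rw [h1]
    apply Finset.sum_le_sum_of_subset_of_nonneg
    · intro k hk
      rw [Finset.mem_filter] at hk
      rw [Finset.mem_filter, Finset.mem_filter]
      exact ⟨⟨hk.1, (dvd_mul_left _ _).trans hk.2⟩, (dvd_mul_right _ _).trans hk.2⟩
    · intros; positivity
  have h4 : ((p:ℝ) - 1) * F s Q (p * d) ≤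
      ∑ k ∈ ((sq s Q).filter (fun k => d ∣ k)).filter (fun k => ¬ p ∣ k),
      1 / (Nat.totient k : ℝ) := by
    rw [h1, Finset.mul_sum]
    have inj : Set.InjOn (fun k => k / p) ((sq s Q).filter (fun k => p * d ∣ k)) := by
      intro k hk l hl h
      simp only [Finset.coe_filter, Set.mem_ofPred_eq] at hk hl
      have a := (dvd_mul_right p d).trans hk.2
      have b := (dvd_mul_right p d).trans hl.2
      simp only at h
      rw [← Nat.div_mul_cancel a, ← Nat.div_mul_cancel b, h]
    have key : ∀ k ∈ (sq s Q).filter (fun k => p * d ∣ k), ∃ e, k = p * e ∧ e ∈ sq s Q ∧ d ∣ e ∧ ¬ p ∣ e := by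
      intro k hk
      rw [Finset.mem_filter] at hk
      obtain ⟨hk, c, hc⟩ := hk
      refine ⟨d * c, by rw [hc]; ring, ?_, dvd_mul_right _ _, ?_⟩
      · apply sq_dvd hk
        rw [hc, mul_assoc]; exact dvd_mul_left _ _
      · rw [← Nat.Prime.coprime_iff_not_dvd hp]
        apply Nat.coprime_of_squarefree_mul
        rw [← mul_assoc, ← hc]
        exact (mem_sq.1 hk).2.1
    calc ∑ k ∈ (sq s Q).filter (fun k => p * d ∣ k), ((p:ℝ) - 1) * (1 / (Nat.totient k : ℝ))
        = ∑ k ∈ (sq s Q).filter (fun k => p * d ∣ k), 1 / (Nat.totient (k / p) : ℝ) := by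
          apply Finset.sum_congr rfl
          intro k hk
          obtain ⟨e, rfl, he, -, hpe⟩ := key k hk
          rw [Nat.mul_div_cancel_left _ hp.pos,
            Nat.totient_mul ((Nat.Prime.coprime_iff_not_dvd hp).2 hpe), Nat.totient_prime hp]
          have hp2 : (2:ℝ) ≤ p := by exact_mod_cast hp.two_le
          have hp1 : 0 < (p:ℝ) - 1 := by linarith
          have : (0:ℝ) < Nat.totient e := by
            exact_mod_cast Nat.totient_pos.2 (mem_sq.1 he).1.1
          push_cast [hp.one_le]
          field_simp
      _ = ∑ k ∈ ((sq s Q).filter (fun k => p * d ∣ k)).image (fun k => k / p), 1 / (Nat.totient k : ℝ) := by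
          rw [Finset.sum_image inj]
      _ ≤ _ := by
          apply Finset.sum_le_sum_of_subset_of_nonneg
          · intro m hm
            rw [Finset.mem_image] at hm
            obtain ⟨k, hk, rfl⟩ := hm
            obtain ⟨e, rfl, he, hd, hpe⟩ := key k hk
            simp only [Nat.mul_div_cancel_left _ hp.pos]
            rw [Finset.mem_filter, Finset.mem_filter]
            exact ⟨⟨he, hd⟩, hpe⟩
          · intros; positivity
  linarith

lemma F_le (s : Finset ℕ) (Q d : ℕ) : d * F s Q d ≤ G s Q := by
  induction d using induction_on_primes with
  | zero => simp; exact Finset.sum_nonneg (by intros; positivity)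
  | one => simp [F_one]
  | prime_mul p a hp ih =>
    have h1 := F_step s Q a p hp
    have : (0:ℝ) ≤ a := by positivity
    push_cast
    nlinarith

noncomputable def lam (s : Finset ℕ) (Q d : ℕ) : ℝ :=
  (ArithmeticFunction.moebius d : ℝ) * d * F s Q d / G s Q

lemma G_pos (s : Finset ℕ) (Q : ℕ) (hQ : 1 ≤ Q) (hs : ∀ q ∈ s, q.Prime) : 0 < G s Q := by
  apply Finset.sum_pos'
  · intros; positivity
  · refine ⟨1, ?_, by simp⟩
    rw [mem_sq]
    refine ⟨⟨le_rfl, hQ⟩, squarefree_one, ?_⟩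
    intro p hp h
    exact (hs p hp).one_lt.ne' (Nat.dvd_one.1 h)

lemma lam_abs (s : Finset ℕ) (Q d : ℕ) (hQ : 1 ≤ Q) (hs : ∀ q ∈ s, q.Prime) : |lam s Q d| ≤ 1 := by
  have hG := G_pos s Q hQ hs
  have hm : |(ArithmeticFunction.moebius d : ℝ)| ≤ 1 := by
    exact_mod_cast ArithmeticFunction.abs_moebius_le_one
  unfold lam
  rw [abs_div, abs_of_pos hG, div_le_one hG, mul_assoc, abs_mul,
    abs_of_nonneg (mul_nonneg (Nat.cast_nonneg d) (F_nonneg s Q d))]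
  have := F_le s Q d
  have h0 := mul_nonneg (Nat.cast_nonneg (α := ℝ) d) (F_nonneg s Q d)
  nlinarith

lemma lam_one (s : Finset ℕ) (Q : ℕ) (hQ : 1 ≤ Q) (hs : ∀ q ∈ s, q.Prime) : lam s Q 1 = 1 := by
  have hG := G_pos s Q hQ hs
  simp [lam, F_one, hG.ne']

lemma moebius_between (m k : ℕ) (hm : Squarefree m) (hk : k ∣ m) :
    ∑ d ∈ m.divisors, (if k ∣ d then (ArithmeticFunction.moebius d : ℝ) else 0) =
      if m = k then (ArithmeticFunction.moebius k : ℝ) else 0 := by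
  obtain ⟨c, rfl⟩ := hk
  have hm0 : k * c ≠ 0 := hm.ne_zero
  have hk0 : k ≠ 0 := left_ne_zero_of_mul hm0
  have hc0 : c ≠ 0 := right_ne_zero_of_mul hm0
  rw [← Finset.sum_filter]
  have e : ((k * c).divisors).filter (fun d => k ∣ d) = c.divisors.image (fun e => k * e) := by
    ext d
    simp only [Finset.mem_filter, Nat.mem_divisors, Finset.mem_image]
    constructor
    · rintro ⟨⟨h1, h2⟩, e, rfl⟩
      exact ⟨e, ⟨Nat.dvd_of_mul_dvd_mul_left (Nat.pos_of_ne_zero hk0) h1, hc0⟩, rfl⟩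
    · rintro ⟨e, ⟨h1, h2⟩, rfl⟩
      exact ⟨⟨mul_dvd_mul_left _ h1, hm0⟩, dvd_mul_right _ _⟩
  rw [e, Finset.sum_image (by
    intro x _ y _ h; exact Nat.eq_of_mul_eq_mul_left (Nat.pos_of_ne_zero hk0) h)]
  have e2 : ∀ x ∈ c.divisors, (ArithmeticFunction.moebius (k * x) : ℝ) =
      ArithmeticFunction.moebius k * ArithmeticFunction.moebius x := by
    intro x hx
    have hx' := Nat.dvd_of_mem_divisors hx
    have hcop : Nat.Coprime k x :=
      (Nat.coprime_of_squarefree_mul hm).coprime_dvd_right hx'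
    rw [ArithmeticFunction.isMultiplicative_moebius.map_mul_of_coprime hcop]
    push_cast; rfl
  rw [Finset.sum_congr rfl e2, ← Finset.mul_sum]
  have e3 : ∑ x ∈ c.divisors, (ArithmeticFunction.moebius x : ℝ) = if c = 1 then 1 else 0 := by
    have h := ArithmeticFunction.coe_mul_zeta_apply (f := ArithmeticFunction.moebius) (x := c)
    rw [ArithmeticFunction.moebius_mul_coe_zeta, ArithmeticFunction.one_apply] at h
    exact_mod_cast h.symm
  rw [e3]
  by_cases h : c = 1
  · simp [h]
  · have : k * c ≠ k := by
      intro h'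
      exact h (Nat.eq_of_mul_eq_mul_left (Nat.pos_of_ne_zero hk0) (by rw [h', mul_one]))
    simp [h, this]

lemma y_eq (s : Finset ℕ) (Q k : ℕ) (hk : k ∈ sq s Q) :
    ∑ d ∈ sq s Q, (if k ∣ d then lam s Q d / d else 0) =
      ArithmeticFunction.moebius k / (Nat.totient k * G s Q) := by
  have h1 : ∀ d ∈ sq s Q, (if k ∣ d then lam s Q d / d else 0) =
      ∑ m ∈ sq s Q, (1 / (Nat.totient m * G s Q)) *
        (if d ∣ m then (if k ∣ d then (ArithmeticFunction.moebius d : ℝ) else 0) else 0) := by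
    intro d hd
    have hd0 : (d:ℝ) ≠ 0 := by
      have := (mem_sq.1 hd).1.1
      positivity
    by_cases hkd : k ∣ d
    · simp only [if_pos hkd]
      unfold lam F
      rw [mul_div_assoc, mul_assoc, mul_div_assoc, mul_div_cancel_left₀ _ hd0, Finset.sum_div, Finset.mul_sum]
      apply Finset.sum_congr rfl
      intro m _
      split_ifs
      · rw [div_div]; ring
      · simp
    · simp [hkd]
  rw [Finset.sum_congr rfl h1, Finset.sum_comm]
  have h2 : ∀ m ∈ sq s Q, ∑ d ∈ sq s Q, (1 / (Nat.totient m * G s Q)) *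
        (if d ∣ m then (if k ∣ d then (ArithmeticFunction.moebius d : ℝ) else 0) else 0) =
        if m = k then ArithmeticFunction.moebius k / (Nat.totient k * G s Q) else 0 := by
    intro m hm
    rw [← Finset.mul_sum, ← Finset.sum_filter]
    have e : (sq s Q).filter (fun d => d ∣ m) = m.divisors := by
      ext d
      rw [Finset.mem_filter, Nat.mem_divisors]
      constructor
      · rintro ⟨a, b⟩; exact ⟨b, (mem_sq.1 hm).2.1.ne_zero⟩
      · rintro ⟨a, b⟩; exact ⟨sq_dvd hm a, a⟩
    rw [e]
    by_cases hkm : k ∣ m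
    · rw [moebius_between m k (mem_sq.1 hm).2.1 hkm]
      split_ifs with h
      · rw [h]; ring
      · simp
    · have : m ≠ k := by rintro rfl; exact hkm dvd_rfl
      rw [if_neg this]
      rw [Finset.sum_eq_zero, mul_zero]
      intro d hd
      rw [if_neg]
      intro h
      exact hkm (h.trans (Nat.dvd_of_mem_divisors hd))
  rw [Finset.sum_congr rfl h2, Finset.sum_ite_eq' , if_pos hk]

lemma quad_eq (s : Finset ℕ) (Q : ℕ) (hQ : 1 ≤ Q) (hs : ∀ q ∈ s, q.Prime) :
    ∑ d ∈ sq s Q, ∑ e ∈ sq s Q, lam s Q d * lam s Q e / (Nat.lcm d e : ℝ) = 1 / G s Q := by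
  have hG := G_pos s Q hQ hs
  have h1 : ∀ d ∈ sq s Q, ∀ e ∈ sq s Q, lam s Q d * lam s Q e / (Nat.lcm d e : ℝ) =
      ∑ k ∈ sq s Q, (Nat.totient k : ℝ) * ((if k ∣ d then lam s Q d / d else 0) *
        (if k ∣ e then lam s Q e / e else 0)) := by
    intro d hd e he
    have hd0 : (d:ℝ) ≠ 0 := by
      have := (mem_sq.1 hd).1.1
      positivity
    have he0 : (e:ℝ) ≠ 0 := by
      have := (mem_sq.1 he).1.1
      positivity
    have hg : (Nat.gcd d e : ℝ) * Nat.lcm d e = d * e := by exact_mod_cast Nat.gcd_mul_lcm d e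
    have hl0 : (Nat.lcm d e : ℝ) ≠ 0 := by
      intro h; rw [h, mul_zero] at hg
      exact mul_ne_zero hd0 he0 hg.symm
    have hgs : (Nat.gcd d e : ℝ) = ∑ k ∈ sq s Q, if k ∣ d ∧ k ∣ e then (Nat.totient k : ℝ) else 0 := by
      rw [← Finset.sum_filter]
      conv_lhs => rw [← Nat.sum_totient (Nat.gcd d e)]
      push_cast
      apply Finset.sum_congr _ (fun _ _ => rfl)
      ext k
      rw [Nat.mem_divisors, Finset.mem_filter, Nat.dvd_gcd_iff]
      constructor
      · rintro ⟨a, b⟩; exact ⟨sq_dvd hd a.1, a⟩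
      · rintro ⟨a, b⟩; exact ⟨b, Nat.gcd_ne_zero_left (by exact_mod_cast hd0)⟩
    have : lam s Q d * lam s Q e / (Nat.lcm d e : ℝ) = (Nat.gcd d e : ℝ) * (lam s Q d / d * (lam s Q e / e)) := by
      field_simp
      rw [mul_assoc, mul_assoc, mul_assoc]
      linear_combination -(lam s Q d * lam s Q e) * hg
    rw [this, hgs, Finset.sum_mul]
    apply Finset.sum_congr rfl
    intro k _
    by_cases a : k ∣ d <;> by_cases b : k ∣ e <;> simp [a, b]
  rw [Finset.sum_congr rfl (fun d hd => Finset.sum_congr rfl (h1 d hd))]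
  have h2 : ∑ d ∈ sq s Q, ∑ e ∈ sq s Q, ∑ k ∈ sq s Q, (Nat.totient k : ℝ) *
      ((if k ∣ d then lam s Q d / d else 0) * (if k ∣ e then lam s Q e / e else 0)) =
      ∑ k ∈ sq s Q, (Nat.totient k : ℝ) * (∑ d ∈ sq s Q, if k ∣ d then lam s Q d / d else 0) ^ 2 := by
    rw [Finset.sum_congr rfl (fun d _ => Finset.sum_comm), Finset.sum_comm]
    apply Finset.sum_congr rfl
    intro k _
    rw [pow_two, Finset.sum_mul_sum, Finset.mul_sum]
    apply Finset.sum_congr rfl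
    intro d _
    rw [Finset.mul_sum]
  rw [h2]
  have h3 : ∀ k ∈ sq s Q, (Nat.totient k : ℝ) * (∑ d ∈ sq s Q, if k ∣ d then lam s Q d / d else 0) ^ 2
      = (1 / (Nat.totient k : ℝ)) / (G s Q) ^ 2 := by
    intro k hk
    rw [y_eq s Q k hk]
    have hmu : (ArithmeticFunction.moebius k : ℝ) ^ 2 = 1 := by
      have := ArithmeticFunction.moebius_sq_eq_one_of_squarefree (mem_sq.1 hk).2.1
      exact_mod_cast this
    have hk0 : (0:ℝ) < Nat.totient k := by exact_mod_cast Nat.totient_pos.2 (mem_sq.1 hk).1.1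
    rw [div_pow, hmu]
    field_simp
  rw [Finset.sum_congr rfl h3, ← Finset.sum_div]
  change G s Q / G s Q ^ 2 = _
  field_simp

end PS


namespace PS
open Real

lemma count_class (a l r : ℕ) (hl : 1 ≤ l) (h : Nat.Coprime a l) (Y : ℝ) (hY : 0 ≤ Y) :
    |(((Finset.range (⌊Y⌋₊ + 1)).filter (fun u => l ∣ a * u + r)).card : ℝ) - Y / l| ≤ 1 := by
  haveI : NeZero l := ⟨by omega⟩
  have hl0 : (0:ℝ) < l := by exact_mod_cast hl
  obtain ⟨v, hv⟩ : ∃ v : ℕ, ∀ u : ℕ, l ∣ a * u + r ↔ u ≡ v [MOD l] := by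
    refine ⟨(-(r : ZMod l) * (a : ZMod l)⁻¹).val, fun u => ?_⟩
    have ha : (a : ZMod l) * (a : ZMod l)⁻¹ = 1 := ZMod.coe_mul_inv_eq_one a h
    rw [← ZMod.natCast_eq_natCast_iff, ← ZMod.natCast_eq_zero_iff, ZMod.natCast_zmod_val]
    push_cast
    constructor
    · intro e
      linear_combination (a : ZMod l)⁻¹ * e - (u : ZMod l) * ha
    · intro e
      rw [e]
      linear_combination (-(r : ZMod l)) * ha
  have hc : ((Finset.range (⌊Y⌋₊ + 1)).filter (fun u => l ∣ a * u + r)).card =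
      (⌊Y⌋₊ + 1) / l + if v % l < (⌊Y⌋₊ + 1) % l then 1 else 0 := by
    rw [← Nat.count_modEq_card _ (by omega), Nat.count_eq_card_filter_range]
    congr 1
    apply Finset.filter_congr
    intro u _
    exact hv u
  rw [hc]
  set N := ⌊Y⌋₊
  have h1 : (N:ℝ) ≤ Y := Nat.floor_le hY
  have h2 : Y < N + 1 := Nat.lt_floor_add_one Y
  have h3 := Nat.div_add_mod (N + 1) l
  have h4 := Nat.mod_lt (N + 1) (by omega : 0 < l)
  set q := (N + 1) / l
  set t := (N + 1) % l
  have h3' : (l:ℝ) * q + t = N + 1 := by exact_mod_cast h3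
  have h4' : (t:ℝ) + 1 ≤ l := by exact_mod_cast h4
  rw [abs_le]
  have h5 : (q:ℝ) = (N + 1 - t) / l := by field_simp; linarith
  have ht0 : (0:ℝ) ≤ t := by positivity
  have hl1 : (1:ℝ) ≤ l := by exact_mod_cast hl
  split_ifs with hh
  · have ht1 : (1:ℝ) ≤ t := by
      have : 1 ≤ t := by omega
      exact_mod_cast this
    push_cast
    constructor
    · rw [le_sub_iff_add_le, ← le_sub_iff_add_le', div_le_iff₀ hl0]
      nlinarith
    · rw [sub_le_iff_le_add, ← sub_le_iff_le_add', le_div_iff₀ hl0]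
      nlinarith
  · push_cast
    constructor
    · rw [le_sub_iff_add_le, ← le_sub_iff_add_le', div_le_iff₀ hl0]
      nlinarith
    · rw [sub_le_iff_le_add, ← sub_le_iff_le_add', le_div_iff₀ hl0]
      nlinarith

lemma sieve_row (a r Q : ℕ) (ha : 1 ≤ a) (hQ : 1 ≤ Q) (hr : Q < r) (Y : ℝ) (hY : 0 ≤ Y) :
    (((Finset.range (⌊Y⌋₊ + 1)).filter (fun u => (a * u + r).Prime)).card : ℝ) ≤
      Y / G a.primeFactors Q + ((sq a.primeFactors Q).card : ℝ) ^ 2 := by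
  set s := a.primeFactors with hsdef
  have hs : ∀ q ∈ s, q.Prime := fun q hq => Nat.prime_of_mem_primeFactors hq
  set D := sq s Q with hD
  set U := Finset.range (⌊Y⌋₊ + 1) with hU
  have hcop : ∀ d ∈ D, Nat.Coprime a d := by
    intro d hd
    apply Nat.Coprime.symm
    apply Nat.Coprime.symm
    by_contra hne
    obtain ⟨p, hp, hpa, hpd⟩ := Nat.Prime.not_coprime_iff_dvd.1 hne
    exact (mem_sq.1 hd).2.2 p (Nat.mem_primeFactors.2 ⟨hp, hpa, by omega⟩) hpd
  have h1mem : 1 ∈ D := by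
    rw [mem_sq]
    exact ⟨⟨le_rfl, hQ⟩, squarefree_one, fun p hp h => (hs p hp).one_lt.ne' (Nat.dvd_one.1 h)⟩
  have step1 : ((U.filter (fun u => (a * u + r).Prime)).card : ℝ) ≤
      ∑ u ∈ U, (∑ d ∈ D, if d ∣ a * u + r then lam s Q d else 0) ^ 2 := by
    rw [Finset.card_filter]
    push_cast
    apply Finset.sum_le_sum
    intro u _
    split_ifs with hp
    · have : ∑ d ∈ D, (if d ∣ a * u + r then lam s Q d else 0) = 1 := by
        rw [Finset.sum_eq_single 1]
        · simp [lam_one s Q hQ hs]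
        · intro d hd hd1
          rw [if_neg]
          intro h
          rcases (Nat.dvd_prime hp).1 h with h | h
          · exact hd1 h
          · have := (mem_sq.1 hd).1.2
            have : r ≤ a * u + r := Nat.le_add_left _ _
            omega
        · intro h; exact absurd h1mem h
      rw [this]; norm_num
    · positivity
  have step2 : ∑ u ∈ U, (∑ d ∈ D, if d ∣ a * u + r then lam s Q d else 0) ^ 2 =
      ∑ d ∈ D, ∑ e ∈ D, lam s Q d * lam s Q e *
        ((U.filter (fun u => Nat.lcm d e ∣ a * u + r)).card : ℝ) := by
    have : ∀ u ∈ U, (∑ d ∈ D, if d ∣ a * u + r then lam s Q d else 0) ^ 2 =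
        ∑ d ∈ D, ∑ e ∈ D, lam s Q d * lam s Q e * (if Nat.lcm d e ∣ a * u + r then 1 else 0) := by
      intro u _
      rw [pow_two, Finset.sum_mul_sum]
      apply Finset.sum_congr rfl; intro d _
      apply Finset.sum_congr rfl; intro e _
      have hiff : Nat.lcm d e ∣ a * u + r ↔ d ∣ a * u + r ∧ e ∣ a * u + r := Nat.lcm_dvd_iff
      by_cases x : d ∣ a * u + r <;> by_cases y : e ∣ a * u + r <;> simp [x, y, hiff]
    rw [Finset.sum_congr rfl this, Finset.sum_comm]
    apply Finset.sum_congr rfl; intro d _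
    rw [Finset.sum_comm]
    apply Finset.sum_congr rfl; intro e _
    rw [← Finset.mul_sum, Finset.card_filter]
    push_cast; rfl
  have step3 : ∑ d ∈ D, ∑ e ∈ D, lam s Q d * lam s Q e *
        ((U.filter (fun u => Nat.lcm d e ∣ a * u + r)).card : ℝ) ≤
      ∑ d ∈ D, ∑ e ∈ D, (Y * (lam s Q d * lam s Q e / (Nat.lcm d e : ℝ)) + 1) := by
    apply Finset.sum_le_sum; intro d hd
    apply Finset.sum_le_sum; intro e he
    have hl : 1 ≤ Nat.lcm d e := Nat.lcm_pos (mem_sq.1 hd).1.1 (mem_sq.1 he).1.1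
    have hc : Nat.Coprime a (Nat.lcm d e) :=
      Nat.Coprime.coprime_dvd_right (Nat.lcm_dvd_mul d e) ((hcop d hd).mul_right (hcop e he))
    have hcount := count_class a (Nat.lcm d e) r hl hc Y hY
    have hll : |lam s Q d * lam s Q e| ≤ 1 := by
      rw [abs_mul]
      exact mul_le_one₀ (lam_abs s Q d hQ hs) (abs_nonneg _) (lam_abs s Q e hQ hs)
    have : |lam s Q d * lam s Q e * ((((Finset.range (⌊Y⌋₊ + 1)).filter (fun u => Nat.lcm d e ∣ a * u + r)).card : ℝ) - Y / Nat.lcm d e)| ≤ 1 := by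
      rw [abs_mul]
      exact mul_le_one₀ hll (abs_nonneg _) hcount
    have := (abs_le.1 this).2
    have e1 : Y * (lam s Q d * lam s Q e / (Nat.lcm d e : ℝ)) = lam s Q d * lam s Q e * (Y / Nat.lcm d e) := by
      ring
    rw [e1]
    rw [mul_sub] at this
    linarith
  have step4 : ∑ d ∈ D, ∑ e ∈ D, (Y * (lam s Q d * lam s Q e / (Nat.lcm d e : ℝ)) + 1) =
      Y / G s Q + (D.card : ℝ) ^ 2 := by
    simp_rw [Finset.sum_add_distrib, ← Finset.mul_sum]
    rw [hD, quad_eq s Q hQ hs]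
    simp
    ring
  linarith

lemma sq_card (s : Finset ℕ) (Q : ℕ) : (sq s Q).card ≤ Q - Q / 4 := by
  have h : (sq s Q) ⊆ (Finset.Ioc 0 Q) \ ((Finset.Ioc 0 Q).filter (fun n => 4 ∣ n)) := by
    intro q hq
    rw [mem_sq] at hq
    rw [Finset.mem_sdiff, Finset.mem_filter, Finset.mem_Ioc]
    refine ⟨⟨hq.1.1, hq.1.2⟩, fun h => ?_⟩
    have := hq.2.1 2 h.2
    simp at this
  refine (Finset.card_le_card h).trans ?_
  rw [Finset.card_sdiff_of_subset (Finset.filter_subset _ _), Nat.Ioc_filter_dvd_card_eq_div]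
  simp

end PS


namespace PS
open Real

lemma tri_sum (y : ℝ) (hy : 0 ≤ y) :
    |∑ m ∈ Finset.Icc 1 ⌊y⌋₊, (y - m) - y ^ 2 / 2 + y / 4| ≤ y / 4 := by
  have h : ∀ M : ℕ, ∑ m ∈ Finset.Icc 1 M, (y - (m:ℝ)) = M * y - M * (M + 1) / 2 := by
    intro M
    induction M with
    | zero => simp
    | succ n ih =>
      rw [Finset.sum_Icc_succ_top (by omega), ih]; push_cast; ring
  rw [h]
  have h1 := Nat.floor_le hy
  have h2 := Nat.lt_floor_add_one y
  set M : ℝ := (⌊y⌋₊ : ℝ)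
  have hM : 0 ≤ M := by positivity
  rw [abs_le]
  constructor <;> nlinarith

lemma mult_sum (d : ℕ) (hd : 1 ≤ d) (V : ℝ) (hV : 0 ≤ V) :
    |∑ v ∈ (Finset.Icc 1 ⌊V⌋₊).filter (fun v => d ∣ v), (V - v) - V ^ 2 / 2 * (1 / d) + V / 4| ≤ V / 4 := by
  have hd' : (0:ℝ) < d := by exact_mod_cast hd
  have key : ∑ v ∈ (Finset.Icc 1 ⌊V⌋₊).filter (fun v => d ∣ v), (V - (v:ℝ)) =
      d * ∑ m ∈ Finset.Icc 1 ⌊V / d⌋₊, (V / d - m) := by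
    rw [Finset.mul_sum]
    symm
    apply Finset.sum_bij (fun m _ => d * m)
    · intro m hm
      rw [Finset.mem_Icc] at hm
      have h1 := (Nat.le_floor_iff (by positivity : 0 ≤ V / d)).1 hm.2
      rw [le_div_iff₀ hd'] at h1
      rw [Finset.mem_filter, Finset.mem_Icc]
      refine ⟨⟨Nat.mul_pos hd hm.1, Nat.le_floor ?_⟩, dvd_mul_right _ _⟩
      push_cast; linarith
    · intro x _ y _ h
      exact Nat.eq_of_mul_eq_mul_left hd h
    · intro v hv
      rw [Finset.mem_filter, Finset.mem_Icc] at hv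
      obtain ⟨⟨h1, h2⟩, m, rfl⟩ := hv
      refine ⟨m, ?_, rfl⟩
      rw [Finset.mem_Icc]
      refine ⟨Nat.pos_of_mul_pos_left h1, Nat.le_floor ?_⟩
      rw [le_div_iff₀ hd']
      have := (Nat.le_floor_iff hV).1 h2
      push_cast at this; linarith
    · intro m _
      push_cast
      field_simp
  have h := tri_sum (V / d) (by positivity)
  rw [key]
  set A := ∑ m ∈ Finset.Icc 1 ⌊V / d⌋₊, (V / d - (m:ℝ))
  have e : d * A - V ^ 2 / 2 * (1 / d) + V / 4 = d * (A - (V / d) ^ 2 / 2 + V / d / 4) := by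
    field_simp
  rw [e, abs_mul, abs_of_pos hd']
  calc _ ≤ d * (V / d / 4) := mul_le_mul_of_nonneg_left h hd'.le
    _ = V / 4 := by field_simp

lemma prod_dvd_iff' (t : Finset ℕ) (ht : ∀ p ∈ t, p.Prime) (v : ℕ) :
    ∏ p ∈ t, p ∣ v ↔ ∀ p ∈ t, p ∣ v := by
  constructor
  · intro h p hp; exact (Finset.dvd_prod_of_mem _ hp).trans h
  · intro h
    exact Finset.prod_primes_dvd v (fun p hp => (ht p hp).prime) h

lemma coprime_sum (a : ℕ) (ha : 1 < a) (V : ℝ) (hV : 0 ≤ V) :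
    ∑ v ∈ (Finset.Icc 1 ⌊V⌋₊).filter (fun v => Nat.Coprime v a), (V - v) ≤
      V ^ 2 / 2 * ∏ p ∈ a.primeFactors, (1 - 1 / (p:ℝ)) + 2 ^ a.primeFactors.card * (V / 4) := by
  set P := a.primeFactors with hP
  have hPp : ∀ p ∈ P, p.Prime := fun q hq => Nat.prime_of_mem_primeFactors hq
  have ind : ∀ v : ℕ, (if Nat.Coprime v a then (1:ℝ) else 0) =
      ∑ t ∈ P.powerset, (-1) ^ t.card * (if ∏ p ∈ t, p ∣ v then (1:ℝ) else 0) := by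
    intro v
    have h1 : (if Nat.Coprime v a then (1:ℝ) else 0) =
        ∏ p ∈ P, (1 + -(if p ∣ v then (1:ℝ) else 0)) := by
      split_ifs with h
      · symm
        apply Finset.prod_eq_one
        intro p hp
        rw [if_neg]; · simp
        intro hpv
        have := Nat.dvd_gcd hpv (Nat.dvd_of_mem_primeFactors hp)
        rw [h] at this
        exact (hPp p hp).one_lt.ne' (Nat.dvd_one.1 this)
      · obtain ⟨p, hp, hpv, hpa⟩ := Nat.Prime.not_coprime_iff_dvd.1 h
        symm
        apply Finset.prod_eq_zero (i := p) (Nat.mem_primeFactors.2 ⟨hp, hpa, by omega⟩)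
        simp [hpv]
    rw [h1, Finset.prod_one_add]
    apply Finset.sum_congr rfl
    intro t ht
    rw [Finset.prod_neg]
    congr 1
    have htp : ∀ p ∈ t, p.Prime := fun p hp => hPp p (Finset.mem_powerset.1 ht hp)
    split_ifs with h
    · apply Finset.prod_eq_one
      intro p hp
      rw [if_pos ((prod_dvd_iff' t htp v).1 h p hp)]
    · rw [prod_dvd_iff' t htp v] at h
      push Not at h
      obtain ⟨p, hp, hpv⟩ := h
      apply Finset.prod_eq_zero hp
      rw [if_neg hpv]
  have e1 : ∑ v ∈ (Finset.Icc 1 ⌊V⌋₊).filter (fun v => Nat.Coprime v a), (V - (v:ℝ)) =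
      ∑ t ∈ P.powerset, (-1) ^ t.card *
        ∑ v ∈ (Finset.Icc 1 ⌊V⌋₊).filter (fun v => ∏ p ∈ t, p ∣ v), (V - (v:ℝ)) := by
    rw [Finset.sum_filter]
    have : ∀ v ∈ Finset.Icc 1 ⌊V⌋₊, (if Nat.Coprime v a then V - (v:ℝ) else 0) =
        ∑ t ∈ P.powerset, (-1) ^ t.card * (if ∏ p ∈ t, p ∣ v then V - (v:ℝ) else 0) := by
      intro v _
      have h1 : (if Nat.Coprime v a then V - (v:ℝ) else 0) = (if Nat.Coprime v a then (1:ℝ) else 0) * (V - v) := by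
        split_ifs <;> simp
      rw [h1, ind v, Finset.sum_mul]
      apply Finset.sum_congr rfl
      intro t _
      split_ifs <;> simp
    rw [Finset.sum_congr rfl this, Finset.sum_comm]
    apply Finset.sum_congr rfl
    intro t _
    rw [Finset.sum_filter, Finset.mul_sum]
  have e2 : ∏ p ∈ P, (1 - 1 / (p:ℝ)) = ∑ t ∈ P.powerset, (-1) ^ t.card * (1 / ((∏ p ∈ t, p : ℕ) : ℝ)) := by
    have : ∀ p ∈ P, (1 - 1 / (p:ℝ)) = 1 + -(1 / (p:ℝ)) := by intros; ring
    rw [Finset.prod_congr rfl this, Finset.prod_one_add]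
    apply Finset.sum_congr rfl
    intro t _
    rw [Finset.prod_neg]
    congr 1
    push_cast
    simp
  have hne : P.Nonempty := Nat.nonempty_primeFactors.2 ha
  have e3 : ∑ t ∈ P.powerset, (-1:ℝ) ^ t.card = 0 := by
    have := Finset.sum_powerset_neg_one_pow_card_of_nonempty hne
    exact_mod_cast congrArg (Int.cast : ℤ → ℝ) this
  have e4 : ∑ t ∈ P.powerset, (V / 4) = 2 ^ P.card * (V / 4) := by
    rw [Finset.sum_const, Finset.card_powerset]; simp
  have : ∑ t ∈ P.powerset, (-1) ^ t.card *
        ∑ v ∈ (Finset.Icc 1 ⌊V⌋₊).filter (fun v => ∏ p ∈ t, p ∣ v), (V - (v:ℝ)) ≤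
      ∑ t ∈ P.powerset, (V ^ 2 / 2 * ((-1) ^ t.card * (1 / ((∏ p ∈ t, p : ℕ) : ℝ))) - (V / 4) * (-1) ^ t.card + V / 4) := by
    apply Finset.sum_le_sum
    intro t ht
    have hd : 1 ≤ ∏ p ∈ t, p := Finset.prod_pos (fun p hp => (hPp p (Finset.mem_powerset.1 ht hp)).pos)
    have hm := abs_le.1 (mult_sum _ hd V hV)
    rcases neg_one_pow_eq_or ℝ t.card with h | h <;> rw [h] <;> linarith [hm.1, hm.2]
  rw [e1]
  refine this.trans (le_of_eq ?_)
  rw [Finset.sum_add_distrib, Finset.sum_sub_distrib, ← Finset.mul_sum, ← Finset.mul_sum, e3, ← e2, e4]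
  ring

lemma h_bound (a : ℕ) (ha : 1 ≤ a) :
    (∏ p ∈ a.primeFactors, (2 * (p:ℝ) / (p - 1))) ^ 3 ≤ 1634 * a := by
  set P := a.primeFactors with hP
  have hPp : ∀ p ∈ P, p.Prime := fun q hq => Nat.prime_of_mem_primeFactors hq
  let w : ℕ → ℝ := fun p => if p = 2 then 32 else if p = 3 then 9 else if p = 5 then 3.125 else
    if p = 7 then 1.8149 else 1
  have hw1 : ∀ p, 1 ≤ w p := by
    intro p; simp only [w]; split_ifs <;> norm_num
  have h1 : ∀ p ∈ P, (2 * (p:ℝ) / (p - 1)) ^ 3 ≤ w p * p := by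
    intro p hp
    have hpp := hPp p hp
    simp only [w]
    split_ifs with c1 c2 c3 c4
    · subst c1; norm_num
    · subst c2; norm_num
    · subst c3; norm_num
    · subst c4; norm_num
    · have h11 : 11 ≤ p := by
        by_contra hlt
        push Not at hlt
        interval_cases p <;> revert hpp <;> simp_all (decide := true)
      have h11' : (11:ℝ) ≤ p := by exact_mod_cast h11
      have hr : 2 * (p:ℝ) / (p - 1) ≤ 2.2 := by
        rw [div_le_iff₀ (by linarith)]; linarith
      calc _ ≤ (2.2:ℝ) ^ 3 := by
            apply pow_le_pow_left₀ _ hr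
            apply div_nonneg <;> linarith
        _ ≤ 1 * p := by norm_num; linarith
  have h2 : ∏ p ∈ P, w p ≤ 1634 := by
    have : ∏ p ∈ P, w p ≤ ∏ p ∈ ({2,3,5,7} : Finset ℕ), w p := by
      have e : ∏ p ∈ P, w p = ∏ p ∈ P ∩ {2,3,5,7}, w p := by
        symm
        apply Finset.prod_subset Finset.inter_subset_left
        intro p hp hp'
        simp only [Finset.mem_inter, Finset.mem_insert, Finset.mem_singleton, not_and, not_or] at hp'
        have := hp' hp
        simp [w, this]
      rw [e]
      apply Finset.prod_le_prod_of_subset_of_one_le Finset.inter_subset_right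
      · intro p _; linarith [hw1 p]
      · intro p _ _; exact hw1 p
    refine this.trans ?_
    norm_num [w]
  have h3 : ((∏ p ∈ P, p : ℕ) : ℝ) ≤ a := by
    exact_mod_cast Nat.le_of_dvd ha (Nat.prod_primeFactors_dvd a)
  rw [← Finset.prod_pow]
  calc _ ≤ ∏ p ∈ P, (w p * p) := by
        apply Finset.prod_le_prod _ h1
        intro p hp
        have : (2:ℝ) ≤ p := by exact_mod_cast (hPp p hp).two_le
        apply pow_nonneg
        apply div_nonneg <;> linarith
    _ = (∏ p ∈ P, w p) * ((∏ p ∈ P, p : ℕ) : ℝ) := by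
        rw [Finset.prod_mul_distrib]; push_cast; rfl
    _ ≤ 1634 * a := by
        apply mul_le_mul h2 h3 (by positivity) (by norm_num)

end PS


namespace PS
open Real

lemma rep_count (a b Q : ℕ) (ha : 1 < a) (hab : a < b) (hQ : 1 ≤ Q) (hQb : Q < b)
    [DecidablePred fun p : ℕ => p.Prime ∧ ∃ u v : ℕ, p = a * u + b * v] :
    (((Finset.range (⌊(a:ℝ) * b / 7⌋₊ + 1)).filter
      (fun p => p.Prime ∧ ∃ u v : ℕ, p = a * u + b * v)).card : ℝ) ≤
    1 + ((b:ℝ) / a) * (((a:ℝ) / 7) ^ 2 / 2 + (∏ p ∈ a.primeFactors, (2 * (p:ℝ) / (p - 1))) * ((a:ℝ) / 7) / 4) / G ∅ Q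
      + ((a:ℝ) / 7) * ((Q - Q / 4 : ℕ) : ℝ) ^ 2 := by
  set V : ℝ := (a:ℝ) / 7 with hVdef
  have haR : (0:ℝ) < a := by exact_mod_cast (by omega : 0 < a)
  have hbR : (0:ℝ) < b := by exact_mod_cast (by omega : 0 < b)
  have hV : 0 ≤ V := by positivity
  set P := a.primeFactors with hP
  have hPp : ∀ p ∈ P, p.Prime := fun q hq => Nat.prime_of_mem_primeFactors hq
  set W := (Finset.Icc 1 ⌊V⌋₊).filter (fun v => Nat.Coprime v a) with hW
  let Y : ℕ → ℝ := fun v => (b:ℝ) / a * (V - v)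
  have hYnn : ∀ v ∈ W, 0 ≤ Y v := by
    intro v hv
    have h1 : v ≤ ⌊V⌋₊ := (Finset.mem_Icc.1 (Finset.mem_filter.1 hv).1).2
    have := (Nat.le_floor_iff hV).1 h1
    apply mul_nonneg (by positivity); linarith
  let B : ℕ → Finset ℕ := fun v => (Finset.range (⌊Y v⌋₊ + 1)).filter (fun u => (a * u + b * v).Prime)
  have hsub : (Finset.range (⌊(a:ℝ) * b / 7⌋₊ + 1)).filter
      (fun p => p.Prime ∧ ∃ u v : ℕ, p = a * u + b * v) ⊆
      {a} ∪ W.biUnion (fun v => (B v).image (fun u => a * u + b * v)) := by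
    intro p hp
    rw [Finset.mem_filter, Finset.mem_range] at hp
    obtain ⟨hlt, hpp, u, v, hpe⟩ := hp
    rw [Finset.mem_union, Finset.mem_singleton, Finset.mem_biUnion]
    rcases Nat.eq_zero_or_pos v with hv | hv
    · left
      subst hv
      have : a ∣ p := ⟨u, by omega⟩
      rcases (Nat.dvd_prime hpp).1 this with h | h
      · omega
      · exact h.symm
    · right
      have hple : (p:ℝ) ≤ (a:ℝ) * b / 7 := (Nat.le_floor_iff (by positivity)).1 (by omega)
      have hpeR : (p:ℝ) = a * u + b * v := by exact_mod_cast hpe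
      have huR : (0:ℝ) ≤ u := by positivity
      refine ⟨v, ?_, ?_⟩
      · rw [hW, Finset.mem_filter, Finset.mem_Icc]
        refine ⟨⟨hv, Nat.le_floor ?_⟩, ?_⟩
        · have : (b:ℝ) * v ≤ b * V := by
            have : (0:ℝ) ≤ a * u := by positivity
            have e : (b:ℝ) * V = a * b / 7 := by rw [hVdef]; ring
            rw [e]; linarith
          exact le_of_mul_le_mul_left this hbR
        · have hg : Nat.gcd v a ∣ p := by
            rw [hpe]
            exact dvd_add ((Nat.gcd_dvd_right v a).mul_right u) ((Nat.gcd_dvd_left v a).mul_left b)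
          rcases (Nat.dvd_prime hpp).1 hg with h | h
          · exact h
          · exfalso
            have h1 : Nat.gcd v a ≤ v := Nat.gcd_le_left a hv
            have h2 : 2 * v ≤ b * v := Nat.mul_le_mul_right v (by omega)
            have h3 : 0 ≤ a * u := Nat.zero_le _
            omega
      · rw [Finset.mem_image]
        refine ⟨u, ?_, hpe.symm⟩
        simp only [B]
        rw [Finset.mem_filter, Finset.mem_range]
        refine ⟨Nat.lt_succ_of_le (Nat.le_floor ?_), hpe ▸ hpp⟩
        have e : Y v = (a * b / 7 - b * v) / a := by
          simp only [Y, hVdef]; field_simp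
        rw [e, le_div_iff₀ haR]
        linarith
  have hcard := Finset.card_le_card hsub
  have hcard2 : (((Finset.range (⌊(a:ℝ) * b / 7⌋₊ + 1)).filter
      (fun p => p.Prime ∧ ∃ u v : ℕ, p = a * u + b * v)).card : ℝ) ≤ 1 + ∑ v ∈ W, ((B v).card : ℝ) := by
    have h1 := Finset.card_union_le {a} (W.biUnion (fun v => (B v).image (fun u => a * u + b * v)))
    have h2 : (W.biUnion (fun v => (B v).image (fun u => a * u + b * v))).card ≤ ∑ v ∈ W, (B v).card :=
      Finset.card_biUnion_le.trans (Finset.sum_le_sum (fun v _ => Finset.card_image_le))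
    rw [Finset.card_singleton] at h1
    exact_mod_cast hcard.trans (h1.trans (by omega))
  have hG0 : 0 < G ∅ Q := G_pos ∅ Q hQ (by simp)
  have hGP : 0 < G P Q := G_pos P Q hQ hPp
  set Pr := ∏ p ∈ P, ((p:ℝ) / (p - 1)) with hPr
  have hinv : 1 / G P Q ≤ Pr / G ∅ Q := by
    rw [div_le_div_iff₀ hGP hG0]
    rw [one_mul]; exact G_le_prod Q P hPp
  have hPr0 : 0 ≤ Pr := by
    apply Finset.prod_nonneg
    intro p hp
    have : (2:ℝ) ≤ p := by exact_mod_cast (hPp p hp).two_le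
    apply div_nonneg <;> linarith
  set E : ℝ := ((Q - Q / 4 : ℕ) : ℝ) ^ 2 with hE
  have hrow : ∀ v ∈ W, ((B v).card : ℝ) ≤ Y v * (Pr / G ∅ Q) + E := by
    intro v hv
    have hv1 : 1 ≤ v := (Finset.mem_Icc.1 (Finset.mem_filter.1 hv).1).1
    have h1 := sieve_row a (b * v) Q (by omega) hQ (by nlinarith) (Y v) (hYnn v hv)
    have h2 : ((sq P Q).card : ℝ) ^ 2 ≤ E := by
      rw [hE]
      apply pow_le_pow_left₀ (by positivity)
      exact_mod_cast sq_card P Q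
    have h3 : Y v / G P Q ≤ Y v * (Pr / G ∅ Q) := by
      rw [div_eq_mul_one_div]
      exact mul_le_mul_of_nonneg_left hinv (hYnn v hv)
    linarith
  have hWc : (W.card : ℝ) ≤ V := by
    have : W.card ≤ ⌊V⌋₊ := (Finset.card_filter_le _ _).trans (by simp)
    exact (Nat.cast_le.2 this).trans (Nat.floor_le hV)
  have hsum : ∑ v ∈ W, ((B v).card : ℝ) ≤ (∑ v ∈ W, Y v) * (Pr / G ∅ Q) + V * E := by
    calc _ ≤ ∑ v ∈ W, (Y v * (Pr / G ∅ Q) + E) := Finset.sum_le_sum hrow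
      _ = (∑ v ∈ W, Y v) * (Pr / G ∅ Q) + W.card * E := by
        rw [Finset.sum_add_distrib, Finset.sum_mul]; simp
      _ ≤ _ := by
        have : 0 ≤ E := by positivity
        nlinarith
  have hYs : ∑ v ∈ W, Y v ≤ (b:ℝ) / a * (V ^ 2 / 2 * ∏ p ∈ P, (1 - 1 / (p:ℝ)) + 2 ^ P.card * (V / 4)) := by
    simp only [Y]
    rw [← Finset.mul_sum]
    exact mul_le_mul_of_nonneg_left (coprime_sum a ha V hV) (by positivity)
  have p1 : (∏ p ∈ P, (1 - 1 / (p:ℝ))) * Pr = 1 := by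
    rw [hPr, ← Finset.prod_mul_distrib]
    apply Finset.prod_eq_one
    intro p hp
    have : (2:ℝ) ≤ p := by exact_mod_cast (hPp p hp).two_le
    have h1 : (p:ℝ) - 1 ≠ 0 := by linarith
    field_simp
  have p2 : 2 ^ P.card * Pr = ∏ p ∈ P, (2 * (p:ℝ) / (p - 1)) := by
    rw [hPr, ← Finset.prod_const, ← Finset.prod_mul_distrib]
    apply Finset.prod_congr rfl
    intro p _; ring
  have hfin : (∑ v ∈ W, Y v) * (Pr / G ∅ Q) ≤
      ((b:ℝ) / a) * (V ^ 2 / 2 + (∏ p ∈ P, (2 * (p:ℝ) / (p - 1))) * V / 4) / G ∅ Q := by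
    refine (mul_le_mul_of_nonneg_right hYs (by positivity)).trans (le_of_eq ?_)
    rw [← p2]
    have : (b:ℝ) / a * (V ^ 2 / 2 * ∏ p ∈ P, (1 - 1 / (p:ℝ)) + 2 ^ P.card * (V / 4)) * (Pr / G ∅ Q) =
      (b:ℝ) / a * (V ^ 2 / 2 * ((∏ p ∈ P, (1 - 1 / (p:ℝ))) * Pr) + 2 ^ P.card * Pr * V / 4) / G ∅ Q := by ring
    rw [this, p1, mul_one]
  linarith

lemma rep_finite (a b : ℕ) (ha : 0 < a) (h : Nat.Coprime a b) :
    {p : ℕ | p.Prime ∧ ¬ ∃ u v : ℕ, p = a * u + b * v}.Finite := by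
  apply (Set.finite_lt_nat (a * b)).subset
  rintro p ⟨_, hp⟩
  by_contra hge
  apply hp
  simp only [Set.mem_ofPred_eq, not_lt] at hge
  obtain ⟨v, hv, hva⟩ : ∃ v, v < a ∧ b * v ≡ p [MOD a] := by
    obtain ⟨c, hc⟩ := Nat.exists_mul_mod_eq_of_coprime p h.symm ha.ne'
    exact ⟨c, hc.1, hc.2⟩
  have hle : b * v ≤ p := by nlinarith
  obtain ⟨u, hu⟩ := (Nat.modEq_iff_dvd' hle).1 hva
  exact ⟨u, v, by omega⟩

lemma pi_split (a b : ℕ) (ha : 0 < a) (h : Nat.Coprime a b) (N : ℕ)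
    [DecidablePred fun p : ℕ => p.Prime ∧ ∃ u v : ℕ, p = a * u + b * v] :
    (Nat.primeCounting N : ℝ) ≤ (Set.ncard {p : ℕ | p.Prime ∧ ¬ ∃ u v : ℕ, p = a * u + b * v} : ℝ) +
    (((Finset.range (N + 1)).filter
      (fun p => p.Prime ∧ ∃ u v : ℕ, p = a * u + b * v)).card : ℝ) := by
  classical
  rw [Nat.primeCounting, Nat.primeCounting', Nat.count_eq_card_filter_range]
  have h1 : ((Finset.range (N + 1)).filter
      (fun p => p.Prime ∧ ¬ ∃ u v : ℕ, p = a * u + b * v)).card ≤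
      Set.ncard {p : ℕ | p.Prime ∧ ¬ ∃ u v : ℕ, p = a * u + b * v} := by
    rw [← Set.ncard_coe_finset]
    apply Set.ncard_le_ncard _ (rep_finite a b ha h)
    intro p hp
    have := (Finset.mem_filter.1 (Finset.mem_coe.1 hp)).2
    exact this
  have h2 : ((Finset.range (N + 1)).filter Nat.Prime).card =
     ((Finset.range (N + 1)).filter
      (fun p => p.Prime ∧ ∃ u v : ℕ, p = a * u + b * v)).card + ((Finset.range (N + 1)).filter
      (fun p => p.Prime ∧ ¬ ∃ u v : ℕ, p = a * u + b * v)).card := by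
    rw [← Finset.card_filter_add_card_filter_not (s := (Finset.range (N + 1)).filter Nat.Prime) (fun p => ∃ u v : ℕ, p = a * u + b * v), Finset.filter_filter, Finset.filter_filter]
    congr!
  rw [h2]
  push_cast
  have : (((Finset.range (N + 1)).filter
      (fun p => p.Prime ∧ ¬ ∃ u v : ℕ, p = a * u + b * v)).card : ℝ) ≤ (Set.ncard {p : ℕ | p.Prime ∧ ¬ ∃ u v : ℕ, p = a * u + b * v} : ℝ) := by exact_mod_cast h1
  push_cast at this
  linarith

end PS


namespace PS
open Real

lemma log_seven_ge : (1.945:ℝ) ≤ log 7 := by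
  have h : (87:ℝ) * log 2 ≤ 31 * log 7 := by
    have := Real.log_le_log (by norm_num) (by norm_num : (2:ℝ) ^ 87 ≤ 7 ^ 31)
    rw [Real.log_pow, Real.log_pow] at this
    exact_mod_cast this
  have := Real.log_two_gt_d9
  linarith

lemma log_04_ge : (-0.9168:ℝ) ≤ log 0.4 := by
  have h : (-41:ℝ) * log 2 ≤ 31 * log 0.4 := by
    have := Real.log_le_log (by norm_num) (by norm_num : (2:ℝ)⁻¹ ^ 41 ≤ 0.4 ^ 31)
    rw [Real.log_pow, Real.log_pow, Real.log_inv] at this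
    push_cast at this
    linarith
  have := Real.log_two_lt_d9
  linarith

lemma log_four_le : log 4 ≤ 1.386295 := by
  have : log 4 = 2 * log 2 := by
    rw [show (4:ℝ) = 2 ^ 2 by norm_num, Real.log_pow]; norm_num
  have := Real.log_two_lt_d9
  linarith

lemma exp_quad (w : ℝ) (hw : 11 / 3 ≤ w) : 2.85 * w ^ 2 ≤ exp w := by
  have h1 : (39:ℝ) ≤ exp (11 / 3) := by
    have h : exp (11 / 3) ^ 3 = exp 1 ^ 11 := by
      rw [← Real.exp_nat_mul, ← Real.exp_nat_mul]; norm_num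
    have h2 : (39:ℝ) ^ 3 ≤ exp (11 / 3) ^ 3 := by
      rw [h]
      calc (39:ℝ) ^ 3 ≤ 2.7182818283 ^ 11 := by norm_num
        _ ≤ _ := pow_le_pow_left₀ (by norm_num) Real.exp_one_gt_d9.le _
    exact le_of_pow_le_pow_left₀ (by norm_num) (exp_pos _).le h2
  obtain ⟨s, hs, rfl⟩ : ∃ s, 0 ≤ s ∧ w = 11 / 3 + s := ⟨w - 11 / 3, by linarith, by ring⟩
  have h2 := Real.quadratic_le_exp_of_nonneg hs
  rw [Real.exp_add]
  have h3 : 39 * (1 + s + s ^ 2 / 2) ≤ exp (11 / 3) * exp s :=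
    mul_le_mul h1 h2 (by positivity) (exp_pos _).le
  nlinarith

lemma final_ineq (T : ℝ) (hT : 22 ≤ T) :
    1.027 / 98 / (T / 6 - 0.0868) + 0.1857 / T ^ 2 + 0.0445 * (1.386295 * (1 / T + 1.3 / T ^ 2)) <
      0.921 / 7 / (T - 1.945) := by
  have h1 : 1.027 / 98 / (T / 6 - 0.0868) ≤ 0.0629 / (T - 0.5208) := by
    rw [div_div, div_le_div_iff₀ (by nlinarith) (by linarith)]
    nlinarith
  have h2 : 0.1857 / T ^ 2 + 0.0445 * (1.386295 * (1 / T + 1.3 / T ^ 2)) ≤ (0.0617 * T + 0.266) / T ^ 2 := by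
    have hT0 : 0 < T := by linarith
    rw [le_div_iff₀ (by positivity)]
    field_simp
    norm_num
    nlinarith
  have h3 : 0.0629 / (T - 0.5208) + (0.0617 * T + 0.266) / T ^ 2 < 0.921 / 7 / (T - 1.945) := by
    have hT0 : 0 < T := by linarith
    have hA : 0 < T - 0.5208 := by linarith
    have hB : 0 < T - 1.945 := by linarith
    obtain ⟨t, ht, rfl⟩ : ∃ t, 0 ≤ t ∧ T = 22 + t := ⟨T - 22, by linarith, by ring⟩
    rw [div_add_div _ _ hA.ne' (by positivity), div_lt_div_iff₀ (by positivity) hB]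
    have h3 : 0 ≤ t ^ 3 := by positivity
    have h2 : 0 ≤ t ^ 2 := by positivity
    nlinarith
  linarith

lemma main_real (A B T h G0 E pS pX R π' : ℝ) (hA : 60001 ≤ A) (hAB : A ≤ B)
    (hT : T = log (A * B)) (hT22 : 22 ≤ T)
    (hh0 : 0 ≤ h) (hh : h ^ 3 ≤ 1634 * A) (hG : T / 6 - 0.0868 ≤ G0)
    (hE : E / B ≤ 0.1024 * exp (-(T / 6)))
    (hR : R ≤ 1 + (B / A) * ((A / 7) ^ 2 / 2 + h * (A / 7) / 4) / G0 + (A / 7) * E)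
    (hpX : 0.921 * (A * B / 7) / log (A * B / 7) ≤ pX)
    (hpS : pS ≤ log 4 * (A * B / T + 1.3 * (A * B / T ^ 2)))
    (hsplit : pX ≤ π' + R) : 0.0445 * pS < π' := by
  have hA0 : 0 < A := by linarith
  have hB0 : 0 < B := by linarith
  set X := A * B with hX
  have hX0 : 0 < X := by positivity
  have hXe : X = exp T := by rw [hT, Real.exp_log hX0]
  have hlog7 : log (X / 7) = T - log 7 := by rw [Real.log_div hX0.ne' (by norm_num), hT]
  have hL7 := log_seven_ge
  have hL7' : log 7 ≤ 6 := by
    have := Real.log_le_sub_one_of_pos (by norm_num : (0:ℝ) < 7); linarith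
  have b1 : X * (0.921 / 7 / (T - 1.945)) ≤ pX := by
    refine le_trans ?_ hpX
    rw [hlog7]
    have : X * (0.921 / 7 / (T - 1.945)) = 0.921 * (X / 7) / (T - 1.945) := by ring
    rw [this]
    apply div_le_div_of_nonneg_left (by positivity) (by linarith) (by linarith)
  have hs : 3.5 * h / A ≤ 0.027 := by
    have h1 : (3.5 * h / A) ^ 3 ≤ 0.027 ^ 3 := by
      rw [div_pow, div_le_iff₀ (by positivity), mul_pow]
      have : 60001 ^ 2 ≤ A ^ 2 := by gcongr
      nlinarith
    exact le_of_pow_le_pow_left₀ (by norm_num) (by norm_num) h1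
  have hG0 : 0 < G0 := by linarith
  have hG1 : 0 < T / 6 - 0.0868 := by linarith
  have b2 : (B / A) * ((A / 7) ^ 2 / 2 + h * (A / 7) / 4) / G0 ≤ X * (1.027 / 98 / (T / 6 - 0.0868)) := by
    have e : (B / A) * ((A / 7) ^ 2 / 2 + h * (A / 7) / 4) = X / 98 * (1 + 3.5 * h / A) := by
      rw [hX]; field_simp; ring
    rw [e]
    calc X / 98 * (1 + 3.5 * h / A) / G0 ≤ X / 98 * 1.027 / (T / 6 - 0.0868) := by
          apply div_le_div₀ (by positivity) _ hG1 hG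
          apply mul_le_mul_of_nonneg_left _ (by positivity)
          linarith
      _ = _ := by ring
  have hex := exp_quad (T / 6) (by linarith)
  have hT0 : 0 < T := by linarith
  have hexn : exp (-(T / 6)) ≤ 36 / 2.85 / T ^ 2 := by
    rw [Real.exp_neg, inv_eq_one_div, div_le_div_iff₀ (exp_pos _) (by positivity)]
    have : (T / 6) ^ 2 = T ^ 2 / 36 := by ring
    rw [this] at hex
    linarith
  have b3 : 1 + (A / 7) * E ≤ X * (0.1857 / T ^ 2) := by
    have e1 : (A / 7) * E = X * (E / B / 7) := by rw [hX]; field_simp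
    have e2 : (1:ℝ) ≤ X * (0.00001 * exp (-(T / 6))) := by
      rw [hXe]
      have : exp T * (0.00001 * exp (-(T / 6))) = 0.00001 * exp (T / 6) ^ 5 := by
        rw [← Real.exp_nat_mul, mul_left_comm, ← Real.exp_add]
        congr 2; push_cast; ring
      rw [this]
      have h38 : 38 ≤ exp (T / 6) := by nlinarith
      have := pow_le_pow_left₀ (by norm_num) h38 5
      norm_num at this ⊢
      linarith
    rw [e1]
    calc 1 + X * (E / B / 7) ≤ X * (0.00001 * exp (-(T / 6))) + X * (E / B / 7) := by linarith
      _ = X * (0.00001 * exp (-(T / 6)) + E / B / 7) := by ring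
      _ ≤ X * (0.1857 / T ^ 2) := by
        apply mul_le_mul_of_nonneg_left _ hX0.le
        have : 0.00001 * exp (-(T / 6)) + E / B / 7 ≤ 0.01464 * exp (-(T / 6)) := by
          have := exp_pos (-(T / 6)); linarith
        refine this.trans ?_
        calc _ ≤ 0.01464 * (36 / 2.85 / T ^ 2) := by gcongr
          _ ≤ _ := by
            rw [← mul_div_assoc]
            gcongr
            norm_num
  have b4 : 0.0445 * pS ≤ X * (0.0445 * (1.386295 * (1 / T + 1.3 / T ^ 2))) := by
    have : pS ≤ 1.386295 * (X / T + 1.3 * (X / T ^ 2)) :=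
      hpS.trans (mul_le_mul_of_nonneg_right log_four_le (by positivity))
    have e : X * (0.0445 * (1.386295 * (1 / T + 1.3 / T ^ 2))) = 0.0445 * (1.386295 * (X / T + 1.3 * (X / T ^ 2))) := by ring
    rw [e]
    linarith
  have hf := mul_lt_mul_of_pos_left (final_ineq T hT22) hX0
  rw [mul_add, mul_add] at hf
  linarith

lemma main_bound (a b : ℕ) (ha : 60000 < a) (hab : a < b) (h : Nat.Coprime a b) (n : ℕ) (hn : n ≤ a * b) :
    (0.0445 : ℝ) * (Nat.primeCounting n : ℝ) <
      (Set.ncard {p : ℕ | p.Prime ∧ ¬ ∃ u v : ℕ, p = a * u + b * v} : ℝ) := by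
  classical
  have hA : (60001:ℝ) ≤ a := by exact_mod_cast ha
  have hAB : (a:ℝ) ≤ b := by exact_mod_cast hab.le
  have hA0 : (0:ℝ) < a := by linarith
  have hB0 : (0:ℝ) < b := by linarith
  have hXbig : (3600000000:ℝ) ≤ (a:ℝ) * b := by nlinarith
  set T := log ((a:ℝ) * b) with hT
  have hT22 : 22 ≤ T := by
    rw [hT, Real.le_log_iff_exp_le (by positivity)]
    refine le_trans ?_ hXbig
    have : exp 22 = exp 1 ^ 22 := by rw [← Real.exp_nat_mul]; norm_num
    rw [this]
    calc _ ≤ (2.7182818286:ℝ) ^ 22 := pow_le_pow_left₀ (exp_pos _).le Real.exp_one_lt_d9.le _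
      _ ≤ _ := by norm_num
  have hTB : T / 6 ≤ log b / 3 := by
    have h1 : log (a:ℝ) ≤ log b := Real.log_le_log hA0 hAB
    rw [hT, Real.log_mul hA0.ne' hB0.ne']
    linarith
  set β := exp (log b / 3) with hβ
  have hβ3 : β ^ 3 = b := by
    rw [hβ, ← Real.exp_nat_mul]
    have : ((3:ℕ):ℝ) * (log b / 3) = log b := by push_cast; ring
    rw [this, Real.exp_log hB0]
  have hβ0 : 0 < β := exp_pos _
  have hβ39 : 39.1 ≤ β := by
    apply le_of_pow_le_pow_left₀ (n := 3) (by norm_num) hβ0.le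
    rw [hβ3]; norm_num; linarith
  set Q := ⌊0.4 * β⌋₊ with hQ
  have hQ15 : 15 ≤ Q := by
    apply Nat.le_floor; push_cast; linarith
  have hQle : (Q:ℝ) ≤ 0.4 * β := Nat.floor_le (by positivity)
  have hQlt : 0.4 * β < Q + 1 := Nat.lt_floor_add_one _
  have hQb : Q < b := by
    have : (Q:ℝ) < b := by
      rw [← hβ3]
      nlinarith [mul_pos hβ0 hβ0, mul_pos (mul_pos hβ0 hβ0) hβ0]
    exact_mod_cast this
  have hR := rep_count a b Q (by omega) hab (by omega) hQb
  have hsplit := pi_split a b (by omega) h ⌊(a:ℝ) * b / 7⌋₊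
  have hpX := pi_lower ((a:ℝ) * b / 7) (by linarith)
  have hpS : (Nat.primeCounting n : ℝ) ≤ log 4 * ((a:ℝ) * b / T + 1.3 * ((a:ℝ) * b / T ^ 2)) := by
    refine le_trans ?_ (pi_upper ((a:ℝ) * b) hXbig)
    have : ⌊(a:ℝ) * b⌋₊ = a * b := by
      rw [← Nat.cast_mul]; exact Nat.floor_natCast _
    rw [this]
    exact_mod_cast Nat.monotone_primeCounting hn
  have hG : T / 6 - 0.0868 ≤ G ∅ Q := by
    have h1 := G_lower Q hQ15
    have h2 : log (0.4 * β) ≤ log (Q + 1) := Real.log_le_log (by positivity) hQlt.le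
    rw [Real.log_mul (by norm_num) hβ0.ne', hβ, Real.log_exp] at h2
    have := log_04_ge
    linarith
  have hE : ((Q - Q / 4 : ℕ) : ℝ) ^ 2 / b ≤ 0.1024 * exp (-(T / 6)) := by
    have h1 : ((Q - Q / 4 : ℕ) : ℝ) ≤ 0.75 * (Q + 1) := by
      have : 4 * (Q - Q / 4) ≤ 3 * (Q + 1) := by omega
      have : (4:ℝ) * ((Q - Q / 4 : ℕ) : ℝ) ≤ 3 * (Q + 1) := by exact_mod_cast this
      linarith
    have h2 : ((Q - Q / 4 : ℕ) : ℝ) ≤ 0.32 * β := by linarith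
    have h3 : ((Q - Q / 4 : ℕ) : ℝ) ^ 2 ≤ (0.32 * β) ^ 2 := pow_le_pow_left₀ (by positivity) h2 2
    have h4 : exp (T / 6) ≤ β := Real.exp_le_exp.2 hTB
    rw [div_le_iff₀ hB0, ← hβ3]
    have h5 : 1 ≤ exp (-(T / 6)) * β := by
      rw [Real.exp_neg, inv_mul_eq_div, le_div_iff₀ (exp_pos _)]; linarith
    calc _ ≤ (0.32 * β) ^ 2 := h3
      _ = 0.1024 * β ^ 2 * 1 := by ring
      _ ≤ 0.1024 * β ^ 2 * (exp (-(T / 6)) * β) := by gcongr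
      _ = _ := by ring
  have hh0 : 0 ≤ ∏ p ∈ a.primeFactors, (2 * (p:ℝ) / (p - 1)) := by
    apply Finset.prod_nonneg
    intro p hp
    have : (2:ℝ) ≤ p := by exact_mod_cast (Nat.prime_of_mem_primeFactors hp).two_le
    apply div_nonneg <;> linarith
  exact main_real a b T _ (G ∅ Q) _ _ _ _ _ hA hAB hT hT22 hh0 (h_bound a (by omega)) hG hE hR hpX hpS hsplit

end PS

theorem piStar_gt_case1 (a b : ℕ) (ha : 60000 < a) (hab : a < b) (h : Nat.Coprime a b) :
    (0.0445 : ℝ) * (Nat.primeCounting (S a b) : ℝ) < (piStar a b : ℝ) := by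
  apply PS.main_bound a b ha hab h
  unfold S
  omega
end
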